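/- arXiv:2504.14674 — 4 statements merged into one kernel-verified Lean document; each statement's English description precedes it below -/
import Mathlib

section
/- Let m = 2h + 1 ≥ 7 be odd and let f₂(x) = x^{3·2^{(m+1)/2} + 4} + x^{2^{(m+1)/2} + 2} + x^{2^{(m+1)/2}}. For the binary sequence s_t = Tr(f₂(α^t + 1)), the minimal polynomial of the sequence is g_s(x) = (x − 1)·m_{α^{−3}}(x)·m_{α^{−(2^{h−1}+1)}}(x)·m_{α^{−(2^h+2^{h−1}+1)}}(x), which has degree 3m + 1; consequently the binary cyclic code C_s has length 2^m − 1 and 𝔽₂-dimension 2^m − 2 − 3m, and its minimum distance satisfies 4 ≤ d(C_s) ≤ 8. -/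
open Polynomial
open scoped Classical

/-- The polynomial S(x) = ∑_{t=0}^{v−1} s_t x^t ∈ 𝔽₂[x], where
    s_t = Tr(f(α^t + 1)) and v = 2^m − 1. -/
noncomputable def traceSeqPoly (m : ℕ) (α : GaloisField 2 m)
    (f : GaloisField 2 m → GaloisField 2 m) : Polynomial (ZMod 2) :=
  ∑ t ∈ Finset.range (2 ^ m - 1),
    C (Algebra.trace (ZMod 2) (GaloisField 2 m) (f (α ^ t + 1))) * X ^ t

/-- The minimal polynomial of the sequence:
    g_s(x) = (x^v − 1)/gcd(x^v − 1, S(x)). Its degree is the linear span L_s. -/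
noncomputable def genPoly (m : ℕ) (α : GaloisField 2 m)
    (f : GaloisField 2 m → GaloisField 2 m) : Polynomial (ZMod 2) :=
  (X ^ (2 ^ m - 1) - 1) /
    EuclideanDomain.gcd (X ^ (2 ^ m - 1) - 1) (traceSeqPoly m α f)

/-- The binary cyclic code C_s = {c ∈ 𝔽₂[x] : deg c < v and g_s ∣ c},
    as an 𝔽₂-submodule of 𝔽₂[x]. -/
noncomputable def codeC (m : ℕ) (α : GaloisField 2 m)
    (f : GaloisField 2 m → GaloisField 2 m) :
    Submodule (ZMod 2) (Polynomial (ZMod 2)) :=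
  Polynomial.degreeLT (ZMod 2) (2 ^ m - 1) ⊓
    (Ideal.span {genPoly m α f}).restrictScalars (ZMod 2)

/-- The set of Hamming weights (numbers of nonzero coefficients) of the
    nonzero codewords of a code; the minimum distance is its least element. -/
def wtSet (Cs : Submodule (ZMod 2) (Polynomial (ZMod 2))) : Set ℕ :=
  {w | ∃ c : Polynomial (ZMod 2), c ∈ Cs ∧ c ≠ 0 ∧ c.support.card = w}

/-- Exponent sets (binary expansions). -/
def expSet (h : ℕ) : Fin 3 → Finset ℕ := ![{0, 1}, {0, h - 1}, {0, h - 1, h}]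

/-- The three exponents. -/
def expo (h : ℕ) : Fin 3 → ℕ := ![3, 2 ^ (h - 1) + 1, 2 ^ h + 2 ^ (h - 1) + 1]

lemma expo_eq (h : ℕ) (hh : 3 ≤ h) (p : Fin 3) : expo h p = ∑ k ∈ expSet h p, 2 ^ k := by
  have h1 : h - 1 ≠ 0 := by omega
  have h2 : h - 1 ≠ h := by omega
  have h3 : h ≠ 0 := by omega
  fin_cases p
  · simp [expo, expSet]
  · simp [expo, expSet, Finset.sum_pair h1.symm]; omega
  · simp only [expo, expSet]
    simp [Finset.sum_insert, h1.symm, h2, h3.symm]; omega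

set_option maxHeartbeats 4000000 in
lemma comb (m h i : ℕ) (hm : m = 2 * h + 1) (hh : 3 ≤ h) (hi : i < m) (p q : Fin 3)
    (H : (expSet h p).image (fun k => (k + i) % m) = expSet h q) : p = q ∧ i = 0 := by
  have key : ∀ x, x ∈ (expSet h p).image (fun k => (k + i) % m) ↔ x ∈ expSet h q := by
    intro x; rw [H]
  have e0 : (0 + i) % m = i := by rw [zero_add]; exact Nat.mod_eq_of_lt hi
  have e1 : (1 + i) % m = if i + 1 = m then 0 else i + 1 := by
    split_ifs with h1
    · rw [add_comm, h1, Nat.mod_self]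
    · rw [add_comm]; exact Nat.mod_eq_of_lt (by omega)
  have e2 : (h - 1 + i) % m = if h - 1 + i < m then h - 1 + i else h - 1 + i - m := by
    split_ifs with h1
    · exact Nat.mod_eq_of_lt (by omega)
    · rw [Nat.mod_eq_sub_mod (by omega)]; exact Nat.mod_eq_of_lt (by omega)
  have e3 : (h + i) % m = if h + i < m then h + i else h + i - m := by
    split_ifs with h1
    · exact Nat.mod_eq_of_lt (by omega)
    · rw [Nat.mod_eq_sub_mod (by omega)]; exact Nat.mod_eq_of_lt (by omega)
  have k0 := key 0
  have k1 := key 1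
  have k2 := key (h - 1)
  have k3 := key h
  have k4 := key i
  have k5 := key ((1 + i) % m)
  have k6 := key ((h - 1 + i) % m)
  have k7 := key ((h + i) % m)
  clear key H
  fin_cases p <;> fin_cases q <;>
    simp [expSet, -Nat.add_mod_mod, -Nat.mod_add_mod] at k0 k1 k2 k3 k4 k5 k6 k7 ⊢ <;>
    simp only [e0, e1, e2, e3] at k0 k1 k2 k3 k4 k5 k6 k7 <;> 
    split_ifs at * <;> first | omega | (simp at *; omega)

section
variable (m h : ℕ) (α : GaloisField 2 m)

lemma pow_two_pow_m (hm : m ≠ 0) (x : GaloisField 2 m) : x ^ 2 ^ m = x := by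
  let _ := Fintype.ofFinite (GaloisField 2 m)
  have := FiniteField.pow_card x
  rwa [← Nat.card_eq_fintype_card, GaloisField.card 2 m hm] at this

lemma pow_mod_m (hm : m ≠ 0) (x : GaloisField 2 m) (k : ℕ) : x ^ 2 ^ k = x ^ 2 ^ (k % m) := by
  have : ∀ a b : ℕ, x ^ 2 ^ (b + m * a) = x ^ 2 ^ b := by
    intro a b
    induction a with
    | zero => simp
    | succ a ih =>
      rw [show b + m * (a + 1) = (b + m * a) + m by ring, pow_add 2 _ m, pow_mul,
        pow_two_pow_m m hm, ih]
  conv_lhs => rw [← Nat.mod_add_div k m]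
  exact this _ _

lemma rot (hm : m ≠ 0) (A B : Finset ℕ) (hA : A ⊆ Finset.range m) (hB : B ⊆ Finset.range m)
    (hAc : A.card < m) (hBc : B.card < m) (hα : orderOf α = 2 ^ m - 1) (i : ℕ)
    (H : α ^ ((∑ k ∈ A, 2 ^ k) * 2 ^ i) = α ^ (∑ k ∈ B, 2 ^ k)) :
    A.image (fun k => (k + i) % m) = B := by
  have lt : ∀ C : Finset ℕ, C ⊆ Finset.range m → C.card < m →
      ∑ k ∈ C, 2 ^ k < 2 ^ m - 1 := by
    intro C h1 h2
    obtain ⟨x, hx, hx'⟩ : ∃ x ∈ Finset.range m, x ∉ C := by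
      by_contra hcon
      push Not at hcon
      have := Finset.card_le_card (show Finset.range m ⊆ C from hcon)
      simp at this; omega
    have h3 : ∑ k ∈ insert x C, 2 ^ k < 2 ^ m :=
      Nat.geomSum_lt le_rfl (by
        intro k hk
        rcases Finset.mem_insert.1 hk with rfl | hk
        · simpa using hx
        · simpa using h1 hk)
    rw [Finset.sum_insert hx'] at h3
    have : 0 < 2 ^ x := by positivity
    omega
  have inj : Set.InjOn (fun k => (k + i) % m) (A : Set ℕ) := by
    intro a ha b hb hab
    have ha' := Finset.mem_range.1 (hA ha)
    have hb' := Finset.mem_range.1 (hA hb)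
    have : a + i ≡ b + i [MOD m] := hab
    have := Nat.ModEq.add_right_cancel' i this
    exact Nat.ModEq.eq_of_lt_of_lt this ha' hb'
  have h1 : α ^ ((∑ k ∈ A, 2 ^ k) * 2 ^ i) =
      α ^ (∑ k ∈ A.image (fun k => (k + i) % m), 2 ^ k) := by
    rw [Finset.sum_image inj, Finset.sum_mul, ← Finset.prod_pow_eq_pow_sum,
      ← Finset.prod_pow_eq_pow_sum]
    refine Finset.prod_congr rfl fun k _ => ?_
    rw [← pow_add, pow_mod_m m hm]
  rw [h1] at H
  have := pow_injOn_Iio_orderOf (x := α) (x₁ := ∑ k ∈ A.image (fun k => (k + i) % m), 2 ^ k)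
    (x₂ := ∑ k ∈ B, 2 ^ k)
    (by
      rw [hα]
      refine lt _ ?_ (lt_of_le_of_lt Finset.card_image_le hAc)
      intro x hx
      obtain ⟨k, _, rfl⟩ := Finset.mem_image.1 hx
      exact Finset.mem_range.2 (Nat.mod_lt _ (by omega)))
    (by rw [hα]; exact lt _ hB hBc) H
  exact Finset.geomSum_injective le_rfl this


lemma expSet_sub (hm : m = 2 * h + 1) (hh : 3 ≤ h) (p : Fin 3) :
    expSet h p ⊆ Finset.range m := by
  intro x
  fin_cases p <;> simp [expSet] <;> omega

lemma expSet_card (hm : m = 2 * h + 1) (hh : 3 ≤ h) (p : Fin 3) : (expSet h p).card < m := by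
  refine lt_of_le_of_lt (b := 3) ?_ (by omega)
  fin_cases p <;> simp only [expSet]
  · exact Finset.card_le_two.trans (by omega)
  · exact Finset.card_le_two.trans (by omega)
  · exact Finset.card_le_three


lemma expo_inj
    (hm : m = 2 * h + 1) (hh : 3 ≤ h) (hα : orderOf α = 2 ^ m - 1) (i : ℕ) (hi : i < m) (p q : Fin 3)
    (H : α ^ (expo h p * 2 ^ i) = α ^ expo h q) : p = q ∧ i = 0 := by
  rw [expo_eq h hh, expo_eq h hh] at H
  exact comb m h i hm hh hi p q (rot m α (by omega) _ _ (expSet_sub m h hm hh p)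
    (expSet_sub m h hm hh q) (expSet_card m h hm hh p) (expSet_card m h hm hh q) hα i H)

lemma expo_ne
    (hm : m = 2 * h + 1) (hh : 3 ≤ h) (hα : orderOf α = 2 ^ m - 1) (i : ℕ) (p : Fin 3) : α ^ (expo h p * 2 ^ i) ≠ 1 := by
  intro H
  rw [expo_eq h hh] at H
  have := rot m α (by omega) _ ∅ (expSet_sub m h hm hh p) (by simp) 
    (expSet_card m h hm hh p) (by simp; omega) hα i (by simpa using H)
  rw [Finset.image_eq_empty] at this
  fin_cases p <;> simp [expSet] at this
end
section
variable (m h : ℕ) (α : GaloisField 2 m)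

lemma trace_two_pow (hm : m ≠ 0) (x : GaloisField 2 m) (k : ℕ) :
    Algebra.trace (ZMod 2) (GaloisField 2 m) (x ^ 2 ^ k) =
      Algebra.trace (ZMod 2) (GaloisField 2 m) x := by
  have h1 : ∀ y : GaloisField 2 m, Algebra.trace (ZMod 2) (GaloisField 2 m) (y ^ 2) =
      Algebra.trace (ZMod 2) (GaloisField 2 m) y := by
    intro y
    apply (algebraMap (ZMod 2) (GaloisField 2 m)).injective
    rw [FiniteField.algebraMap_trace_eq_sum_pow, FiniteField.algebraMap_trace_eq_sum_pow,
      GaloisField.finrank 2 hm]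
    simp only [Nat.card_zmod]
    have h2 : ∀ i, (y ^ 2) ^ 2 ^ i = y ^ 2 ^ (i + 1) := by
      intro i; rw [← pow_mul, pow_succ']
    simp only [h2]
    have h3 := Finset.sum_range_succ (fun i => y ^ 2 ^ i) m
    have h4 := Finset.sum_range_succ' (fun i => y ^ 2 ^ i) m
    rw [h3, pow_two_pow_m m hm] at h4
    simpa using h4.symm
  induction k with
  | zero => simp
  | succ k ih => rw [pow_succ, pow_mul, h1, ih]

lemma trace_f (hm : m = 2 * h + 1) (hh : 3 ≤ h) (f : GaloisField 2 m → GaloisField 2 m)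
    (hf : ∀ x, f x = x ^ (3 * 2 ^ ((m + 1) / 2) + 4) +
        x ^ (2 ^ ((m + 1) / 2) + 2) + x ^ (2 ^ ((m + 1) / 2))) (x : GaloisField 2 m) :
    algebraMap (ZMod 2) (GaloisField 2 m)
      (Algebra.trace (ZMod 2) (GaloisField 2 m) (f (x + 1))) =
    1 + ∑ p : Fin 3, ∑ i ∈ Finset.range m, x ^ (expo h p * 2 ^ i) := by
  have hm0 : m ≠ 0 := by omega
  set u := x ^ 2 ^ (h - 1) with hu
  have two : (2 : GaloisField 2 m) = 0 := CharTwo.two_eq_zero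
  have hq : 2 ^ ((m + 1) / 2) = 2 ^ (h - 1) * 4 := by
    rw [show (m + 1) / 2 = (h - 1) + 2 by omega, pow_add]; norm_num
  have hu1 : (x + 1) ^ 2 ^ (h - 1) = u + 1 := by
    rw [add_pow_char_pow, one_pow]
  have e1 : f (x + 1) = (u ^ 3 * x) ^ 2 ^ 2 + (u * x) ^ 2 ^ 2 + (x ^ 3) ^ 2 ^ (h + 1)
      + ((u ^ 4 * x ^ 2) ^ 2 ^ 1 + u ^ 4 * x ^ 2) + (x ^ 2 ^ 2 + x ^ 2 ^ 1)
      + (u ^ 2 ^ 3 + u ^ 2 ^ 2) + 1 := by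
    have a1 : (x + 1) ^ (3 * 2 ^ ((m + 1) / 2) + 4) = (u + 1) ^ 12 * (x + 1) ^ 4 := by
      rw [hq, ← hu1]; ring
    have a2 : (x + 1) ^ (2 ^ ((m + 1) / 2) + 2) = (u + 1) ^ 4 * (x + 1) ^ 2 := by
      rw [hq, ← hu1]; ring
    have a3 : (x + 1) ^ (2 ^ ((m + 1) / 2)) = (u + 1) ^ 4 := by
      rw [hq, ← hu1]; ring
    have a4 : (x ^ 3) ^ 2 ^ (h + 1) = u ^ 12 := by
      rw [hu, ← pow_mul, ← pow_mul, show h + 1 = (h - 1) + 2 by omega, pow_add]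
      congr 1; ring
    have b1 : (u + 1) ^ 4 = u ^ 4 + 1 := by linear_combination (2*u^3+3*u^2+2*u) * two
    have b2 : (x + 1) ^ 4 = x ^ 4 + 1 := by linear_combination (2*x^3+3*x^2+2*x) * two
    have b3 : (x + 1) ^ 2 = x ^ 2 + 1 := by linear_combination x * two
    rw [hf, a1, a2, a3, a4, show (u + 1) ^ 12 = ((u + 1) ^ 4) ^ 3 by ring, b1, b2, b3]
    linear_combination (1 + 2 * u ^ 4 + u ^ 4 * x ^ 4 + u ^ 8 + u ^ 8 * x ^ 4) * two
  have tr1 : Algebra.trace (ZMod 2) (GaloisField 2 m) 1 = 1 := by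
    have := Algebra.trace_algebraMap (R := ZMod 2) (S := GaloisField 2 m) 1
    rw [map_one, GaloisField.finrank 2 hm0] at this
    rw [this, nsmul_one, show ((m : ℕ) : ZMod 2) = ((2 * h + 1 : ℕ) : ZMod 2) by rw [← hm]]
    push_cast
    rw [show (2 : ZMod 2) = 0 from rfl]; ring
  have e2 : Algebra.trace (ZMod 2) (GaloisField 2 m) (f (x + 1)) =
      1 + ∑ p : Fin 3, Algebra.trace (ZMod 2) (GaloisField 2 m) (x ^ expo h p) := by
    have c1 : x ^ expo h 0 = x ^ 3 := rfl
    have c2 : x ^ expo h 1 = u * x := by simp [expo, pow_succ, hu]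
    have c3 : x ^ expo h 2 = u ^ 3 * x := by
      have : expo h 2 = 2 ^ (h - 1) * 3 + 1 := by
        simp only [expo]
        obtain ⟨k, rfl⟩ : ∃ k, h = k + 1 := ⟨h - 1, by omega⟩
        simp; ring
      rw [this, pow_succ, pow_mul]
    rw [e1, Fin.sum_univ_three, c1, c2, c3]
    simp only [map_add, trace_two_pow m hm0, tr1, CharTwo.add_self_eq_zero]
    ring
  rw [e2, map_add, map_one, map_sum]
  congr 1
  refine Finset.sum_congr rfl fun p _ => ?_
  rw [FiniteField.algebraMap_trace_eq_sum_pow, GaloisField.finrank 2 hm0]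
  simp only [Nat.card_zmod, pow_mul]

lemma geom_ind (hm : m ≠ 0) (γ : GaloisField 2 m) (hγ : γ ≠ 0) :
    ∑ t ∈ Finset.range (2 ^ m - 1), γ ^ t = if γ = 1 then 1 else 0 := by
  have hv : 2 ^ m = (2 ^ m - 1) + 1 := (Nat.sub_add_cancel Nat.one_le_two_pow).symm
  have h1 : γ ^ (2 ^ m - 1) = 1 := by
    have := pow_two_pow_m m hm γ
    rw [hv, pow_succ] at this
    exact mul_right_cancel₀ hγ (by simpa using this)
  split_ifs with h
  · subst h
    have two : (2 : GaloisField 2 m) = 0 := CharTwo.two_eq_zero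
    have : ((2 ^ m : ℕ) : GaloisField 2 m) = 0 := by push_cast; rw [two, zero_pow hm]
    rw [hv, Nat.cast_succ] at this
    simp only [one_pow, Finset.sum_const, Finset.card_range, nsmul_one]
    linear_combination this - two
  · have := mul_geom_sum γ (2 ^ m - 1)
    rw [h1, sub_self] at this
    exact (mul_eq_zero.1 this).resolve_left (sub_ne_zero.2 h)

lemma alpha_ne (hm : m ≠ 0) (hα : orderOf α = 2 ^ m - 1) : α ≠ 0 := by
  rintro rfl
  have h1 : (0 : GaloisField 2 m) ^ (2 ^ m - 1) = 1 := by rw [← hα]; exact pow_orderOf_eq_one _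
  have : 2 ≤ 2 ^ m := by
    calc 2 = 2 ^ 1 := rfl
      _ ≤ 2 ^ m := Nat.pow_le_pow_right (by omega) (by omega)
  rw [zero_pow (by omega)] at h1
  exact zero_ne_one h1

lemma aeval_S (hm : m = 2 * h + 1) (hh : 3 ≤ h) (hα : orderOf α = 2 ^ m - 1)
    (f : GaloisField 2 m → GaloisField 2 m)
    (hf : ∀ x, f x = x ^ (3 * 2 ^ ((m + 1) / 2) + 4) +
        x ^ (2 ^ ((m + 1) / 2) + 2) + x ^ (2 ^ ((m + 1) / 2))) (β : GaloisField 2 m)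
    (hβ : β ≠ 0) :
    aeval β (traceSeqPoly m α f) = (if β = 1 then 1 else 0) +
      ∑ p : Fin 3, ∑ i ∈ Finset.range m, if α ^ (expo h p * 2 ^ i) * β = 1 then 1 else 0 := by
  have hm0 : m ≠ 0 := by omega
  have hα0 := alpha_ne m α hm0 hα
  rw [traceSeqPoly, map_sum]
  simp only [map_mul, aeval_C, map_pow, aeval_X, trace_f m h hm hh f hf, add_mul, one_mul,
    Finset.sum_add_distrib, Finset.sum_mul]
  rw [geom_ind m hm0 β hβ, Finset.sum_comm]
  congr 1
  refine Finset.sum_congr rfl fun p _ => ?_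
  rw [Finset.sum_comm]
  refine Finset.sum_congr rfl fun i _ => ?_
  rw [← geom_ind m hm0 _ (mul_ne_zero (pow_ne_zero _ hα0) hβ)]
  refine Finset.sum_congr rfl fun t _ => ?_
  rw [mul_pow, ← pow_mul, ← pow_mul, mul_comm t]

/-- The three conjugacy class representatives. -/
noncomputable def rep (p : Fin 3) : GaloisField 2 m := α⁻¹ ^ expo h p

lemma mp_root (x : GaloisField 2 m) (i : ℕ) :
    aeval (x ^ 2 ^ i) (minpoly (ZMod 2) x) = 0 := by
  have : ∀ (q : (ZMod 2)[X]), aeval (x ^ 2 ^ i) q = (aeval x q) ^ 2 ^ i := by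
    intro q
    rw [← map_pow, ← Polynomial.expand_aeval]
    congr 1
    have := ZMod.expand_card (p := 2) 
    induction i with
    | zero => simp
    | succ i ih => rw [pow_succ', ← Polynomial.expand_expand, this, ih, ← pow_mul, mul_comm]
  rw [this, minpoly.aeval, zero_pow (by positivity)]

section

lemma rep_iff
    (hm : m = 2 * h + 1) (hh : 3 ≤ h) (hα : orderOf α = 2 ^ m - 1) (p q : Fin 3) (i : ℕ) (hi : i < m) :
    α ^ (expo h p * 2 ^ i) * rep m h α q = 1 ↔ p = q ∧ i = 0 := by
  have hα0 := alpha_ne m α (by omega) hα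
  rw [rep, inv_pow, mul_inv_eq_one₀ (pow_ne_zero _ hα0)]
  constructor
  · exact expo_inj m h α hm hh hα i hi p q
  · rintro ⟨rfl, rfl⟩; simp

lemma rep_inj
    (hm : m = 2 * h + 1) (hh : 3 ≤ h) (hα : orderOf α = 2 ^ m - 1) (p q : Fin 3) (i : ℕ) (hi : i < m) (H : rep m h α p ^ 2 ^ i = rep m h α q) :
    p = q ∧ i = 0 := by
  apply expo_inj m h α hm hh hα i hi p q
  rw [rep, rep, inv_pow, inv_pow, inv_pow, inv_inj, ← pow_mul] at H
  exact H

lemma rep_ne_one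
    (hm : m = 2 * h + 1) (hh : 3 ≤ h) (hα : orderOf α = 2 ^ m - 1) (p : Fin 3) (i : ℕ) : rep m h α p ^ 2 ^ i ≠ 1 := by
  intro H
  apply expo_ne m h α hm hh hα i p
  rw [rep, inv_pow, inv_pow, inv_eq_one, ← pow_mul] at H
  exact H

/-- The conjugacy orbit of a representative. -/
noncomputable def orb (p : Fin 3) : Finset (GaloisField 2 m) :=
  (Finset.range m).image (fun i => rep m h α p ^ 2 ^ i)

lemma orb_card
    (hm : m = 2 * h + 1) (hh : 3 ≤ h) (hα : orderOf α = 2 ^ m - 1) (p : Fin 3) : (orb m h α p).card = m := by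
  rw [orb, Finset.card_image_of_injOn, Finset.card_range]
  have inj : ∀ i j, i ≤ j → j < m → rep m h α p ^ 2 ^ i = rep m h α p ^ 2 ^ j → i = j := by
    intro i j hij hj H
    obtain ⟨k, rfl⟩ := Nat.exists_eq_add_of_le hij
    rw [add_comm i k, pow_add, pow_mul] at H
    have H' := iterateFrobenius_inj (GaloisField 2 m) 2 i
      (a₁ := rep m h α p) (a₂ := rep m h α p ^ 2 ^ k) (by simpa [iterateFrobenius_def] using H)
    have := (rep_inj m h α hm hh hα p p k (by omega) H'.symm).2
    omega
  intro i hi j hj H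
  simp only [Finset.coe_range, Set.mem_Iio] at hi hj
  rcases le_total i j with h1 | h1
  · exact inj i j h1 hj H
  · exact (inj j i h1 hi H.symm).symm

lemma rep_roots
    (hm : m = 2 * h + 1) (hh : 3 ≤ h) (hα : orderOf α = 2 ^ m - 1) (p : Fin 3) (Z : Finset (GaloisField 2 m))
    (hZ : ∀ y ∈ Z, aeval y (minpoly (ZMod 2) (rep m h α p)) = 0) :
    Z.card ≤ (minpoly (ZMod 2) (rep m h α p)).natDegree := by
  have hmon := minpoly.monic (A := ZMod 2) (Algebra.IsIntegral.isIntegral (rep m h α p))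
  rw [← natDegree_map (algebraMap (ZMod 2) (GaloisField 2 m))]
  apply card_le_degree_of_subset_roots
  intro y hy
  rw [mem_roots ((hmon.map _).ne_zero), IsRoot, eval_map_algebraMap]
  exact hZ y hy

lemma orb_root
    (hm : m = 2 * h + 1) (hh : 3 ≤ h) (hα : orderOf α = 2 ^ m - 1) (p : Fin 3) (y : GaloisField 2 m) (hy : y ∈ orb m h α p) :
    aeval y (minpoly (ZMod 2) (rep m h α p)) = 0 := by
  obtain ⟨i, _, rfl⟩ := Finset.mem_image.1 hy
  exact mp_root m _ i

lemma rep_deg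
    (hm : m = 2 * h + 1) (hh : 3 ≤ h) (hα : orderOf α = 2 ^ m - 1) (p : Fin 3) : (minpoly (ZMod 2) (rep m h α p)).natDegree = m := by
  have hm0 : m ≠ 0 := by omega
  apply le_antisymm
  · have := minpoly.natDegree_le (A := ZMod 2) (rep m h α p)
    rwa [GaloisField.finrank 2 hm0] at this
  · have := rep_roots m h α hm hh hα p _ (orb_root m h α hm hh hα p)
    rwa [orb_card m h α hm hh hα] at this

lemma rep_coprime
    (hm : m = 2 * h + 1) (hh : 3 ≤ h) (hα : orderOf α = 2 ^ m - 1) (p q : Fin 3) (hpq : p ≠ q) :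
    aeval (rep m h α q) (minpoly (ZMod 2) (rep m h α p)) ≠ 0 := by
  intro H
  have h1 := rep_roots m h α hm hh hα p (insert (rep m h α q) (orb m h α p)) (by
    intro y hy
    rcases Finset.mem_insert.1 hy with rfl | hy
    · exact H
    · exact orb_root m h α hm hh hα p y hy)
  rw [Finset.card_insert_of_notMem, orb_card m h α hm hh hα, rep_deg m h α hm hh hα] at h1
  · omega
  · intro hq
    obtain ⟨i, hi, hi'⟩ := Finset.mem_image.1 hq
    exact hpq (rep_inj m h α hm hh hα p q i (Finset.mem_range.1 hi) hi').1
end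
end
section
variable (m h : ℕ) (α : GaloisField 2 m)

lemma dvd_of_roots (hm : m ≠ 0) (hα : orderOf α = 2 ^ m - 1) (Q : (ZMod 2)[X])
    (H : ∀ β : GaloisField 2 m, β ≠ 0 → aeval β Q = 0) : X ^ (2 ^ m - 1) - 1 ∣ Q := by
  rw [← Polynomial.map_dvd_map' (algebraMap (ZMod 2) (GaloisField 2 m))]
  have hv : 0 < 2 ^ m - 1 := by
    have : 2 ^ 1 ≤ 2 ^ m := Nat.pow_le_pow_right (by omega) (by omega)
    omega
  have prim : IsPrimitiveRoot α (2 ^ m - 1) := hα ▸ IsPrimitiveRoot.orderOf α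
  rw [Polynomial.map_sub, Polynomial.map_pow, map_X, Polynomial.map_one,
    X_pow_sub_one_eq_prod hv prim]
  refine Finset.prod_dvd_of_coprime ?_ ?_
  · intro a _ b _ hab
    exact pairwise_coprime_X_sub_C Function.injective_id hab
  · intro β hβ
    rw [dvd_iff_isRoot, IsRoot, eval_map_algebraMap]
    apply H
    rintro rfl
    rw [mem_nthRootsFinset hv, zero_pow hv.ne'] at hβ
    exact zero_ne_one hβ

lemma eq_of_assoc (p q : (ZMod 2)[X]) (H : Associated p q) : p = q := by
  obtain ⟨u, rfl⟩ := H
  obtain ⟨c, hc, hu⟩ := Polynomial.isUnit_iff.1 u.isUnit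
  have : c = 1 := by
    have h0 := hc.ne_zero
    revert h0; clear hc hu; revert c; decide
  rw [← hu, this]; simp

/-- The claimed generator polynomial. -/
noncomputable def gen : (ZMod 2)[X] :=
  (X - 1) * minpoly (ZMod 2) (rep m h α 0) * minpoly (ZMod 2) (rep m h α 1) *
    minpoly (ZMod 2) (rep m h α 2)

section

lemma rep_ne_zero
    (hm : m = 2 * h + 1) (hh : 3 ≤ h) (hα : orderOf α = 2 ^ m - 1) (p : Fin 3) : rep m h α p ≠ 0 :=
  pow_ne_zero _ (inv_ne_zero (alpha_ne m α (by omega) hα))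

lemma cop
    (hm : m = 2 * h + 1) (hh : 3 ≤ h) (hα : orderOf α = 2 ^ m - 1) (p : Fin 3) (Q : (ZMod 2)[X]) (H : aeval (rep m h α p) Q ≠ 0) :
    IsCoprime (minpoly (ZMod 2) (rep m h α p)) Q := by
  rw [(minpoly.irreducible (Algebra.IsIntegral.isIntegral _)).coprime_iff_not_dvd]
  intro hd
  obtain ⟨r, rfl⟩ := hd
  simp at H

lemma cop1
    (hm : m = 2 * h + 1) (hh : 3 ≤ h) (hα : orderOf α = 2 ^ m - 1) (Q : (ZMod 2)[X]) (H : aeval (1 : GaloisField 2 m) Q ≠ 0) :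
    IsCoprime (X - 1) Q := by
  have irr : Irreducible (X - 1 : (ZMod 2)[X]) := by
    simpa using irreducible_X_sub_C (1 : ZMod 2)
  rw [irr.coprime_iff_not_dvd]
  rintro ⟨r, rfl⟩
  simp at H

lemma gen_cop
    (hm : m = 2 * h + 1) (hh : 3 ≤ h) (hα : orderOf α = 2 ^ m - 1) (Q : (ZMod 2)[X]) (H1 : aeval (1 : GaloisField 2 m) Q ≠ 0)
    (H : ∀ p, aeval (rep m h α p) Q ≠ 0) : IsCoprime (gen m h α) Q := by
  have c := cop m h α hm hh hα
  exact (((cop1 m h α hm hh hα Q H1).mul_left (c 0 Q (H 0))).mul_left (c 1 Q (H 1))).mul_left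
    (c 2 Q (H 2))

lemma gen_dvd
    (hm : m = 2 * h + 1) (hh : 3 ≤ h) (hα : orderOf α = 2 ^ m - 1) : gen m h α ∣ X ^ (2 ^ m - 1) - 1 := by
  have c := cop m h α hm hh hα
  have pw : ∀ y : GaloisField 2 m, y ≠ 0 → y ^ (2 ^ m - 1) = 1 := by
    intro y hy
    have hv : 2 ^ m = (2 ^ m - 1) + 1 := (Nat.sub_add_cancel Nat.one_le_two_pow).symm
    have := pow_two_pow_m m (by omega) y
    rw [hv, pow_succ] at this
    exact mul_right_cancel₀ hy (by simpa using this)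
  have d : ∀ p, minpoly (ZMod 2) (rep m h α p) ∣ X ^ (2 ^ m - 1) - 1 := by
    intro p
    apply minpoly.dvd
    simp [pw _ (rep_ne_zero m h α hm hh hα p)]
  have d1 : (X - 1 : (ZMod 2)[X]) ∣ X ^ (2 ^ m - 1) - 1 := by
    simpa using sub_dvd_pow_sub_pow (X : (ZMod 2)[X]) 1 (2 ^ m - 1)
  have x1 : ∀ p, aeval (rep m h α p) (X - 1 : (ZMod 2)[X]) ≠ 0 := by
    intro p
    have := rep_ne_one m h α hm hh hα p 0
    simpa [sub_eq_zero] using this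
  have cc := rep_coprime m h α hm hh hα
  have i1 : IsCoprime (X - 1 : (ZMod 2)[X]) (minpoly (ZMod 2) (rep m h α 0)) :=
    (c 0 _ (x1 0)).symm
  have i2 : IsCoprime ((X - 1 : (ZMod 2)[X]) * (minpoly (ZMod 2) (rep m h α 0)))
      (minpoly (ZMod 2) (rep m h α 1)) := by
    refine (c 1 _ ?_).symm
    rw [map_mul]
    exact mul_ne_zero (x1 1) (cc 0 1 (by decide))
  have i3 : IsCoprime ((X - 1 : (ZMod 2)[X]) * (minpoly (ZMod 2) (rep m h α 0)) *
      (minpoly (ZMod 2) (rep m h α 1))) (minpoly (ZMod 2) (rep m h α 2)) := by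
    refine (c 2 _ ?_).symm
    rw [map_mul, map_mul]
    exact mul_ne_zero (mul_ne_zero (x1 2) (cc 0 2 (by decide))) (cc 1 2 (by decide))
  exact i3.mul_dvd (i2.mul_dvd (i1.mul_dvd d1 (d 0)) (d 1)) (d 2)

lemma gen_monic
    (hm : m = 2 * h + 1) (hh : 3 ≤ h) (hα : orderOf α = 2 ^ m - 1) : (gen m h α).Monic := by
  have hmon : ∀ p, (minpoly (ZMod 2) (rep m h α p)).Monic := fun p =>
    minpoly.monic (Algebra.IsIntegral.isIntegral (rep m h α p))
  have h1 : (X - 1 : (ZMod 2)[X]).Monic := by simpa using monic_X_sub_C (1 : ZMod 2)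
  exact ((h1.mul (hmon 0)).mul (hmon 1)).mul (hmon 2)

lemma gen_deg
    (hm : m = 2 * h + 1) (hh : 3 ≤ h) (hα : orderOf α = 2 ^ m - 1) : (gen m h α).natDegree = 3 * m + 1 := by
  have hmon : ∀ p, (minpoly (ZMod 2) (rep m h α p)).Monic := fun p =>
    minpoly.monic (Algebra.IsIntegral.isIntegral (rep m h α p))
  have h1 : (X - 1 : (ZMod 2)[X]).Monic := by simpa using monic_X_sub_C (1 : ZMod 2)
  have h2 : (X - 1 : (ZMod 2)[X]).natDegree = 1 := by simpa using natDegree_X_sub_C (1 : ZMod 2)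
  rw [gen, ((h1.mul (hmon 0)).mul (hmon 1)).natDegree_mul (hmon 2),
    (h1.mul (hmon 0)).natDegree_mul (hmon 1), h1.natDegree_mul (hmon 0)]
  simp only [rep_deg m h α hm hh hα, h2]
  ring


lemma S_one
    (hm : m = 2 * h + 1) (hh : 3 ≤ h) (hα : orderOf α = 2 ^ m - 1)
    (f : GaloisField 2 m → GaloisField 2 m)
    (hf : ∀ x, f x = x ^ (3 * 2 ^ ((m + 1) / 2) + 4) +
        x ^ (2 ^ ((m + 1) / 2) + 2) + x ^ (2 ^ ((m + 1) / 2)))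
    : aeval (1 : GaloisField 2 m) (traceSeqPoly m α f) ≠ 0 := by
  rw [aeval_S m h α hm hh hα f hf 1 one_ne_zero]
  simp [expo_ne m h α hm hh hα]

lemma S_rep
    (hm : m = 2 * h + 1) (hh : 3 ≤ h) (hα : orderOf α = 2 ^ m - 1)
    (f : GaloisField 2 m → GaloisField 2 m)
    (hf : ∀ x, f x = x ^ (3 * 2 ^ ((m + 1) / 2) + 4) +
        x ^ (2 ^ ((m + 1) / 2) + 2) + x ^ (2 ^ ((m + 1) / 2)))
    (q : Fin 3) : aeval (rep m h α q) (traceSeqPoly m α f) ≠ 0 := by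
  have h1 : rep m h α q ≠ 1 := by simpa using rep_ne_one m h α hm hh hα q 0
  rw [aeval_S m h α hm hh hα f hf _ (rep_ne_zero m h α hm hh hα q), if_neg h1, zero_add]
  have : ∑ p : Fin 3, ∑ i ∈ Finset.range m,
      (if α ^ (expo h p * 2 ^ i) * rep m h α q = 1 then (1 : GaloisField 2 m) else 0) = 1 := by
    rw [Finset.sum_eq_single q, Finset.sum_eq_single 0]
    · rw [if_pos]
      exact (rep_iff m h α hm hh hα q q 0 (by omega)).2 ⟨rfl, rfl⟩
    · intro i hi hi0
      rw [if_neg]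
      intro H
      exact hi0 ((rep_iff m h α hm hh hα q q i (Finset.mem_range.1 hi)).1 H).2
    · intro H; exact absurd (Finset.mem_range.2 (by omega)) H
    · intro p _ hp
      refine Finset.sum_eq_zero fun i hi => ?_
      rw [if_neg]
      intro H
      exact hp ((rep_iff m h α hm hh hα p q i (Finset.mem_range.1 hi)).1 H).1
    · simp
  rw [this]
  exact one_ne_zero

lemma S_zero
    (hm : m = 2 * h + 1) (hh : 3 ≤ h) (hα : orderOf α = 2 ^ m - 1)
    (f : GaloisField 2 m → GaloisField 2 m)
    (hf : ∀ x, f x = x ^ (3 * 2 ^ ((m + 1) / 2) + 4) +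
        x ^ (2 ^ ((m + 1) / 2) + 2) + x ^ (2 ^ ((m + 1) / 2)))
    (β : GaloisField 2 m) (hβ : β ≠ 0) :
    aeval β (gen m h α * traceSeqPoly m α f) = 0 := by
  have hα0 := alpha_ne m α (by omega) hα
  by_cases h1 : β = 1
  · subst h1; simp [gen]
  by_cases h2 : ∃ p : Fin 3, ∃ i, α ^ (expo h p * 2 ^ i) * β = 1
  · obtain ⟨p, i, H⟩ := h2
    have hb : β = rep m h α p ^ 2 ^ i := by
      rw [rep, ← pow_mul, inv_pow]
      exact eq_inv_of_mul_eq_one_right H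
    have := mp_root m (rep m h α p) i
    rw [← hb] at this
    rw [gen]
    fin_cases p <;> simp at this <;> simp [this]
  · push Not at h2
    rw [map_mul, aeval_S m h α hm hh hα f hf β hβ, if_neg h1]
    simp [h2]

lemma genPoly_eq
    (hm : m = 2 * h + 1) (hh : 3 ≤ h) (hα : orderOf α = 2 ^ m - 1)
    (f : GaloisField 2 m → GaloisField 2 m)
    (hf : ∀ x, f x = x ^ (3 * 2 ^ ((m + 1) / 2) + 4) +
        x ^ (2 ^ ((m + 1) / 2) + 2) + x ^ (2 ^ ((m + 1) / 2)))
    : genPoly m α f = gen m h α := by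
  have hm0 : m ≠ 0 := by omega
  obtain ⟨H, hH⟩ := gen_dvd m h α hm hh hα
  have hP : (X ^ (2 ^ m - 1) - 1 : (ZMod 2)[X]) ≠ 0 := by
    have hv : 2 ^ m - 1 ≠ 0 := by
      have : 2 ^ 1 ≤ 2 ^ m := Nat.pow_le_pow_right (by omega) (by omega)
      omega
    simpa using (monic_X_pow_sub_C (1 : ZMod 2) hv).ne_zero
  have hg0 := (gen_monic m h α hm hh hα).ne_zero
  have hS : H ∣ traceSeqPoly m α f := by
    have := dvd_of_roots m α hm0 hα _ (S_zero m h α hm hh hα f hf)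
    rw [hH] at this
    exact (mul_dvd_mul_iff_left hg0).1 this
  set D := EuclideanDomain.gcd (X ^ (2 ^ m - 1) - 1) (traceSeqPoly m α f) with hD
  have d1 : H ∣ D := EuclideanDomain.dvd_gcd (hH ▸ Dvd.intro_left _ rfl) hS
  have d2 : D ∣ H := by
    have c : IsCoprime (gen m h α) D :=
      (gen_cop m h α hm hh hα _ (S_one m h α hm hh hα f hf)
        (S_rep m h α hm hh hα f hf)).of_isCoprime_of_dvd_right (EuclideanDomain.gcd_dvd_right _ _)
    refine c.symm.dvd_of_dvd_mul_left ?_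
    rw [← hH]
    exact EuclideanDomain.gcd_dvd_left _ _
  have e : D = H := eq_of_assoc _ _ (associated_of_dvd_dvd d2 d1)
  rw [genPoly, ← hD, e, hH]
  have hH0 : H ≠ 0 := by rintro rfl; simp at hH; exact hP hH
  exact mul_div_cancel_right₀ _ hH0
end
end

lemma code_finrank (g : (ZMod 2)[X]) (hg : g.Monic) (v : ℕ) (hv : g.natDegree ≤ v) :
    Module.finrank (ZMod 2) ↥(Polynomial.degreeLT (ZMod 2) v ⊓
      (Ideal.span {g}).restrictScalars (ZMod 2)) = v - g.natDegree := by
  set n := v - g.natDegree with hn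
  have hinj : Function.Injective (LinearMap.mulLeft (ZMod 2) g) := by
    intro a b hab
    exact mul_left_cancel₀ hg.ne_zero hab
  have e : Polynomial.degreeLT (ZMod 2) v ⊓ (Ideal.span {g}).restrictScalars (ZMod 2) =
      (Polynomial.degreeLT (ZMod 2) n).map (LinearMap.mulLeft (ZMod 2) g) := by
    have key : ∀ r : (ZMod 2)[X], (g * r).degree < v ↔ r.degree < n := by
      intro r
      by_cases hr : r = 0
      · simp [hr]
      rw [hg.degree_mul_comm, hg.degree_mul, degree_eq_natDegree hg.ne_zero,
        degree_eq_natDegree hr]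
      norm_cast
      omega
    ext c
    simp only [Submodule.mem_inf, mem_degreeLT, Submodule.restrictScalars_mem,
      Ideal.mem_span_singleton, Submodule.mem_map, LinearMap.mulLeft_apply]
    constructor
    · rintro ⟨h1, r, rfl⟩
      exact ⟨r, (key r).1 h1, rfl⟩
    · rintro ⟨r, h1, rfl⟩
      exact ⟨(key r).2 h1, Dvd.intro _ rfl⟩
  rw [e, ← (Submodule.equivMapOfInjective _ hinj _).finrank_eq,
    (degreeLTEquiv (ZMod 2) n).finrank_eq]
  simp

lemma choose_bound (m : ℕ) (hm : 7 ≤ m) : 2 ^ (3 * m + 1) < (2 ^ m - 1).choose 4 := by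
  have h1 : 2 ^ 7 ≤ 2 ^ m := Nat.pow_le_pow_right (by omega) hm
  rw [pow_succ, mul_comm 3 m, pow_mul]
  obtain ⟨N, hN⟩ : ∃ N, 2 ^ m = N + 128 := ⟨2 ^ m - 128, by omega⟩
  rw [hN]
  have h2 := Nat.descFactorial_eq_factorial_mul_choose (N + 128 - 1) 4
  have h3 : (N + 128 - 1).descFactorial 4 = (N + 124) * ((N + 125) * ((N + 126) * (N + 127))) := by
    simp [Nat.descFactorial]
  rw [h3, show Nat.factorial 4 = 24 from rfl] at h2
  have : 24 * ((N + 128) ^ 3 * 2) < 24 * (N + 128 - 1).choose 4 := by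
    rw [← h2]
    ring_nf
    nlinarith [Nat.zero_le N, sq_nonneg N, Nat.zero_le (N ^ 3), Nat.zero_le (N ^ 4)]
  omega

/-- Indicator polynomial of a set. -/
noncomputable def indPoly (A : Finset ℕ) : (ZMod 2)[X] := ∑ i ∈ A, X ^ i

lemma indPoly_coeff (A : Finset ℕ) (n : ℕ) : (indPoly A).coeff n = if n ∈ A then 1 else 0 := by
  simp [indPoly, coeff_X_pow]

lemma low_weight (g : (ZMod 2)[X]) (hg : g.Monic) (v k : ℕ) (hk : g.natDegree = k)
    (hc : 2 ^ k < v.choose 4) :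
    ∃ c : (ZMod 2)[X], c.degree < v ∧ g ∣ c ∧ c ≠ 0 ∧ c.support.card ≤ 8 := by
  obtain ⟨A, hA, B, hB, hAB, hE⟩ := Finset.exists_ne_map_eq_of_card_lt_of_maps_to
    (s := Finset.powersetCard 4 (Finset.range v)) (t := (Finset.univ : Finset (Fin k → ZMod 2)))
    (f := fun A i => (indPoly A %ₘ g).coeff i)
    (by simpa using hc) (by intro _ _; simp)
  rw [Finset.mem_powersetCard] at hA hB
  have hmod : indPoly A %ₘ g = indPoly B %ₘ g := by
    ext n
    by_cases hn : n < k
    · exact congrFun hE ⟨n, hn⟩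
    · have hz : ∀ q : (ZMod 2)[X], (q %ₘ g).coeff n = 0 := by
        intro q
        apply coeff_eq_zero_of_degree_lt
        refine lt_of_lt_of_le (degree_modByMonic_lt q hg) ?_
        rw [degree_eq_natDegree hg.ne_zero, hk]
        exact_mod_cast not_lt.1 hn
      rw [hz, hz]
  have hsup : (indPoly A - indPoly B).support ⊆ A ∪ B := by
    intro n hn
    rw [mem_support_iff, coeff_sub, indPoly_coeff, indPoly_coeff] at hn
    by_contra hcon
    rw [Finset.mem_union, not_or] at hcon
    simp [hcon] at hn
  refine ⟨indPoly A - indPoly B, ?_, ?_, ?_, ?_⟩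
  · rw [degree_lt_iff_coeff_zero]
    intro n hn
    by_contra hcon
    have := hsup (mem_support_iff.2 hcon)
    have := Finset.union_subset hA.1 hB.1 this
    rw [Finset.mem_range] at this
    omega
  · rw [← modByMonic_eq_zero_iff_dvd hg, sub_modByMonic, hmod, sub_self]
  · intro H
    apply hAB
    ext n
    have := congrArg (fun q => coeff q n) (sub_eq_zero.1 H)
    simp only [indPoly_coeff] at this
    by_cases h1 : n ∈ A <;> by_cases h2 : n ∈ B <;> simp [h1, h2] at this ⊢
  · refine (Finset.card_le_card hsup).trans ((Finset.card_union_le _ _).trans ?_)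
    omega

lemma even_weight (c : (ZMod 2)[X]) (hc : X - 1 ∣ c) : Even c.support.card := by
  have h1 : c.eval 1 = 0 := by
    have : (X - C 1 : (ZMod 2)[X]) ∣ c := by simpa using hc
    exact dvd_iff_isRoot.1 this
  rw [eval_eq_sum, Polynomial.sum] at h1
  have : ∀ i ∈ c.support, c.coeff i * 1 ^ i = 1 := by
    intro i hi
    rw [mem_support_iff] at hi
    rw [one_pow, mul_one]
    generalize c.coeff i = a at hi
    revert a; decide
  rw [Finset.sum_congr rfl this] at h1
  simp only [Finset.sum_const, nsmul_one] at h1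
  exact (ZMod.natCast_eq_zero_iff_even).1 h1

lemma wt_ne_two (m h : ℕ) (hm : m = 2 * h + 1) (α : GaloisField 2 m)
    (hα : orderOf α = 2 ^ m - 1) (c : (ZMod 2)[X]) (hc : c.degree < (2 ^ m - 1 : ℕ))
    (h0 : aeval (α⁻¹ ^ 3) c = 0) : c.support.card ≠ 2 := by
  intro hcard
  have hα0 := alpha_ne m α (by omega) hα
  obtain ⟨i, j, hij, hs⟩ := Finset.card_eq_two.1 hcard
  have hlt : ∀ n ∈ c.support, n < 2 ^ m - 1 := by
    intro n hn
    by_contra hcon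
    exact (mem_support_iff.1 hn) ((degree_lt_iff_coeff_zero _ _).1 hc n (not_lt.1 hcon))
  have hone : ∀ n ∈ c.support, c.coeff n = 1 := by
    intro n hn
    rw [mem_support_iff] at hn
    generalize c.coeff n = a at hn
    revert a; decide
  have hi : i ∈ c.support := by simp [hs]
  have hj : j ∈ c.support := by simp [hs]
  have hi' := hlt i hi
  have hj' := hlt j hj
  rw [aeval_def, eval₂_eq_sum, Polynomial.sum, hs, Finset.sum_pair hij, hone i hi, hone j hj,
    map_one, one_mul, one_mul, CharTwo.add_eq_zero] at h0
  rw [← pow_mul, ← pow_mul, inv_pow, inv_pow, inv_inj] at h0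
  have c3 : Nat.Coprime (2 ^ m - 1) 3 := by
    rw [Nat.coprime_comm, Nat.Prime.coprime_iff_not_dvd Nat.prime_three]
    have : 2 ^ m % 3 = 2 := by
      rw [hm, pow_succ, pow_mul, Nat.mul_mod, Nat.pow_mod]; simp
    omega
  have key : ∀ a b : ℕ, a ≤ b → b < 2 ^ m - 1 → α ^ (3 * a) = α ^ (3 * b) → a = b := by
    intro a b hab hb H
    obtain ⟨k, rfl⟩ := Nat.exists_eq_add_of_le hab
    rw [mul_add, pow_add] at H
    have h1 : α ^ (3 * k) = 1 := by
      have := mul_left_cancel₀ (pow_ne_zero (3 * a) hα0) ((mul_one (α ^ (3 * a))).trans H)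
      exact this.symm
    have h2 := orderOf_dvd_of_pow_eq_one h1
    rw [hα] at h2
    have h3 := c3.dvd_of_dvd_mul_left h2
    rcases Nat.eq_zero_or_pos k with rfl | hk
    · simp
    · have := Nat.le_of_dvd hk h3
      omega
  rcases le_total i j with h1 | h1
  · exact hij (key i j h1 hj' h0)
  · exact hij (key j i h1 hi' h0.symm).symm

/-- Theorem 2: for f₂(x) = x^{3·2^{(m+1)/2}+4} + x^{2^{(m+1)/2}+2} + x^{2^{(m+1)/2}}
over 𝔽_{2^m}, m = 2h+1 ≥ 7, the minimal polynomial of the sequence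
s_t = Tr(f₂(α^t+1)) is (x−1)·m_{α^{−3}}(x)·m_{α^{−(2^{h−1}+1)}}(x)·m_{α^{−(2^h+2^{h−1}+1)}}(x)
of degree 3m+1; the code C_s has length 2^m−1, dimension 2^m−2−3m, and
minimum distance d with 4 ≤ d ≤ 8. -/
theorem stmt3 (m h : ℕ) (hm : m = 2 * h + 1) (hm7 : 7 ≤ m)
    (α : GaloisField 2 m) (hα : orderOf α = 2 ^ m - 1)
    (f : GaloisField 2 m → GaloisField 2 m)
    (hf : ∀ x, f x = x ^ (3 * 2 ^ ((m + 1) / 2) + 4) +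
        x ^ (2 ^ ((m + 1) / 2) + 2) + x ^ (2 ^ ((m + 1) / 2))) :
    genPoly m α f =
      (X - 1) * minpoly (ZMod 2) (α⁻¹ ^ 3) *
        minpoly (ZMod 2) (α⁻¹ ^ (2 ^ (h - 1) + 1)) *
        minpoly (ZMod 2) (α⁻¹ ^ (2 ^ h + 2 ^ (h - 1) + 1)) ∧
    (genPoly m α f).natDegree = 3 * m + 1 ∧
    Module.finrank (ZMod 2) ↥(codeC m α f) = 2 ^ m - 2 - 3 * m ∧
    (∃ d : ℕ, IsLeast (wtSet (codeC m α f)) d ∧ 4 ≤ d ∧ d ≤ 8) := by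
  have hh : 3 ≤ h := by omega
  have hg : genPoly m α f = gen m h α := genPoly_eq m h α hm hh hα f hf
  have hmon := gen_monic m h α hm hh hα
  have hdeg := gen_deg m h α hm hh hα
  have hb := choose_bound m hm7
  have hle : 3 * m + 1 ≤ 2 ^ m - 1 := by
    have := Polynomial.natDegree_le_of_dvd (gen_dvd m h α hm hh hα) (by
      have hv : 2 ^ m - 1 ≠ 0 := by
        have : 2 ^ 1 ≤ 2 ^ m := Nat.pow_le_pow_right (by omega) (by omega)
        omega
      simpa using (monic_X_pow_sub_C (1 : ZMod 2) hv).ne_zero)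
    rw [hdeg] at this
    refine this.trans ?_
    simpa using (natDegree_X_pow_sub_C (n := 2 ^ m - 1) (r := (1 : ZMod 2))).le
  refine ⟨hg, hg ▸ hdeg, ?_, ?_⟩
  · rw [codeC, hg, code_finrank _ hmon _ (by rw [hdeg]; exact hle), hdeg]
    omega
  · have mem : ∀ c, c ∈ codeC m α f ↔ c.degree < (2 ^ m - 1 : ℕ) ∧ gen m h α ∣ c := by
      intro c
      rw [codeC, hg, Submodule.mem_inf, mem_degreeLT, Submodule.restrictScalars_mem,
        Ideal.mem_span_singleton]
    obtain ⟨c, hc1, hc2, hc3, hc4⟩ := low_weight (gen m h α) hmon (2 ^ m - 1) _ hdeg hb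
    have hcm : c.support.card ∈ wtSet (codeC m α f) := ⟨c, (mem c).2 ⟨hc1, hc2⟩, hc3, rfl⟩
    have hne : (wtSet (codeC m α f)).Nonempty := ⟨_, hcm⟩
    refine ⟨sInf (wtSet (codeC m α f)), ⟨Nat.sInf_mem hne, fun w hw => Nat.sInf_le hw⟩, ?_,
      (Nat.sInf_le hcm).trans hc4⟩
    obtain ⟨w, hw1, hw2, hw3⟩ := Nat.sInf_mem hne
    rw [← hw3]
    obtain ⟨hd, hdv⟩ := (mem w).1 hw1
    have hev : Even w.support.card := by
      refine even_weight w (dvd_trans ?_ hdv)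
      rw [gen, mul_assoc, mul_assoc]
      exact Dvd.intro _ rfl
    have h2 : w.support.card ≠ 2 := by
      refine wt_ne_two m h hm α hα w hd ?_
      obtain ⟨r, rfl⟩ := hdv
      have : aeval (α⁻¹ ^ 3) (minpoly (ZMod 2) (rep m h α 0)) = 0 := minpoly.aeval _ _
      simp only [gen, map_mul, this]
      simp
    have h0 : w.support.card ≠ 0 := by
      rw [Ne, Finset.card_eq_zero, support_eq_empty]
      exact hw2
    obtain ⟨k, hk⟩ := hev
    omega
end

section
/- Let m = 2h + 1 ≥ 5 be odd and let f₃(x) = x + x^3 + x^{2^{(m+1)/2} + 1}. For the binary sequence s_t = Tr(f₃(α^t + 1)), the minimal polynomial of the sequence is g_s(x) = (x − 1)·m_{α^{−1}}(x)·m_{α^{−3}}(x)·m_{α^{−(2^h+1)}}(x), which has degree 3m + 1; consequently the binary cyclic code C_s has length 2^m − 1 and 𝔽₂-dimension 2^m − 2 − 3m, and its minimum distance is exactly 8 (every nonzero codeword has Hamming weight at least 8, and some codeword has Hamming weight exactly 8). -/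
open Polynomial
open scoped Classical
lemma s5_addpow {F : Type*} [Field F] [CharP F 2] (n : ℕ) (x y : F) :
    (x + y) ^ (2 ^ n) = x ^ (2 ^ n) + y ^ (2 ^ n) := by
  have : Fact (Nat.Prime 2) := ⟨Nat.prime_two⟩
  exact add_pow_char_pow x y 2 n

lemma s5_fix {F : Type*} [Field F] [CharP F 2] (N : ℕ)
    (hN : ∀ x : F, (x ^ N) ^ N = x ^ 2) (x : F) (hx : x ≠ 0) (h : x ^ N = x) : x = 1 := by
  have h1 := hN x
  rw [h, h] at h1
  have : x * (x - 1) = 0 := by linear_combination -h1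
  rcases mul_eq_zero.1 this with h | h
  · exact absurd h hx
  · exact sub_eq_zero.1 h

lemma s5_K1 {F : Type*} [Field F] [CharP F 2] (n : ℕ)
    (hN : ∀ x : F, (x ^ 2 ^ n) ^ 2 ^ n = x ^ 2) (a b e : F) (hab : ¬ (a = 0 ∧ b = 0))
    (T : Finset F) (hT : ∀ t ∈ T, b * t ^ 2 ^ n + a * t = e) : T.card ≤ 2 := by
  by_contra hc
  push Not at hc
  obtain ⟨x, hx, y, hy, z, hz, hxy, hxz, hyz⟩ := Finset.two_lt_card.1 hc
  have h2 : (2 : F) = 0 := CharTwo.two_eq_zero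
  have key : ∀ p : F, p ≠ 0 → b * p ^ 2 ^ n + a * p = 0 → b ≠ 0 := by
    rintro p hp h rfl
    apply hab
    simp [hp] at h
    exact ⟨h, rfl⟩
  have hne : ∀ u v : F, u ≠ v → u + v ≠ 0 := by
    intro u v huv h
    apply huv
    linear_combination h - v * h2
  have hp := hne x y hxy
  have hq := hne x z hxz
  have kp : b * (x + y) ^ 2 ^ n + a * (x + y) = 0 := by
    rw [s5_addpow]; linear_combination hT x hx + hT y hy + e * h2
  have kq : b * (x + z) ^ 2 ^ n + a * (x + z) = 0 := by
    rw [s5_addpow]; linear_combination hT x hx + hT z hz + e * h2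
  have hb := key _ hp kp
  have : (x + y) ^ 2 ^ n * (x + z) = (x + y) * (x + z) ^ 2 ^ n := by
    apply mul_left_cancel₀ hb
    linear_combination (x + z) * kp - (x + y) * kq
  have h1 : (x + y) / (x + z) = 1 := by
    apply s5_fix _ hN _ (div_ne_zero hp hq)
    rw [div_pow, div_eq_div_iff (pow_ne_zero _ hq) hq, this]
  rw [div_eq_one_iff_eq hq] at h1
  exact hyz (add_left_cancel h1)

lemma s5_K2 {F : Type*} [Field F] [CharP F 2] (n : ℕ)
    (hN : ∀ x : F, (x ^ 2 ^ n) ^ 2 ^ n = x ^ 2) (a b c e : F)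
    (hab : ¬ (a = 0 ∧ b = 0 ∧ c = 0))
    (T : Finset F) (hT : ∀ t ∈ T, c * t ^ 2 + b * t ^ 2 ^ n + a * t = e) : T.card ≤ 4 := by
  by_contra hc
  push Not at hc
  have h2 : (2 : F) = 0 := CharTwo.two_eq_zero
  obtain ⟨x, hx, y, hy, hxy⟩ := Finset.one_lt_card.1 (by omega : 1 < T.card)
  have hp : x + y ≠ 0 := by
    intro h
    apply hxy
    linear_combination h - y * h2
  set p := x + y with hpd
  have kp : c * p ^ 2 + b * p ^ 2 ^ n + a * p = 0 := by
    rw [hpd, s5_addpow]; linear_combination hT x hx + hT y hy + e * h2 + c * x * y * h2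
  let φ : F → F := fun t => (t + x) / p + ((t + x) / p) ^ 2 ^ n
  have h1 : T.card ≤ 2 * (T.image φ).card := by
    apply Finset.card_le_mul_card_image
    intro w _
    apply s5_K1 n hN (1 / p) ((1 / p) ^ 2 ^ n) (w + x / p + (x / p) ^ 2 ^ n)
    · simp [hp]
    · intro t ht
      have := (Finset.mem_filter.1 ht).2
      rw [← this]
      simp only [φ, div_pow, s5_addpow, one_pow]
      linear_combination (- x / p - x ^ 2 ^ n / p ^ 2 ^ n) * h2
  have h3 : (T.image φ).card ≤ 2 := by
    apply s5_K1 n hN (a * p) (c * p ^ 2) 0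
    · rintro ⟨h1, h3⟩
      simp [hp] at h1 h3
      subst h1 h3
      simp [hp] at kp
      exact hab ⟨rfl, kp, rfl⟩
    · intro w hw
      obtain ⟨t, ht, rfl⟩ := Finset.mem_image.1 hw
      have kt : c * (t + x) ^ 2 + b * (t + x) ^ 2 ^ n + a * (t + x) = 0 := by
        rw [s5_addpow]; linear_combination hT x hx + hT t ht + e * h2 + c * x * t * h2
      obtain ⟨u, hu⟩ : ∃ u, u = (t + x) / p := ⟨_, rfl⟩
      have hu' : t + x = u * p := by rw [hu]; field_simp
      simp only [φ, ← hu]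
      rw [s5_addpow, hN]
      rw [hu', mul_pow, mul_pow] at kt
      linear_combination kt + u ^ 2 ^ n * kp - b * u ^ 2 ^ n * p ^ 2 ^ n * h2
  omega

lemma s5_dep {F ι : Type*} [Field F] [Fintype ι] (k : ℕ) (hk : Fintype.card ι < 2 * k)
    (r : Fin k → ι → F) (h : ∀ i j, ∑ x, r i x * r j x = 0) :
    ∃ c : Fin k → F, c ≠ 0 ∧ ∀ x, ∑ i, c i * r i x = 0 := by
  by_contra hc
  push Not at hc
  have hli : LinearIndependent F r := by
    rw [Fintype.linearIndependent_iff]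
    intro g hg i
    by_contra hi
    obtain ⟨x, hx⟩ := hc g (fun h => hi (by rw [h]; rfl))
    apply hx
    have := congrFun hg x
    simpa [Finset.sum_apply] using this
  have h1 := LinearIndependent.rank_matrix (M := Matrix.of r) hli
  have h2 := Matrix.rank_add_rank_le_card_of_mul_eq_zero (A := Matrix.of r)
    (B := (Matrix.of r).transpose) (by
      ext i j
      simp [Matrix.mul_apply, h])
  rw [Matrix.rank_transpose, h1] at h2
  simp at h2
  omega

lemma s5_weight {F : Type*} [Field F] [CharP F 2] (n : ℕ)
    (hN : ∀ x : F, (x ^ 2 ^ n) ^ 2 ^ n = x ^ 2) (A : Finset F) (hA : A.Nonempty)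
    (h0 : (A.card : F) = 0) (h1 : ∑ x ∈ A, x = 0) (h3 : ∑ x ∈ A, x ^ 3 = 0)
    (hn : ∑ x ∈ A, x * x ^ 2 ^ n = 0) : 8 ≤ A.card := by
  have : Fact (Nat.Prime 2) := ⟨Nat.prime_two⟩
  by_contra hlt
  push Not at hlt
  have hev : 2 ∣ A.card := (CharP.cast_eq_zero_iff F 2 _).1 h0
  have hpos := hA.card_pos
  have e1 : ∑ x : A, (x : F) = 0 := by rw [Finset.sum_coe_sort A (fun x => x)]; exact h1
  have e3 : ∑ x : A, (x : F) ^ 3 = 0 := by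
    rw [Finset.sum_coe_sort A (fun x => x ^ 3)]; exact h3
  have en : ∑ x : A, (x : F) * (x : F) ^ 2 ^ n = 0 := by
    rw [Finset.sum_coe_sort A (fun x => x * x ^ 2 ^ n)]; exact hn
  have ep : ∀ k, ∑ x : A, (x : F) ^ 2 ^ k = 0 := by
    intro k
    rw [← sum_pow_char_pow 2 k, e1, zero_pow (by positivity)]
  have e0 : ∑ x : A, (1 : F) = 0 := by simp [h0]
  have en2 : ∑ x : A, (x : F) ^ 2 ^ n * (x : F) ^ 2 = 0 := by
    have := sum_pow_char_pow 2 n Finset.univ (fun x : A => (x : F) * (x : F) ^ 2 ^ n)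
    rw [en, zero_pow (by positivity)] at this
    rw [this]
    apply Finset.sum_congr rfl
    intro x _
    rw [mul_pow, hN]
  have es : ∑ x : A, (x : F) * (x : F) = 0 := by
    have := ep 1; simpa [pow_two] using this
  have ess : ∑ x : A, (x : F) ^ 2 * (x : F) ^ 2 = 0 := by
    have := ep 2; simpa [← pow_add] using this
  have enn : ∑ x : A, (x : F) ^ 2 ^ n * (x : F) ^ 2 ^ n = 0 := by
    have := ep (n + 1)
    rw [← this]
    apply Finset.sum_congr rfl
    intro x _
    rw [← pow_add]; congr 1; ring
  have e3' : ∑ x : A, (x : F) * (x : F) ^ 2 = 0 := by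
    rw [← e3]; apply Finset.sum_congr rfl; intros; ring
  have e33 : ∑ x : A, (x : F) ^ 2 * (x : F) = 0 := by
    rw [← e3]; apply Finset.sum_congr rfl; intros; ring
  have en' : ∑ x : A, (x : F) ^ 2 ^ n * (x : F) = 0 := by
    rw [← en]; apply Finset.sum_congr rfl; intros; ring
  have en2' : ∑ x : A, (x : F) ^ 2 * (x : F) ^ 2 ^ n = 0 := by
    rw [← en2]; apply Finset.sum_congr rfl; intros; ring
  have e2 : ∑ x : A, (x : F) ^ 2 = 0 := by simpa using ep 1
  have epn := ep n
  have hcase : A.card = 2 ∨ A.card = 4 ∨ A.card = 6 := by omega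
  rcases hcase with hc | hc | hc
  · obtain ⟨c, hc0, hcx⟩ := s5_dep (ι := A) 2 (by simp [hc])
      (fun i x => (![1, (x : F)] : Fin 2 → F) i) (by
        intro i j
        fin_cases i <;> fin_cases j <;> simp [-Finset.univ_eq_attach, e1, es, h0])
    have hxx : ∀ x ∈ A, c 0 + c 1 * x = 0 := by
      intro x hx; have := hcx ⟨x, hx⟩; simpa [Fin.sum_univ_two] using this
    obtain ⟨x, hx, y, hy, hxy⟩ := Finset.one_lt_card.1 (by omega : 1 < A.card)
    have : c 1 * (x - y) = 0 := by linear_combination hxx x hx - hxx y hy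
    have h11 : c 1 = 0 := by
      rcases mul_eq_zero.1 this with h | h
      · exact h
      · exact absurd (sub_eq_zero.1 h) hxy
    have h10 : c 0 = 0 := by simpa [h11] using hxx x hx
    exact hc0 (by ext i; fin_cases i <;> simp [h11, h10])
  · obtain ⟨c, hc0, hcx⟩ := s5_dep (ι := A) 3 (by simp [hc])
      (fun i x => (![1, (x : F), (x : F) ^ 2 ^ n] : Fin 3 → F) i) (by
        intro i j
        fin_cases i <;> fin_cases j <;> simp [-Finset.univ_eq_attach, e1, es, h0, epn, en, en', enn])
    have hxx : ∀ x ∈ A, c 0 + c 1 * x + c 2 * x ^ 2 ^ n = 0 := by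
      intro x hx; have := hcx ⟨x, hx⟩; simpa [Fin.sum_univ_three] using this
    have := s5_K1 n hN (c 1) (c 2) (- c 0) (by
      rintro ⟨h11, h12⟩
      obtain ⟨x, hx⟩ := hA
      have h10 : c 0 = 0 := by simpa [h11, h12] using hxx x hx
      exact hc0 (by ext i; fin_cases i <;> simp [h11, h10, h12])) A (by
        intro x hx; linear_combination hxx x hx)
    omega
  · obtain ⟨c, hc0, hcx⟩ := s5_dep (ι := A) 4 (by simp [hc])
      (fun i x => (![1, (x : F), (x : F) ^ 2 ^ n, (x : F) ^ 2] : Fin 4 → F) i) (by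
        intro i j
        fin_cases i <;> fin_cases j <;>
          simp [-Finset.univ_eq_attach, e1, es, h0, epn, en, en', enn, e2, e3', e33, en2, en2', ess])
    have hxx : ∀ x ∈ A, c 0 + c 1 * x + c 2 * x ^ 2 ^ n + c 3 * x ^ 2 = 0 := by
      intro x hx; have := hcx ⟨x, hx⟩; simpa [Fin.sum_univ_four] using this
    have := s5_K2 n hN (c 1) (c 2) (c 3) (- c 0) (by
      rintro ⟨h11, h12, h13⟩
      obtain ⟨x, hx⟩ := hA
      have h10 : c 0 = 0 := by simpa [h11, h12, h13] using hxx x hx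
      exact hc0 (by ext i; fin_cases i <;> simp [h11, h10, h12, h13])) A (by
        intro x hx; linear_combination hxx x hx)
    omega

noncomputable def s5E (m h : ℕ) {F : Type*} [Field F] (a : F) : Option (Fin 3 × Fin m) → F
  | none => 1
  | some (k, i) => (a ^ ((![1, 3, 2 ^ h + 1] : Fin 3 → ℕ) k)) ^ 2 ^ (i : ℕ)

def s5D (m h : ℕ) : Option (Fin 3 × Fin m) → Finset ℕ
  | none => ∅
  | some (k, i) => (![{(i : ℕ)}, {(i : ℕ), ((i : ℕ) + 1) % m}, {(i : ℕ), ((i : ℕ) + h) % m}] :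
      Fin 3 → Finset ℕ) k

lemma s5_pmod {F : Type*} [Field F] (m : ℕ) (hq : ∀ x : F, x ^ 2 ^ m = x) (x : F) (j : ℕ) :
    x ^ 2 ^ (j % m) = x ^ 2 ^ j := by
  have : ∀ k, x ^ 2 ^ (j % m + m * k) = x ^ 2 ^ (j % m) := by
    intro k
    induction k with
    | zero => simp
    | succ k ih =>
      rw [mul_add, mul_one, ← add_assoc, pow_add 2, pow_mul, hq, ih]
  conv_rhs => rw [← Nat.mod_add_div j m]
  rw [this]

lemma s5_ne (m r i : ℕ) (hr : 0 < r) (hrm : r < m) (hi : i < m) :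
    (i + r) % m < m ∧ ((i + r) % m = i + r ∨ (i + r) % m + m = i + r) := by
  refine ⟨Nat.mod_lt _ (by omega), ?_⟩
  by_cases h : i + r < m
  · left; exact Nat.mod_eq_of_lt h
  · right
    have : (i + r) % m = i + r - m := by
      rw [Nat.mod_eq_sub_mod (by omega), Nat.mod_eq_of_lt (by omega)]
    omega

lemma s5_E_eq {F : Type*} [Field F] (m h : ℕ) (hm : m = 2 * h + 1) (hm5 : 5 ≤ m)
    (hq : ∀ x : F, x ^ 2 ^ m = x) (a : F) (o : Option (Fin 3 × Fin m)) :
    s5E m h a o = a ^ (∑ j ∈ s5D m h o, 2 ^ j) := by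
  rcases o with _ | ⟨k, i⟩
  · simp [s5E, s5D]
  · have h1 := s5_ne m 1 i (by omega) (by omega) i.2
    have h2 := s5_ne m h i (by omega) (by omega) i.2
    fin_cases k
    · simp [s5E, s5D]
    · have : (i : ℕ) ≠ ((i : ℕ) + 1) % m := by omega
      simp only [s5E, s5D]
      simp [Finset.sum_pair this, pow_add, s5_pmod m hq]
      ring
    · have : (i : ℕ) ≠ ((i : ℕ) + h) % m := by omega
      simp only [s5E, s5D]
      simp [Finset.sum_pair this, pow_add, s5_pmod m hq]
      ring

lemma s5_D_sub (m h : ℕ) (hm : m = 2 * h + 1) (hm5 : 5 ≤ m) (o : Option (Fin 3 × Fin m)) :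
    s5D m h o ⊆ Finset.range m ∧ (s5D m h o).card ≤ 2 := by
  rcases o with _ | ⟨k, i⟩
  · simp [s5D]
  · have h1 := s5_ne m 1 i (by omega) (by omega) i.2
    have h2 := s5_ne m h i (by omega) (by omega) i.2
    fin_cases k
    · simp [s5D]
    · refine ⟨?_, by simpa [s5D] using Finset.card_le_two⟩
      intro x hx
      simp [s5D] at hx
      rw [Finset.mem_range]
      have := i.2
      omega
    · refine ⟨?_, by simpa [s5D] using Finset.card_le_two⟩
      intro x hx
      simp [s5D] at hx
      rw [Finset.mem_range]
      have := i.2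
      omega

lemma s5_pair {a b c d : ℕ} (h : ({a, b} : Finset ℕ) = {c, d}) :
    (a = c ∧ b = d) ∨ (a = d ∧ b = c) := by
  have h1 : a ∈ ({c, d} : Finset ℕ) := by rw [← h]; simp
  have h2 : b ∈ ({c, d} : Finset ℕ) := by rw [← h]; simp
  have h3 : c ∈ ({a, b} : Finset ℕ) := by rw [h]; simp
  have h4 : d ∈ ({a, b} : Finset ℕ) := by rw [h]; simp
  simp at h1 h2 h3 h4
  omega

lemma s5_single {a c d : ℕ} (h : ({a} : Finset ℕ) = {c, d}) : c = d := by
  have h3 : c ∈ ({a} : Finset ℕ) := by rw [h]; simp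
  have h4 : d ∈ ({a} : Finset ℕ) := by rw [h]; simp
  simp at h3 h4
  omega

lemma s5_D_inj (m h : ℕ) (hm : m = 2 * h + 1) (hm5 : 5 ≤ m) :
    Function.Injective (s5D m h) := by
  intro o o' hoo
  rcases o with _ | ⟨k, i⟩ <;> rcases o' with _ | ⟨k', i'⟩
  · rfl
  · exfalso
    fin_cases k' <;> simp [s5D] at hoo <;> exact absurd hoo.symm (Finset.insert_ne_empty _ _)
  · exfalso
    fin_cases k <;> simp [s5D] at hoo
  · have h1 := s5_ne m 1 i (by omega) (by omega) i.2
    have h2 := s5_ne m h i (by omega) (by omega) i.2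
    have h1' := s5_ne m 1 i' (by omega) (by omega) i'.2
    have h2' := s5_ne m h i' (by omega) (by omega) i'.2
    have hi := i.2
    have hi' := i'.2
    fin_cases k <;> fin_cases k' <;> simp [s5D] at hoo
    · have : i = i' := by ext; simpa using hoo
      rw [this]
    · have := s5_single hoo; omega
    · have := s5_single hoo; omega
    · have := s5_single hoo.symm; omega
    · have := s5_pair hoo
      have : i = i' := by ext; omega
      rw [this]
    · have := s5_pair hoo; omega
    · have := s5_single hoo.symm; omega
    · have := s5_pair hoo; omega
    · have := s5_pair hoo
      have : i = i' := by ext; omega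
      rw [this]

lemma s5_E_inj {F : Type*} [Field F] (m h : ℕ) (hm : m = 2 * h + 1) (hm5 : 5 ≤ m)
    (hq : ∀ x : F, x ^ 2 ^ m = x) (a : F) (ha : orderOf a = 2 ^ m - 1) :
    Function.Injective (s5E m h a) := by
  have hs : ∑ j ∈ Finset.range m, 2 ^ j = 2 ^ m - 1 := by
    have := Nat.geomSum_eq (le_refl 2) m
    simpa using this
  have hlt : ∀ o, ∑ j ∈ s5D m h o, 2 ^ j < orderOf a := by
    intro o
    obtain ⟨h1, h2⟩ := s5_D_sub m h hm hm5 o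
    rw [ha, ← hs]
    apply lt_of_le_of_ne
    · exact Finset.sum_le_sum_of_subset h1
    · intro he
      have := Finset.geomSum_injective (le_refl 2) he
      rw [this] at h2
      simp at h2
      omega
  intro o o' hoo
  rw [s5_E_eq m h hm hm5 hq, s5_E_eq m h hm hm5 hq] at hoo
  have := pow_injOn_Iio_orderOf (hlt o) (hlt o') hoo
  exact s5_D_inj m h hm hm5 (Finset.geomSum_injective (le_refl 2) this)

lemma s5_Tadd {F : Type*} [Field F] [CharP F 2] (m : ℕ) (x y : F) :
    ∑ i ∈ Finset.range m, (x + y) ^ 2 ^ i =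
      ∑ i ∈ Finset.range m, x ^ 2 ^ i + ∑ i ∈ Finset.range m, y ^ 2 ^ i := by
  rw [← Finset.sum_add_distrib]
  exact Finset.sum_congr rfl fun i _ => s5_addpow i x y

lemma s5_Tsq {F : Type*} [Field F] (m : ℕ) (hq : ∀ x : F, x ^ 2 ^ m = x) (x : F) (k : ℕ) :
    ∑ i ∈ Finset.range m, (x ^ 2 ^ k) ^ 2 ^ i = ∑ i ∈ Finset.range m, x ^ 2 ^ i := by
  induction k with
  | zero => simp
  | succ k ih =>
    rw [← ih]
    generalize hz : x ^ 2 ^ k = z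
    have : x ^ 2 ^ (k + 1) = z ^ 2 := by rw [← hz, pow_succ, pow_mul]
    rw [this]
    have h1 := Finset.sum_range_succ (fun i => z ^ 2 ^ i) m
    rw [Finset.sum_range_succ'] at h1
    simp only [hq, pow_zero, pow_one] at h1
    have h2 := add_right_cancel h1
    rw [← h2]
    apply Finset.sum_congr rfl
    intro i _
    rw [← pow_mul, pow_succ, mul_comm]

lemma s5_trace_sum {F : Type*} [Field F] [CharP F 2] (m h : ℕ) (hm : m = 2 * h + 1)
    (hq : ∀ x : F, x ^ 2 ^ m = x) (y : F) :
    ∑ i ∈ Finset.range m, ((y + 1) + (y + 1) ^ 3 + (y + 1) ^ (2 ^ ((m + 1) / 2) + 1)) ^ 2 ^ i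
      = ∑ o, s5E m h y o := by
  have h2 : (2 : F) = 0 := CharTwo.two_eq_zero
  have hh : (m + 1) / 2 = h + 1 := by omega
  have e1 : (y + 1) + (y + 1) ^ 3 + (y + 1) ^ (2 ^ ((m + 1) / 2) + 1)
      = y ^ 2 ^ 0 + (y ^ 3 + (y ^ 2 ^ 1 + (y ^ 2 ^ (h + 1) + ((y ^ (2 ^ h + 1)) ^ 2 ^ (h + 1) + 1)))) := by
    have : (y ^ (2 ^ h + 1)) ^ 2 ^ (h + 1) = y * y ^ 2 ^ (h + 1) := by
      rw [pow_succ, mul_pow, ← pow_mul, ← pow_add 2, show h + (h + 1) = m by omega, hq]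
    rw [this, hh, pow_succ (y + 1) (2 ^ (h + 1)), s5_addpow]
    simp only [one_pow, pow_zero, pow_one]
    linear_combination (y ^ 2 + 2 * y + 1) * h2
  rw [e1]
  simp only [s5_Tadd, s5_Tsq m hq]
  simp only [Fintype.sum_option, Fintype.sum_prod_type, Fin.sum_univ_three, s5E,
    Finset.sum_range, one_pow]
  have hmF : (m : F) = 1 := by rw [hm]; push_cast; linear_combination h * h2
  simp [hmF]
  linear_combination (∑ i : Fin m, y ^ 2 ^ (i : ℕ)) * h2

lemma s5_geom {F : Type*} [Field F] [CharP F 2] (m : ℕ) (hm : 0 < m) (y : F)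
    (hy : y ^ (2 ^ m - 1) = 1) :
    ∑ t ∈ Finset.range (2 ^ m - 1), y ^ t = if y = 1 then 1 else 0 := by
  split_ifs with h
  · subst h
    have h2 : (2 : F) = 0 := CharTwo.two_eq_zero
    simp
    rw [h2, zero_pow (by omega)]
    linear_combination -h2
  · rw [geom_sum_eq h, hy]; simp

lemma s5_L1 {F : Type*} [Field F] [Algebra (ZMod 2) F] (p : (ZMod 2)[X]) (x : F)
    (hx : aeval x p = 0) (i : ℕ) : aeval (x ^ 2 ^ i) p = 0 := by
  have : Fact (Nat.Prime 2) := ⟨Nat.prime_two⟩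
  induction i with
  | zero => simpa using hx
  | succ i ih =>
    have := Polynomial.aeval_algHom_apply (FiniteField.frobeniusAlgHom (ZMod 2) F) (x ^ 2 ^ i) p
    rw [ih] at this
    simpa [← pow_mul, ← pow_succ, ZMod.card] using this

lemma s5_ordinv {F : Type*} [Field F] (a : F) : orderOf a⁻¹ = orderOf a := by
  apply orderOf_eq_orderOf_iff.2
  intro n
  rw [inv_pow, inv_eq_one]

lemma s5_q (m : ℕ) (hm : m ≠ 0) (x : GaloisField 2 m) : x ^ 2 ^ m = x := by
  let _ : Fintype (GaloisField 2 m) := Fintype.ofFinite _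
  have := FiniteField.pow_card (K := GaloisField 2 m) x
  rwa [Fintype.card_eq_nat_card, GaloisField.card 2 m hm] at this

lemma s5_q1 (m : ℕ) (hm : m ≠ 0) (x : GaloisField 2 m) (hx : x ≠ 0) : x ^ (2 ^ m - 1) = 1 := by
  have h1 := s5_q m hm x
  have h2 : 2 ^ m = (2 ^ m - 1) + 1 := by have := Nat.one_le_two_pow (n := m); omega
  rw [h2, pow_succ] at h1
  exact mul_right_cancel₀ hx (by rw [h1, one_mul])

lemma s5_Spoly (m h : ℕ) (hm : m = 2 * h + 1) (hm5 : 5 ≤ m)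
    (α : GaloisField 2 m) (hα : α ≠ 0)
    (f : GaloisField 2 m → GaloisField 2 m)
    (hf : ∀ x, f x = x + x ^ 3 + x ^ (2 ^ ((m + 1) / 2) + 1)) (β : GaloisField 2 m)
    (hβ : β ≠ 0) :
    aeval β (traceSeqPoly m α f) = ∑ o, if s5E m h α o * β = 1 then (1 : GaloisField 2 m) else 0 := by
  have hq := s5_q m (by omega)
  have hE : ∀ o, s5E m h α o ≠ 0 := by
    intro o
    rw [s5_E_eq m h hm hm5 hq]
    exact pow_ne_zero _ hα
  have h1 : ∀ t, algebraMap (ZMod 2) (GaloisField 2 m)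
      (Algebra.trace (ZMod 2) (GaloisField 2 m) (f (α ^ t + 1))) = ∑ o, (s5E m h α o) ^ t := by
    intro t
    rw [FiniteField.algebraMap_trace_eq_sum_pow, GaloisField.finrank 2 (by omega), Nat.card_zmod, hf,
      s5_trace_sum m h hm hq]
    apply Finset.sum_congr rfl
    intro o _
    rw [s5_E_eq m h hm hm5 hq, s5_E_eq m h hm hm5 hq, ← pow_mul, ← pow_mul, mul_comm]
  simp only [traceSeqPoly, map_sum, map_mul, aeval_C, map_pow, aeval_X, h1, Finset.sum_mul]
  rw [Finset.sum_comm]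
  apply Finset.sum_congr rfl
  intro o _
  rw [← s5_geom m (by omega) _ (s5_q1 m (by omega) _ (mul_ne_zero (hE o) hβ))]
  simp only [mul_pow]

lemma s5_sep (m : ℕ) (hm : m ≠ 0) : (X ^ (2 ^ m - 1) - 1 : (ZMod 2)[X]).Separable := by
  rw [X_pow_sub_one_separable_iff]
  have : ((2 ^ m - 1 : ℕ) : ZMod 2) = 1 := by
    rw [Nat.cast_sub Nat.one_le_two_pow]
    push_cast
    have h2 : (2 : ZMod 2) = 0 := rfl
    rw [h2, zero_pow hm]
    rfl
  rw [this]
  exact one_ne_zero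

lemma s5_pne (m : ℕ) (hm : m ≠ 0) : (X ^ (2 ^ m - 1) - 1 : (ZMod 2)[X]) ≠ 0 :=
  X_pow_sub_C_ne_zero (Nat.sub_pos_of_lt (Nat.one_lt_two_pow hm)) 1

lemma s5_gmul (m : ℕ) (hm : m ≠ 0) (α : GaloisField 2 m) (f : GaloisField 2 m → GaloisField 2 m) :
    genPoly m α f * EuclideanDomain.gcd (X ^ (2 ^ m - 1) - 1) (traceSeqPoly m α f)
      = X ^ (2 ^ m - 1) - 1 := by
  rw [mul_comm, genPoly]
  apply EuclideanDomain.mul_div_cancel'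
  · intro h
    exact s5_pne m hm (EuclideanDomain.gcd_eq_zero_iff.1 h).1
  · exact EuclideanDomain.gcd_dvd_left _ _

lemma s5_groot (m : ℕ) (hm : m ≠ 0) (α : GaloisField 2 m) (f : GaloisField 2 m → GaloisField 2 m)
    (β : GaloisField 2 m) :
    aeval β (genPoly m α f) = 0 ↔ β ≠ 0 ∧ aeval β (traceSeqPoly m α f) ≠ 0 := by
  have hmul := s5_gmul m hm α f
  set g := genPoly m α f
  set d := EuclideanDomain.gcd (X ^ (2 ^ m - 1) - 1) (traceSeqPoly m α f) with hd
  have hv : 2 ^ m - 1 ≠ 0 := (Nat.sub_pos_of_lt (Nat.one_lt_two_pow hm)).ne'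
  have hev : aeval β g * aeval β d = β ^ (2 ^ m - 1) - 1 := by
    rw [← map_mul, hmul]; simp
  have hcop : IsCoprime g d := Separable.isCoprime (by rw [hmul]; exact s5_sep m hm)
  constructor
  · intro h0
    constructor
    · rintro rfl
      rw [h0, zero_pow hv] at hev
      simp at hev
    · intro hS
      have hβ : β ^ (2 ^ m - 1) - 1 = 0 := by rw [← hev, h0, zero_mul]
      have hd0 : aeval β d = 0 := by
        rw [hd, EuclideanDomain.gcd_eq_gcd_ab]
        simp [hS, hβ]
      obtain ⟨u, w, huw⟩ := hcop
      have := congrArg (aeval β) huw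
      simp [h0, hd0] at this
  · rintro ⟨hβ, hS⟩
    rw [s5_q1 m hm β hβ, sub_self] at hev
    rcases mul_eq_zero.1 hev with h | h
    · exact h
    · exfalso
      apply hS
      obtain ⟨w, hw⟩ := EuclideanDomain.gcd_dvd_right (X ^ (2 ^ m - 1) - 1) (traceSeqPoly m α f)
      rw [hw, map_mul, ← hd, h, zero_mul]

lemma s5_gdvd (m : ℕ) (hm : m ≠ 0) (α : GaloisField 2 m) (f : GaloisField 2 m → GaloisField 2 m)
    (q : (ZMod 2)[X]) (hq : ∀ β : GaloisField 2 m, aeval β (genPoly m α f) = 0 → aeval β q = 0) :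
    genPoly m α f ∣ q := by
  by_cases hq0 : q = 0
  · rw [hq0]; exact dvd_zero _
  have hmul := s5_gmul m hm α f
  have hgp : genPoly m α f ∣ X ^ (2 ^ m - 1) - 1 := ⟨_, hmul.symm⟩
  have hg0 : genPoly m α f ≠ 0 := ne_zero_of_dvd_ne_zero (s5_pne m hm) hgp
  set g := genPoly m α f
  have hgsep : g.Separable := (s5_sep m hm).of_dvd hgp
  rw [← map_dvd_map' (algebraMap (ZMod 2) (GaloisField 2 m))]
  have hspl : (g.map (algebraMap (ZMod 2) (GaloisField 2 m))).Splits := by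
    let _ : Fintype (GaloisField 2 m) := Fintype.ofFinite _
    have h1 := FiniteField.splits_X_pow_card_sub_X 2 (K := GaloisField 2 m)
    rw [Fintype.card_eq_nat_card, GaloisField.card 2 m hm] at h1
    refine h1.of_dvd ?_ ?_
    · rw [Polynomial.map_ne_zero_iff (algebraMap (ZMod 2) (GaloisField 2 m)).injective]
      exact FiniteField.X_pow_card_pow_sub_X_ne_zero _ hm one_lt_two
    · rw [map_dvd_map']
      refine hgp.trans ⟨X, ?_⟩
      have h2 : 2 ^ m = (2 ^ m - 1) + 1 := by have := Nat.one_le_two_pow (n := m); omega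
      rw [sub_mul, ← pow_succ, ← h2, one_mul]
  apply hspl.dvd_of_roots_le_roots
  · rwa [Polynomial.map_ne_zero_iff (algebraMap (ZMod 2) (GaloisField 2 m)).injective]
  · rw [Multiset.le_iff_subset (nodup_roots hgsep.map)]
    intro β hβ
    rw [mem_roots_map hg0] at hβ
    rw [mem_roots_map hq0]
    exact hq β hβ

lemma s5_monic (g : (ZMod 2)[X]) (hg : g ≠ 0) : g.Monic := by
  have : ∀ a : ZMod 2, a ≠ 0 → a = 1 := by decide
  exact this _ (leadingCoeff_ne_zero.2 hg)

lemma s5_groots (m h : ℕ) (hm : m = 2 * h + 1) (hm5 : 5 ≤ m)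
    (α : GaloisField 2 m) (hα : orderOf α = 2 ^ m - 1)
    (f : GaloisField 2 m → GaloisField 2 m)
    (hf : ∀ x, f x = x + x ^ 3 + x ^ (2 ^ ((m + 1) / 2) + 1)) (β : GaloisField 2 m) :
    aeval β (genPoly m α f) = 0 ↔ ∃ o, β = s5E m h α⁻¹ o := by
  have hq := s5_q m (by omega)
  have hα0 : α ≠ 0 := by
    rintro rfl
    rw [orderOf_zero] at hα
    have := Nat.one_lt_two_pow (n := m) (by omega)
    omega
  have hinv : ∀ o, s5E m h α⁻¹ o = (s5E m h α o)⁻¹ := by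
    intro o
    rw [s5_E_eq m h hm hm5 hq, s5_E_eq m h hm hm5 hq, inv_pow]
  have hE : ∀ o, s5E m h α o ≠ 0 := by
    intro o
    rw [s5_E_eq m h hm hm5 hq]
    exact pow_ne_zero _ hα0
  rw [s5_groot m (by omega)]
  constructor
  · rintro ⟨hβ, hS⟩
    rw [s5_Spoly m h hm hm5 α hα0 f hf β hβ] at hS
    obtain ⟨o, _, ho⟩ := Finset.exists_ne_zero_of_sum_ne_zero hS
    refine ⟨o, ?_⟩
    rw [hinv]
    have : s5E m h α o * β = 1 := by
      by_contra hc
      simp [hc] at ho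
    exact eq_inv_of_mul_eq_one_right this
  · rintro ⟨o, rfl⟩
    have h0 : s5E m h α⁻¹ o ≠ 0 := by rw [hinv]; exact inv_ne_zero (hE o)
    refine ⟨h0, ?_⟩
    rw [s5_Spoly m h hm hm5 α hα0 f hf _ h0, Finset.sum_eq_single o]
    · rw [hinv, mul_inv_cancel₀ (hE o)]; simp
    · intro o' _ hne
      rw [hinv, if_neg]
      intro hc
      apply hne
      apply s5_E_inj m h hm hm5 hq α hα
      exact eq_of_div_eq_one (by rw [div_eq_mul_inv]; exact hc)
    · simp

lemma s5_gen (m h : ℕ) (hm : m = 2 * h + 1) (hm5 : 5 ≤ m)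
    (α : GaloisField 2 m) (hα : orderOf α = 2 ^ m - 1)
    (f : GaloisField 2 m → GaloisField 2 m)
    (hf : ∀ x, f x = x + x ^ 3 + x ^ (2 ^ ((m + 1) / 2) + 1)) :
    genPoly m α f =
      (X - 1) * minpoly (ZMod 2) α⁻¹ * minpoly (ZMod 2) (α⁻¹ ^ 3) *
        minpoly (ZMod 2) (α⁻¹ ^ (2 ^ h + 1)) ∧
    (genPoly m α f).natDegree = 3 * m + 1 := by
  have hm0 : m ≠ 0 := by omega
  have hq := s5_q m hm0
  have hroots := s5_groots m h hm hm5 α hα f hf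
  have hg0 : genPoly m α f ≠ 0 :=
    ne_zero_of_dvd_ne_zero (s5_pne m hm0) ⟨_, (s5_gmul m hm0 α f).symm⟩
  have hinj : Function.Injective (s5E m h α⁻¹) :=
    s5_E_inj m h hm hm5 hq α⁻¹ (by rw [s5_ordinv]; exact hα)
  have hdeg : 3 * m + 1 ≤ (genPoly m α f).natDegree := by
    have h1 := card_le_degree_of_subset_roots
      (p := (genPoly m α f).map (algebraMap (ZMod 2) (GaloisField 2 m)))
      (Z := Finset.univ.image (s5E m h α⁻¹)) (by
        intro β hβ
        rw [mem_roots_map hg0]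
        simp at hβ
        obtain ⟨o, rfl⟩ := hβ
        exact (hroots _).2 ⟨o, rfl⟩)
    rw [Finset.card_image_of_injective _ hinj, natDegree_map] at h1
    simpa using h1
  have hInteg : ∀ x : GaloisField 2 m, IsIntegral (ZMod 2) x := fun x => Algebra.IsIntegral.isIntegral x
  have hmd : ∀ x : GaloisField 2 m, (minpoly (ZMod 2) x).natDegree ≤ m := by
    intro x
    have := minpoly.natDegree_le (A := ZMod 2) x
    rwa [GaloisField.finrank 2 hm0] at this
  have hX1 : (X - 1 : (ZMod 2)[X]).Monic := monic_X_sub_C 1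
  have hXd : (X - 1 : (ZMod 2)[X]).natDegree = 1 := natDegree_X_sub_C 1
  have hmon := ((hX1.mul (minpoly.monic (hInteg α⁻¹))).mul (minpoly.monic (hInteg (α⁻¹ ^ 3)))).mul
    (minpoly.monic (hInteg (α⁻¹ ^ (2 ^ h + 1))))
  set P := (X - 1) * minpoly (ZMod 2) α⁻¹ * minpoly (ZMod 2) (α⁻¹ ^ 3) *
        minpoly (ZMod 2) (α⁻¹ ^ (2 ^ h + 1)) with hP
  have hPd : P.natDegree ≤ 3 * m + 1 := by
    have a1 := natDegree_mul_le (p := (X - 1) * minpoly (ZMod 2) α⁻¹ * minpoly (ZMod 2) (α⁻¹ ^ 3))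
      (q := minpoly (ZMod 2) (α⁻¹ ^ (2 ^ h + 1)))
    have a2 := natDegree_mul_le (p := (X - 1) * minpoly (ZMod 2) α⁻¹)
      (q := minpoly (ZMod 2) (α⁻¹ ^ 3))
    have a3 := natDegree_mul_le (p := (X - 1)) (q := minpoly (ZMod 2) α⁻¹)
    rw [← hP] at a1
    have b1 := hmd α⁻¹
    have b2 := hmd (α⁻¹ ^ 3)
    have b3 := hmd (α⁻¹ ^ (2 ^ h + 1))
    omega
  have hdvd : genPoly m α f ∣ P := by
    apply s5_gdvd m hm0
    intro β hβ
    obtain ⟨o, rfl⟩ := (hroots β).1 hβ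
    rcases o with _ | ⟨k, i⟩
    · simp [hP, s5E]
    · have hk := fun x : GaloisField 2 m =>
        s5_L1 (minpoly (ZMod 2) x) x (minpoly.aeval _ _) (i : ℕ)
      rw [hP, map_mul, map_mul, map_mul]
      fin_cases k
      · have := hk α⁻¹
        simp only [s5E]
        simp only [Fin.zero_eta, Matrix.cons_val_zero, pow_one]
        rw [this]; ring
      · have := hk (α⁻¹ ^ 3)
        simp only [s5E]
        simp only [Fin.mk_one, Matrix.cons_val_one, Matrix.cons_val_zero]
        rw [this]; ring
      · have := hk (α⁻¹ ^ (2 ^ h + 1))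
        simp only [s5E]
        simp only [Fin.reduceFinMk, Matrix.cons_val]
        rw [this]; ring
  have heq := eq_of_monic_of_dvd_of_natDegree_le (s5_monic _ hg0) hmon hdvd (hPd.trans hdeg)
  refine ⟨heq.symm, le_antisymm ?_ hdeg⟩
  rw [← heq]; exact hPd

lemma s5_finrank (g : (ZMod 2)[X]) (hg : g ≠ 0) (n : ℕ) (hn : g.natDegree ≤ n) :
    Module.finrank (ZMod 2) ↥(degreeLT (ZMod 2) n ⊓ (Ideal.span {g}).restrictScalars (ZMod 2))
      = n - g.natDegree := by
  have hle : (degreeLT (ZMod 2) (n - g.natDegree)).map (LinearMap.mulLeft (ZMod 2) g)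
      = degreeLT (ZMod 2) n ⊓ (Ideal.span {g}).restrictScalars (ZMod 2) := by
    ext p
    simp only [Submodule.mem_map, Submodule.mem_inf, Submodule.restrictScalars_mem,
      Ideal.mem_span_singleton, LinearMap.mulLeft_apply, mem_degreeLT]
    have key : ∀ q : (ZMod 2)[X], q.degree < ((n - g.natDegree : ℕ) : WithBot ℕ) ↔
        (g * q).degree < (n : WithBot ℕ) := by
      intro q
      by_cases hq : q = 0
      · subst hq; simp
      · rw [degree_mul, degree_eq_natDegree hg, degree_eq_natDegree hq, ← Nat.cast_add,
          Nat.cast_lt, Nat.cast_lt]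
        omega
    constructor
    · rintro ⟨q, hq, rfl⟩
      exact ⟨(key q).1 hq, dvd_mul_right _ _⟩
    · rintro ⟨h1, q, rfl⟩
      exact ⟨q, (key q).2 h1, rfl⟩
  have hinj : Function.Injective (LinearMap.mulLeft (ZMod 2) g) := by
    intro a b hab
    exact mul_left_cancel₀ hg hab
  rw [← hle, ← (Submodule.equivMapOfInjective _ hinj _).finrank_eq,
    (degreeLTEquiv (ZMod 2) _).finrank_eq]
  simp

lemma s5_aeval {F : Type*} [Field F] [Algebra (ZMod 2) F] (c : (ZMod 2)[X]) (x : F) :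
    aeval x c = ∑ t ∈ c.support, x ^ t := by
  have h1 : ∀ a : ZMod 2, a ≠ 0 → a = 1 := by decide
  rw [aeval_def, eval₂_eq_sum, sum_def]
  apply Finset.sum_congr rfl
  intro t ht
  rw [h1 _ (mem_support_iff.1 ht)]
  simp

lemma s5_lower (m h : ℕ) (hm : m = 2 * h + 1) (hm5 : 5 ≤ m)
    (α : GaloisField 2 m) (hα : orderOf α = 2 ^ m - 1)
    (f : GaloisField 2 m → GaloisField 2 m)
    (hf : ∀ x, f x = x + x ^ 3 + x ^ (2 ^ ((m + 1) / 2) + 1))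
    (c : (ZMod 2)[X]) (hc0 : c ≠ 0) (hcd : c.degree < ((2 ^ m - 1 : ℕ) : WithBot ℕ))
    (hc : genPoly m α f ∣ c) : 8 ≤ c.support.card := by
  have hm0 : m ≠ 0 := by omega
  have hq := s5_q m hm0
  have hroots := s5_groots m h hm hm5 α hα f hf
  have hγ : orderOf α⁻¹ = 2 ^ m - 1 := by rw [s5_ordinv]; exact hα
  set γ := α⁻¹ with hγd
  have hinj : Set.InjOn (fun t : ℕ => γ ^ t) c.support := by
    have hlt : ∀ t ∈ c.support, t ∈ Set.Iio (orderOf γ) := by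
      intro t ht
      have := (le_degree_of_mem_supp t ht).trans_lt hcd
      rw [hγ]
      exact_mod_cast this
    intro s hs t ht hst
    exact pow_injOn_Iio_orderOf (hlt s hs) (hlt t ht) hst
  have hz : ∀ o, aeval (s5E m h γ o) c = 0 := by
    intro o
    obtain ⟨w, rfl⟩ := hc
    rw [map_mul, (hroots _).2 ⟨o, rfl⟩, zero_mul]
  have hsum : ∀ e : ℕ, ∑ x ∈ c.support.image (fun t : ℕ => γ ^ t), x ^ e = aeval (γ ^ e) c := by
    intro e
    rw [Finset.sum_image hinj, s5_aeval]
    apply Finset.sum_congr rfl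
    intro t _
    rw [← pow_mul, ← pow_mul, mul_comm]
  have hcard := Finset.card_image_of_injOn hinj
  rw [← hcard]
  apply s5_weight (h + 1)
  · intro x
    rw [← pow_mul, ← pow_add, show h + 1 + (h + 1) = m + 1 by omega, pow_succ, pow_mul, hq]
  · exact (support_nonempty.2 hc0).image _
  · have h0 := hsum 0
    have h1 := hz none
    simp only [s5E] at h1
    rw [pow_zero, h1] at h0
    simpa using h0
  · have h0 := hsum 1
    have h1 := hz (some (0, ⟨0, by omega⟩))
    simp [s5E] at h1
    rw [pow_one, h1] at h0
    simpa using h0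
  · have h0 := hsum 3
    have h1 := hz (some (1, ⟨0, by omega⟩))
    simp [s5E] at h1
    rw [h1] at h0
    exact h0
  · have h0 := hsum (2 ^ (h + 1) + 1)
    have h1 := hz (some (2, ⟨h + 1, by omega⟩))
    simp [s5E] at h1
    have h2 : (γ ^ (2 ^ h + 1)) ^ 2 ^ (h + 1) = γ ^ (2 ^ (h + 1) + 1) := by
      rw [pow_succ γ (2 ^ h), mul_pow, ← pow_mul, ← pow_add 2, show h + (h + 1) = m by omega, hq]
      ring
    rw [h2] at h1
    rw [h1] at h0
    rw [← h0]
    apply Finset.sum_congr rfl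
    intro x _
    ring

lemma s5_indep (m h : ℕ) (hm : m = 2 * h + 1) (hm5 : 5 ≤ m)
    (α : GaloisField 2 m) (hα : orderOf α = 2 ^ m - 1) (q : (ZMod 2)[X]) (hqd : q.natDegree ≤ 3)
    (hq0 : aeval α q = 0) : q = 0 := by
  by_contra hne
  have hinj : Function.Injective (fun i : Fin m => s5E m h α (some (0, i))) := by
    intro i j hij
    have := s5_E_inj m h hm hm5 (s5_q m (by omega)) α hα hij
    simpa using this
  have h1 := card_le_degree_of_subset_roots
      (p := q.map (algebraMap (ZMod 2) (GaloisField 2 m)))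
      (Z := Finset.univ.image (fun i : Fin m => s5E m h α (some (0, i)))) (by
        intro β hβ
        rw [mem_roots_map hne]
        simp at hβ
        obtain ⟨i, rfl⟩ := hβ
        have := s5_L1 q α hq0 i
        have h5 : aeval (s5E m h α (some (0, i))) q = 0 := by simpa [s5E] using this
        exact h5)
  rw [Finset.card_image_of_injective _ hinj, natDegree_map] at h1
  simp at h1
  omega

lemma s5_sum3 {F : Type*} [Field F] [CharP F 2] [Algebra (ZMod 2) F] (u v w u' v' w' : F) :
    ∑ z : ZMod 2 × ZMod 2 × ZMod 2,
      (1 + algebraMap (ZMod 2) F z.1 * u' + algebraMap (ZMod 2) F z.2.1 * v'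
        + algebraMap (ZMod 2) F z.2.2 * w') *
      (1 + algebraMap (ZMod 2) F z.1 * u + algebraMap (ZMod 2) F z.2.1 * v
        + algebraMap (ZMod 2) F z.2.2 * w) = 0 := by
  have h2 : (2 : F) = 0 := CharTwo.two_eq_zero
  have hs : ∀ g : ZMod 2 → F, ∑ a, g a = g 0 + g 1 := fun g => Fin.sum_univ_two g
  simp only [Fintype.sum_prod_type, hs, map_zero, map_one, zero_mul, one_mul, add_zero]
  have h8 : (2 : F) * ((4 + 2 * (u + v + w) + 2 * (u' + v' + w') + 2 * (u * u' + v * v' + w * w')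
    + (u * v' + u * w' + v * u' + v * w' + w * u' + w * v'))) = 0 := by rw [h2, zero_mul]
  linear_combination h8

lemma s5_upper (m h : ℕ) (hm : m = 2 * h + 1) (hm5 : 5 ≤ m)
    (α : GaloisField 2 m) (hα : orderOf α = 2 ^ m - 1)
    (f : GaloisField 2 m → GaloisField 2 m)
    (hf : ∀ x, f x = x + x ^ 3 + x ^ (2 ^ ((m + 1) / 2) + 1)) :
    ∃ c : (ZMod 2)[X], c ≠ 0 ∧ c.degree < ((2 ^ m - 1 : ℕ) : WithBot ℕ) ∧
      genPoly m α f ∣ c ∧ c.support.card = 8 := by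
  have : Fact (Nat.Prime 2) := ⟨Nat.prime_two⟩
  have hm0 : m ≠ 0 := by omega
  have hq := s5_q m hm0
  have hroots := s5_groots m h hm hm5 α hα f hf
  have hγ : orderOf α⁻¹ = 2 ^ m - 1 := by rw [s5_ordinv]; exact hα
  set γ := α⁻¹ with hγd
  let W : ZMod 2 × ZMod 2 × ZMod 2 → GaloisField 2 m := fun z =>
    1 + algebraMap (ZMod 2) _ z.1 * α + algebraMap (ZMod 2) _ z.2.1 * α ^ 2
        + algebraMap (ZMod 2) _ z.2.2 * α ^ 3
  have hcoef : ∀ a0 a1 a2 a3 : ZMod 2, algebraMap (ZMod 2) (GaloisField 2 m) a0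
      + algebraMap (ZMod 2) _ a1 * α + algebraMap (ZMod 2) _ a2 * α ^ 2
        + algebraMap (ZMod 2) _ a3 * α ^ 3 = 0 → a0 = 0 ∧ a1 = 0 ∧ a2 = 0 ∧ a3 = 0 := by
    intro a0 a1 a2 a3 h0
    have h1 := s5_indep m h hm hm5 α hα (C a3 * X ^ 3 + C a2 * X ^ 2 + C a1 * X + C a0)
      natDegree_cubic_le (by
        simp only [map_add, map_mul, aeval_C, map_pow, aeval_X]
        linear_combination h0)
    refine ⟨?_, ?_, ?_, ?_⟩
    · simpa [coeff_X, coeff_C] using congrArg (fun p => coeff p 0) h1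
    · simpa [coeff_X, coeff_C] using congrArg (fun p => coeff p 1) h1
    · simpa [coeff_X, coeff_C] using congrArg (fun p => coeff p 2) h1
    · simpa [coeff_X, coeff_C] using congrArg (fun p => coeff p 3) h1
  have hWinj : Function.Injective W := by
    rintro ⟨a, b, c⟩ ⟨a', b', c'⟩ hab
    have := hcoef 0 (a - a') (b - b') (c - c') (by
      simp only [W] at hab
      simp only [map_sub, map_zero]
      linear_combination hab)
    obtain ⟨-, h1, h2, h3⟩ := this
    rw [sub_eq_zero.1 h1, sub_eq_zero.1 h2, sub_eq_zero.1 h3]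
  have hW0 : ∀ z, W z ≠ 0 := by
    intro z hz
    have := hcoef 1 z.1 z.2.1 z.2.2 (by rw [map_one]; exact hz)
    exact one_ne_zero this.1
  have hWpow : ∀ k z, (W z) ^ 2 ^ k = 1 + algebraMap (ZMod 2) _ z.1 * α ^ 2 ^ k
      + algebraMap (ZMod 2) _ z.2.1 * (α ^ 2) ^ 2 ^ k
        + algebraMap (ZMod 2) _ z.2.2 * (α ^ 3) ^ 2 ^ k := by
    intro k z
    simp only [W, s5_addpow, mul_pow, one_pow, ← map_pow, ZMod.pow_card_pow]
  have hs1 : ∀ k, ∑ z, W z ^ (2 ^ k + 1) = 0 := by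
    intro k
    simp only [pow_succ, hWpow]
    exact s5_sum3 _ _ _ _ _ _
  have hs0 : ∑ z, W z = 0 := by
    have := s5_sum3 α (α ^ 2) (α ^ 3) 0 0 0
    simpa [W] using this
  have hlog : ∀ x : GaloisField 2 m, x ≠ 0 → ∃ t, t < 2 ^ m - 1 ∧ γ ^ t = x := by
    let _ : Fintype (GaloisField 2 m) := Fintype.ofFinite _
    have hγ0 : γ ≠ 0 := by
      intro h0
      rw [h0, orderOf_zero] at hγ
      have := Nat.one_lt_two_pow (n := m) (by omega)
      omega
    have heq : (Finset.range (2 ^ m - 1)).image (fun t => γ ^ t) = Finset.univ.erase 0 := by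
      apply Finset.eq_of_subset_of_card_le
      · intro x hx
        simp only [Finset.mem_image] at hx
        obtain ⟨t, _, rfl⟩ := hx
        simp [hγ0]
      · rw [Finset.card_erase_of_mem (Finset.mem_univ _), Finset.card_univ,
          Fintype.card_eq_nat_card, GaloisField.card 2 m hm0, Finset.card_image_of_injOn]
        · simp
        · intro s hs t ht hst
          apply pow_injOn_Iio_orderOf (x := γ) _ _ hst
          · rw [hγ]; simpa using hs
          · rw [hγ]; simpa using ht
    intro x hx
    have : x ∈ (Finset.range (2 ^ m - 1)).image (fun t => γ ^ t) := by
      rw [heq]; simp [hx]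
    simpa using this
  choose L hLlt hL using fun z => hlog (W z) (hW0 z)
  have hLinj : Function.Injective L := by
    intro z z' hz
    apply hWinj
    rw [← hL, ← hL, hz]
  have hsupp : (∑ z, (X : (ZMod 2)[X]) ^ L z).support = Finset.univ.image L := by
    ext n
    rw [mem_support_iff, finsetSum_coeff]
    simp only [coeff_X_pow, Finset.mem_image, Finset.mem_univ, true_and]
    constructor
    · intro hn
      obtain ⟨z, _, hz⟩ := Finset.exists_ne_zero_of_sum_ne_zero hn
      refine ⟨z, ?_⟩
      by_contra hc
      apply hz
      rw [if_neg]
      exact fun h => hc h.symm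
    · rintro ⟨z, rfl⟩
      rw [Finset.sum_eq_single z]
      · simp
      · intro z' _ hne
        rw [if_neg]
        exact fun h => hne (hLinj h.symm)
      · simp
  have hcard : (∑ z, (X : (ZMod 2)[X]) ^ L z).support.card = 8 := by
    rw [hsupp, Finset.card_image_of_injective _ hLinj]
    simp [Finset.card_univ, ZMod.card]
  have hae : ∀ e, aeval (γ ^ e) (∑ z, (X : (ZMod 2)[X]) ^ L z) = ∑ z, W z ^ e := by
    intro e
    simp only [map_sum, map_pow, aeval_X]
    apply Finset.sum_congr rfl
    intro z _
    rw [← hL z, ← pow_mul, ← pow_mul, mul_comm]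
  refine ⟨∑ z, X ^ L z, ?_, ?_, ?_, hcard⟩
  · intro h0
    rw [h0] at hcard
    simp at hcard
  · apply lt_of_le_of_lt (degree_sum_le _ _)
    rw [Finset.sup_lt_iff (WithBot.bot_lt_coe _)]
    intro z _
    rw [degree_X_pow]
    exact_mod_cast hLlt z
  · apply s5_gdvd m hm0
    intro β hβ
    obtain ⟨o, rfl⟩ := (hroots β).1 hβ
    rcases o with _ | ⟨k, i⟩
    · have := hae 0
      rw [pow_zero] at this
      simp only [s5E]
      rw [this]
      have h2 : (2 : GaloisField 2 m) = 0 := CharTwo.two_eq_zero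
      simp [Finset.card_univ, ZMod.card]
      linear_combination 4 * h2
    · simp only [s5E]
      apply s5_L1
      rw [hae]
      fin_cases k
      · simpa using hs0
      · simpa using hs1 1
      · simpa using hs1 h

/-- Theorem 3: for f₃(x) = x + x^3 + x^{2^{(m+1)/2}+1} over 𝔽_{2^m},
m = 2h+1 ≥ 5, the minimal polynomial of the sequence s_t = Tr(f₃(α^t+1)) is
(x−1)·m_{α^{−1}}(x)·m_{α^{−3}}(x)·m_{α^{−(2^h+1)}}(x) of degree 3m+1;
the code C_s has length 2^m−1, dimension 2^m−2−3m, and minimum distance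
exactly 8. -/
theorem stmt5 (m h : ℕ) (hm : m = 2 * h + 1) (hm5 : 5 ≤ m)
    (α : GaloisField 2 m) (hα : orderOf α = 2 ^ m - 1)
    (f : GaloisField 2 m → GaloisField 2 m)
    (hf : ∀ x, f x = x + x ^ 3 + x ^ (2 ^ ((m + 1) / 2) + 1)) :
    genPoly m α f =
      (X - 1) * minpoly (ZMod 2) α⁻¹ * minpoly (ZMod 2) (α⁻¹ ^ 3) *
        minpoly (ZMod 2) (α⁻¹ ^ (2 ^ h + 1)) ∧
    (genPoly m α f).natDegree = 3 * m + 1 ∧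
    Module.finrank (ZMod 2) ↥(codeC m α f) = 2 ^ m - 2 - 3 * m ∧
    IsLeast (wtSet (codeC m α f)) 8 := by
  have hm0 : m ≠ 0 := by omega
  obtain ⟨h1, h2⟩ := s5_gen m h hm hm5 α hα f hf
  have hg0 : genPoly m α f ≠ 0 :=
    ne_zero_of_dvd_ne_zero (s5_pne m hm0) ⟨_, (s5_gmul m hm0 α f).symm⟩
  have hle : (genPoly m α f).natDegree ≤ 2 ^ m - 1 := by
    have h3 := natDegree_le_of_dvd (p := genPoly m α f) ⟨_, (s5_gmul m hm0 α f).symm⟩ (s5_pne m hm0)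
    have h4 : (X ^ (2 ^ m - 1) - 1 : (ZMod 2)[X]).natDegree = 2 ^ m - 1 :=
      natDegree_X_pow_sub_C (r := 1)
    omega
  refine ⟨h1, h2, ?_, ?_, ?_⟩
  · rw [codeC, s5_finrank _ hg0 _ hle, h2]
    omega
  · obtain ⟨c, hc0, hcd, hc, hw⟩ := s5_upper m h hm hm5 α hα f hf
    refine ⟨c, ⟨?_, ?_⟩, hc0, hw⟩
    · exact mem_degreeLT.2 hcd
    · exact Ideal.mem_span_singleton.2 hc
  · rintro w ⟨c, ⟨hcd, hc⟩, hc0, rfl⟩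
    exact s5_lower m h hm hm5 α hα f hf c hc0 (mem_degreeLT.1 hcd) (Ideal.mem_span_singleton.1 hc)
end

section
/- Let m ≥ 5 be odd and let f₄(x) = x + x^3 + x^{2^m − 2^{(m+3)/2} + 2}. For the binary sequence s_t = Tr(f₄(α^t + 1)), the linear span is L_s = 1 + m(2^{(m−3)/2} + 1) if m ≡ 1 (mod 4), and L_s = 1 + m(2^{(m−3)/2} − 1) if m ≡ 3 (mod 4). -/
open Polynomial
open scoped Classical

/-- Degree of the quotient counts the nonvanishing points of `S`. -/
theorem natDegree_div_gcd_aux {F : Type*} [Field F] [Algebra (ZMod 2) F] (v : ℕ) (hv : Odd v)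
    (α : F) (hα : IsPrimitiveRoot α v) (S : (ZMod 2)[X]) (J : Finset ℕ)
    (hJ : J ⊆ Finset.range v)
    (h : ∀ i < v, aeval (α ^ i)⁻¹ S ≠ 0 ↔ i ∈ J) :
    ((X ^ v - 1) / EuclideanDomain.gcd (X ^ v - 1) S).natDegree = J.card := by
  have hv0 : v ≠ 0 := by rintro rfl; simp at hv
  have : NeZero v := ⟨hv0⟩
  have hα0 : α ≠ 0 := hα.ne_zero hv0
  set p : (ZMod 2)[X] := X ^ v - 1 with hp
  have hvz : ((v : ℕ) : ZMod 2) ≠ 0 := by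
    rw [(ZMod.natCast_eq_one_iff_odd).2 hv]; exact one_ne_zero
  have hsep : p.Separable := X_pow_sub_one_separable_iff.2 hvz
  have hp0 : p ≠ 0 := hsep.ne_zero
  set g := EuclideanDomain.gcd p S with hg
  have hgp : g ∣ p := EuclideanDomain.gcd_dvd_left p S
  have hgS : g ∣ S := EuclideanDomain.gcd_dvd_right p S
  have hg0 : g ≠ 0 := ne_zero_of_dvd_ne_zero hp0 hgp
  set q := p / g with hq
  have hpq : g * q = p := EuclideanDomain.mul_div_cancel' hg0 hgp
  have hq0 : q ≠ 0 := by rintro h0; rw [h0, mul_zero] at hpq; exact hp0 hpq.symm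
  have hqp : q ∣ p := ⟨g, by rw [mul_comm]; exact hpq.symm⟩
  let φ := algebraMap (ZMod 2) F
  have hpm : p.map φ = X ^ v - 1 := by simp [hp]
  have hpm0 : p.map φ ≠ 0 := by simpa [Polynomial.map_eq_zero] using hp0
  have hsplit : (p.map φ).Splits := by rw [hpm]; exact X_pow_sub_one_splits hα
  have hqdvd : q.map φ ∣ p.map φ := Polynomial.map_dvd _ hqp
  have hqsplit : (q.map φ).Splits := hsplit.of_dvd hpm0 hqdvd
  have hqsep : (q.map φ).Separable := (hsep.of_dvd hqp).map
  have hqm0 : q.map φ ≠ 0 := hqsep.ne_zero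
  have hcop : IsCoprime g q := by
    apply Separable.isCoprime; rw [hpq]; exact hsep
  rw [← natDegree_map (p := q) φ, hqsplit.natDegree_eq_card_roots,
    ← Multiset.toFinset_card_of_nodup (nodup_roots hqsep)]
  have key : (q.map φ).roots.toFinset = J.image (fun i => (α ^ i)⁻¹) := by
    ext β
    have hroot : β ∈ (q.map φ).roots.toFinset ↔ aeval β q = 0 := by
      rw [Multiset.mem_toFinset, mem_roots hqm0, IsRoot.def, eval_map_algebraMap]
    have hiff : β ^ v = 1 → (aeval β q = 0 ↔ aeval β S ≠ 0) := by
      intro hβ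
      have hpβ : aeval β p = 0 := by simp [hp, hβ]
      constructor
      · intro hqβ hSβ
        have hgβ : aeval β g = 0 := by
          rw [hg, EuclideanDomain.gcd_eq_gcd_ab]
          simp [hpβ, hSβ]
        obtain ⟨a, b, hab⟩ := hcop
        have := congrArg (aeval β) hab
        simp [hgβ, hqβ] at this
      · intro hSβ
        rw [← hpq, map_mul, mul_eq_zero] at hpβ
        rcases hpβ with h1 | h1
        · obtain ⟨r, hr⟩ := hgS
          exact absurd (by rw [hr, map_mul, h1, zero_mul]) hSβ
        · exact h1
    rw [hroot, Finset.mem_image]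
    constructor
    · intro hqβ
      have hβ : β ^ v = 1 := by
        obtain ⟨r, hr⟩ := hqp
        have : aeval β p = 0 := by rw [hr, map_mul, hqβ, zero_mul]
        simpa [hp, sub_eq_zero] using this
      obtain ⟨i, hi, hiβ⟩ := hα.eq_pow_of_pow_eq_one (ξ := β⁻¹) (by rw [inv_pow, hβ, inv_one])
      refine ⟨i, ?_, by rw [hiβ, inv_inv]⟩
      rw [← h i hi, hiβ, inv_inv]
      exact (hiff hβ).1 hqβ
    · rintro ⟨i, hi, rfl⟩
      refine (hiff ?_).2 ((h i (Finset.mem_range.1 (hJ hi))).2 hi)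
      rw [inv_pow, ← pow_mul, mul_comm, pow_mul, hα.pow_eq_one, one_pow, inv_one]
  rw [key]
  apply Finset.card_image_of_injOn
  intro i hi j hj hij
  exact hα.pow_inj (Finset.mem_range.1 (hJ hi)) (Finset.mem_range.1 (hJ hj)) (inv_injective hij)

theorem genPoly_natDegree_of_expansion (m : ℕ) (hm : m ≠ 0) (α : GaloisField 2 m)
    (hα : orderOf α = 2 ^ m - 1) (f : GaloisField 2 m → GaloisField 2 m) (J : Finset ℕ)
    (hJ : J ⊆ Finset.range (2 ^ m - 1))
    (h : ∀ x : GaloisField 2 m, x ^ (2 ^ m - 1) = 1 →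
      algebraMap (ZMod 2) (GaloisField 2 m)
        (Algebra.trace (ZMod 2) (GaloisField 2 m) (f (x + 1))) = ∑ j ∈ J, x ^ j) :
    (genPoly m α f).natDegree = J.card := by
  have hprim : IsPrimitiveRoot α (2 ^ m - 1) := hα ▸ IsPrimitiveRoot.orderOf α
  have h2m : 2 ≤ 2 ^ m := by
    calc 2 = 2 ^ 1 := rfl
      _ ≤ 2 ^ m := Nat.pow_le_pow_right (by norm_num) (by omega)
  have hvodd : Odd (2 ^ m - 1) := by
    refine Nat.Even.sub_odd (by omega) ?_ odd_one
    exact (even_two).pow_of_ne_zero hm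
  unfold genPoly
  apply natDegree_div_gcd_aux _ hvodd α hprim _ J hJ
  set v := 2 ^ m - 1 with hv
  have hv0 : v ≠ 0 := by omega
  have hα0 : α ≠ 0 := hprim.ne_zero hv0
  have hcast : ((v : ℕ) : GaloisField 2 m) = 1 := by
    have : ((v : ℕ) : ZMod 2) = 1 := (ZMod.natCast_eq_one_iff_odd).2 hvodd
    have h3 := congrArg (algebraMap (ZMod 2) (GaloisField 2 m)) this
    simpa using h3
  intro i hi
  have hval : aeval (α ^ i)⁻¹ (traceSeqPoly m α f) = if i ∈ J then 1 else 0 := by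
    unfold traceSeqPoly
    rw [map_sum]
    have hterm : ∀ t ∈ Finset.range v,
        aeval (α ^ i)⁻¹ (C (Algebra.trace (ZMod 2) (GaloisField 2 m) (f (α ^ t + 1))) * X ^ t)
        = ∑ j ∈ J, (α ^ j * (α ^ i)⁻¹) ^ t := by
      intro t _
      rw [map_mul, aeval_C, map_pow, aeval_X, h (α ^ t), Finset.sum_mul]
      · refine Finset.sum_congr rfl fun j _ => ?_
        rw [mul_pow, ← pow_mul, ← pow_mul, mul_comm t j]
      · rw [← pow_mul, mul_comm, pow_mul, hprim.pow_eq_one, one_pow]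
    rw [Finset.sum_congr rfl hterm, Finset.sum_comm]
    have hinner : ∀ j ∈ J, ∑ t ∈ Finset.range v, (α ^ j * (α ^ i)⁻¹) ^ t
        = if i = j then 1 else 0 := by
      intro j hj
      split_ifs with hij
      · subst hij
        rw [mul_inv_cancel₀ (pow_ne_zero _ hα0)]
        simp [hcast]
      · have hne : α ^ j * (α ^ i)⁻¹ ≠ 1 := by
          intro h1
          have h2 : α ^ j = α ^ i := by
            field_simp at h1
            exact h1
          exact hij (hprim.pow_inj (Finset.mem_range.1 (hJ hj)) hi h2).symm
        rw [geom_sum_eq hne, mul_pow, inv_pow, ← pow_mul, ← pow_mul, mul_comm j, mul_comm i,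
          pow_mul, pow_mul, hprim.pow_eq_one]
        simp
    rw [Finset.sum_congr rfl hinner]
    simp
  rw [hval]
  split_ifs with hi' <;> simp [hi']

/-- The recursively defined set of indices `c` (standing for the odd number `2c+1`). -/
def pSet : ℕ → Finset ℕ
  | 0 => Finset.range 2
  | k + 1 => (Finset.range (2 ^ (k + 1)) \ pSet k) ∪ Finset.Ico (2 ^ (k + 1)) (2 ^ (k + 1) + 2 ^ k)

theorem pSet_subset (k : ℕ) : pSet k ⊆ Finset.range (2 ^ (k + 1)) := by
  cases k with
  | zero => simp [pSet]
  | succ k =>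
    intro c hc
    simp only [pSet, Finset.mem_union, Finset.mem_sdiff, Finset.mem_range, Finset.mem_Ico] at hc ⊢
    have h1 : 2 ^ (k + 1 + 1) = 2 ^ (k + 1) + 2 ^ k + 2 ^ k := by ring
    have h2 : 0 < 2 ^ k := by positivity
    omega

theorem pSet_card_succ (k : ℕ) :
    (pSet (k + 1)).card + (pSet k).card = 2 ^ (k + 1) + 2 ^ k := by
  have hd : Disjoint (Finset.range (2 ^ (k + 1)) \ pSet k)
      (Finset.Ico (2 ^ (k + 1)) (2 ^ (k + 1) + 2 ^ k)) := by
    rw [Finset.disjoint_left]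
    intro c hc hc'
    simp only [Finset.mem_sdiff, Finset.mem_range, Finset.mem_Ico] at hc hc'
    omega
  have h1 := Finset.card_sdiff_add_card_eq_card (pSet_subset k)
  rw [Finset.card_range] at h1
  rw [pSet, Finset.card_union_of_disjoint hd, Nat.card_Ico]
  omega

theorem pSet_card (k : ℕ) :
    (k % 2 = 0 → (pSet k).card = 2 ^ k + 1) ∧ (k % 2 = 1 → (pSet k).card + 1 = 2 ^ k) := by
  induction k with
  | zero => simp [pSet]
  | succ k ih =>
    have h := pSet_card_succ k
    have h1 : 2 ^ (k + 1) = 2 ^ k + 2 ^ k := by ring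
    omega

theorem sum_range_two_mul {R : Type*} [CommRing R] (g : ℕ → R) (n : ℕ) :
    ∑ a ∈ Finset.range (2 * n), g a
      = ∑ a ∈ Finset.range n, g (2 * a) + ∑ a ∈ Finset.range n, g (2 * a + 1) := by
  induction n with
  | zero => simp
  | succ n ih =>
    rw [show 2 * (n + 1) = 2 * n + 1 + 1 by ring, Finset.sum_range_succ, Finset.sum_range_succ, ih,
      Finset.sum_range_succ, Finset.sum_range_succ]
    ring

theorem sum_pSet {R : Type*} [CommRing R] [CharP R 2] (T : ℕ → R) (hT : ∀ n, T (2 * n) = T n)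
    (k : ℕ) :
    T 1 + T 3 + ∑ a ∈ Finset.range (2 ^ (k + 1)), T a
        + ∑ a ∈ Finset.range (2 ^ (k + 1)), T (a + 2 ^ (k + 2))
      = T 0 + ∑ c ∈ pSet k, T (2 * c + 1)
        + ∑ c ∈ Finset.Ico (2 ^ (k + 1)) (2 ^ (k + 1) + 2 ^ k), T (2 * c + 1) := by
  have htwo : (2 : R) = 0 := CharTwo.two_eq_zero
  induction k with
  | zero =>
    have h4 : T 4 = T 1 := by rw [show 4 = 2 * (2 * 1) by rfl, hT, hT]
    simp [pSet, Finset.sum_range_succ, h4]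
    linear_combination (T 1) * htwo
  | succ k ih =>
    have e1 : ∑ a ∈ Finset.range (2 ^ (k + 1 + 1)), T a
        = ∑ a ∈ Finset.range (2 ^ (k + 1)), T a
          + ∑ c ∈ Finset.range (2 ^ (k + 1)), T (2 * c + 1) := by
      rw [pow_succ' 2 (k + 1), sum_range_two_mul]
      simp_rw [hT]
    have e2 : ∑ a ∈ Finset.range (2 ^ (k + 1 + 1)), T (a + 2 ^ (k + 1 + 2))
        = ∑ a ∈ Finset.range (2 ^ (k + 1)), T (a + 2 ^ (k + 2))
          + ∑ c ∈ Finset.Ico (2 ^ (k + 1 + 1)) (2 ^ (k + 1 + 1) + 2 ^ (k + 1)), T (2 * c + 1) := by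
      rw [pow_succ' 2 (k + 1), sum_range_two_mul, Finset.sum_Ico_eq_sum_range, Nat.add_sub_cancel_left]
      congr 1
      · refine Finset.sum_congr rfl fun a _ => ?_
        rw [← hT (a + 2 * 2 ^ (k + 1))]
        congr 1
        ring
      · refine Finset.sum_congr rfl fun a _ => ?_
        congr 1
        ring
    have hd : Disjoint (Finset.range (2 ^ (k + 1)) \ pSet k)
        (Finset.Ico (2 ^ (k + 1)) (2 ^ (k + 1) + 2 ^ k)) := by
      rw [Finset.disjoint_left]
      intro c hc hc'
      simp only [Finset.mem_sdiff, Finset.mem_range, Finset.mem_Ico] at hc hc'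
      omega
    have e3 : ∑ c ∈ pSet (k + 1), T (2 * c + 1)
        = ∑ c ∈ Finset.range (2 ^ (k + 1)) \ pSet k, T (2 * c + 1)
          + ∑ c ∈ Finset.Ico (2 ^ (k + 1)) (2 ^ (k + 1) + 2 ^ k), T (2 * c + 1) := by
      rw [pSet, Finset.sum_union hd]
    have e4 := Finset.sum_sdiff (f := fun c => T (2 * c + 1)) (pSet_subset k)
    rw [e1, e2, e3, ← e4]
    linear_combination ih + (∑ c ∈ pSet k, T (2 * c + 1)) * htwo

/-- The full index set. -/
def bSet (k : ℕ) : Finset ℕ := pSet k ∪ Finset.Ico (2 ^ (k + 1)) (2 ^ (k + 1) + 2 ^ k)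

theorem bSet_disj (k : ℕ) : Disjoint (pSet k) (Finset.Ico (2 ^ (k + 1)) (2 ^ (k + 1) + 2 ^ k)) := by
  rw [Finset.disjoint_left]
  intro c hc hc'
  have := pSet_subset k hc
  simp only [Finset.mem_range, Finset.mem_Ico] at this hc'
  omega

theorem bSet_card (k : ℕ) : (bSet k).card = (pSet k).card + 2 ^ k := by
  rw [bSet, Finset.card_union_of_disjoint (bSet_disj k), Nat.card_Ico, Nat.add_sub_cancel_left]

theorem bSet_lt (k c : ℕ) (hc : c ∈ bSet k) : 2 * c + 1 < 2 ^ (k + 3) := by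
  have h1 : 2 ^ (k + 3) = 8 * 2 ^ k := by ring
  have h2 : 2 ^ (k + 1) = 2 * 2 ^ k := by ring
  have h0 : 0 < 2 ^ k := by positivity
  rw [bSet, Finset.mem_union] at hc
  rcases hc with hc | hc
  · have := Finset.mem_range.1 (pSet_subset k hc)
    omega
  · have := Finset.mem_Ico.1 hc
    omega

theorem coset_aux (k b b' d : ℕ) (hb : Odd b) (hb' : b < 2 ^ (k + 3)) (hb2 : b' < 2 ^ (k + 3))
    (hd : d ≤ k + 2) (h : b ≡ b' * 2 ^ d [MOD (2 ^ (2 * k + 5) - 1)]) : d = 0 := by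
  have hlt : b' * 2 ^ d < 2 ^ (2 * k + 5) := by
    calc b' * 2 ^ d < 2 ^ (k + 3) * 2 ^ d := by gcongr
      _ ≤ 2 ^ (k + 3) * 2 ^ (k + 2) := by gcongr; norm_num
      _ = 2 ^ (2 * k + 5) := by ring
  have hbv : b < 2 ^ (2 * k + 5) - 1 := by
    have h1 : 2 ^ (2 * k + 5) = 4 * 2 ^ k * 2 ^ (k + 3) := by ring
    have h2 : 1 ≤ 2 ^ k := Nat.one_le_two_pow
    have : 2 * 2 ^ (k + 3) ≤ 2 ^ (2 * k + 5) := by rw [h1]; gcongr; omega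
    have h0 : 0 < 2 ^ (k + 3) := by positivity
    omega
  by_contra hd0
  have heven : Even (b' * 2 ^ d) := Even.mul_left (even_two.pow_of_ne_zero hd0) _
  rw [Nat.ModEq, Nat.mod_eq_of_lt hbv] at h
  rcases Nat.lt_or_ge (b' * 2 ^ d) (2 ^ (2 * k + 5) - 1) with h1 | h1
  · rw [Nat.mod_eq_of_lt h1] at h
    rw [h] at hb
    exact (Nat.not_odd_iff_even.2 heven) hb
  · have h2 : b' * 2 ^ d = 2 ^ (2 * k + 5) - 1 := by omega
    rw [h2, Nat.mod_self] at h
    rw [h] at hb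
    simp at hb

theorem coset_inj_le (k b b' i i' : ℕ) (hb : Odd b) (hb' : Odd b') (hlt : b < 2 ^ (k + 3))
    (hlt' : b' < 2 ^ (k + 3)) (hii : i ≤ i') (hi' : i' < 2 * k + 5)
    (h : b * 2 ^ i ≡ b' * 2 ^ i' [MOD (2 ^ (2 * k + 5) - 1)]) : b = b' ∧ i = i' := by
  set v := 2 ^ (2 * k + 5) - 1 with hv
  have hpos : 1 ≤ 2 ^ (2 * k + 5) := Nat.one_le_two_pow
  have h2m : 2 ^ (2 * k + 5) ≡ 1 [MOD v] := by
    have : 2 ^ (2 * k + 5) = v + 1 := by omega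
    rw [this]
    simp [Nat.ModEq]
  have hcop : ∀ n, Nat.gcd v (2 ^ n) = 1 := by
    intro n
    apply Nat.Coprime.pow_right
    rw [Nat.coprime_comm, Nat.Prime.coprime_iff_not_dvd Nat.prime_two, hv]
    have : 2 ^ (2 * k + 5) = 2 * 2 ^ (2 * k + 4) := by ring
    omega
  obtain ⟨d, rfl⟩ := Nat.exists_eq_add_of_le hii
  have hc : b ≡ b' * 2 ^ d [MOD v] := by
    apply Nat.ModEq.cancel_right_of_coprime (hcop i)
    have : b' * 2 ^ d * 2 ^ i = b' * 2 ^ (i + d) := by ring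
    rw [this]; exact h
  have hd0 : d = 0 := by
    rcases Nat.lt_or_ge (k + 2) d with h1 | h1
    · exfalso
      have h3 : b' ≡ b * 2 ^ (2 * k + 5 - d) [MOD v] := by
        have h4 := hc.mul_right (2 ^ (2 * k + 5 - d))
        have h5 : b' * 2 ^ d * 2 ^ (2 * k + 5 - d) = b' * 2 ^ (2 * k + 5) := by
          rw [mul_assoc, ← pow_add]; congr 2; omega
        rw [h5] at h4
        have h6 := h2m.mul_left b'
        rw [mul_one] at h6
        exact (h4.trans h6).symm
      have := coset_aux k b' b _ hb' hlt' hlt (by omega) h3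
      omega
    · exact coset_aux k b b' d hb hlt hlt' h1 hc
  subst hd0
  refine ⟨?_, rfl⟩
  rw [pow_zero, mul_one] at hc
  have hbig : 2 ^ (k + 3) ≤ v := by
    have h1 : 2 ^ (2 * k + 5) = 4 * 2 ^ k * 2 ^ (k + 3) := by ring
    have h2 : 1 ≤ 2 ^ k := Nat.one_le_two_pow
    have : 2 * 2 ^ (k + 3) ≤ 2 ^ (2 * k + 5) := by rw [h1]; gcongr; omega
    have h0 : 0 < 2 ^ (k + 3) := by positivity
    omega
  exact Nat.ModEq.eq_of_lt_of_lt hc (by omega) (by omega)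

theorem coset_inj (k b b' i i' : ℕ) (hb : Odd b) (hb' : Odd b') (hlt : b < 2 ^ (k + 3))
    (hlt' : b' < 2 ^ (k + 3)) (hi : i < 2 * k + 5) (hi' : i' < 2 * k + 5)
    (h : b * 2 ^ i ≡ b' * 2 ^ i' [MOD (2 ^ (2 * k + 5) - 1)]) : b = b' ∧ i = i' := by
  rcases le_total i i' with h1 | h1
  · exact coset_inj_le k b b' i i' hb hb' hlt hlt' h1 hi' h
  · have := coset_inj_le k b' b i' i hb' hb hlt' hlt h1 hi h.symm
    exact ⟨this.1.symm, this.2.symm⟩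

/-- Map from (index, shift) to exponent. -/
def expMap (k : ℕ) (ci : ℕ × ℕ) : ℕ := ((2 * ci.1 + 1) * 2 ^ ci.2) % (2 ^ (2 * k + 5) - 1)

theorem expMap_injOn (k : ℕ) :
    Set.InjOn (expMap k) ((bSet k ×ˢ Finset.range (2 * k + 5) : Finset (ℕ × ℕ)) : Set (ℕ × ℕ)) := by
  rintro ⟨c, i⟩ hc ⟨c', i'⟩ hc' h
  simp only [Finset.coe_product, Set.mem_prod, Finset.mem_coe, Finset.mem_range] at hc hc'
  have := coset_inj k (2 * c + 1) (2 * c' + 1) i i' ⟨c, rfl⟩ ⟨c', rfl⟩ (bSet_lt k c hc.1)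
    (bSet_lt k c' hc'.1) hc.2 hc'.2 h
  ext <;> simp <;> omega

theorem expMap_ne_zero (k c i : ℕ) (hc : c ∈ bSet k) : expMap k (c, i) ≠ 0 := by
  intro h
  have hdvd : (2 ^ (2 * k + 5) - 1) ∣ (2 * c + 1) * 2 ^ i := Nat.dvd_of_mod_eq_zero h
  have hcop : Nat.Coprime (2 ^ (2 * k + 5) - 1) (2 ^ i) := by
    apply Nat.Coprime.pow_right
    rw [Nat.coprime_comm, Nat.Prime.coprime_iff_not_dvd Nat.prime_two]
    have : 2 ^ (2 * k + 5) = 2 * 2 ^ (2 * k + 4) := by ring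
    have h2 : 1 ≤ 2 ^ (2 * k + 4) := Nat.one_le_two_pow
    omega
  have h3 := Nat.le_of_dvd (by omega) (hcop.dvd_of_dvd_mul_right hdvd)
  have h4 := bSet_lt k c hc
  have h1 : 2 ^ (2 * k + 5) = 4 * 2 ^ k * 2 ^ (k + 3) := by ring
  have h2 : 1 ≤ 2 ^ k := Nat.one_le_two_pow
  have : 2 * 2 ^ (k + 3) ≤ 2 ^ (2 * k + 5) := by rw [h1]; gcongr; omega
  omega

/-- The exponent set. -/
noncomputable def jSet (k : ℕ) : Finset ℕ :=
  insert 0 ((bSet k ×ˢ Finset.range (2 * k + 5)).image (expMap k))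

theorem zero_notMem_aux (k : ℕ) :
    0 ∉ (bSet k ×ˢ Finset.range (2 * k + 5)).image (expMap k) := by
  rw [Finset.mem_image]
  rintro ⟨⟨c, i⟩, hc, h⟩
  exact expMap_ne_zero k c i (Finset.mem_product.1 hc).1 h

theorem jSet_card (k : ℕ) : (jSet k).card = 1 + (2 * k + 5) * (bSet k).card := by
  rw [jSet, Finset.card_insert_of_notMem (zero_notMem_aux k),
    Finset.card_image_of_injOn (expMap_injOn k), Finset.card_product, Finset.card_range]
  ring

theorem jSet_subset (k : ℕ) : jSet k ⊆ Finset.range (2 ^ (2 * k + 5) - 1) := by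
  have h2 : 2 ≤ 2 ^ (2 * k + 5) := by
    have : 2 ^ (2 * k + 5) = 2 * 2 ^ (2 * k + 4) := by ring
    have h2 : 1 ≤ 2 ^ (2 * k + 4) := Nat.one_le_two_pow
    omega
  intro j hj
  rw [jSet, Finset.mem_insert, Finset.mem_image] at hj
  rw [Finset.mem_range]
  rcases hj with rfl | ⟨ci, _, rfl⟩
  · omega
  · exact Nat.mod_lt _ (by omega)

theorem add_one_pow_two_pow_sub_one {R : Type*} [CommRing R] [CharP R 2] (x : R) (n : ℕ) :
    (x + 1) ^ (2 ^ n - 1) = ∑ a ∈ Finset.range (2 ^ n), x ^ a := by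
  induction n with
  | zero => simp
  | succ n ih =>
    have hpos : 1 ≤ 2 ^ n := Nat.one_le_two_pow
    have h1 : 2 ^ (n + 1) - 1 = (2 ^ n - 1) + 2 ^ n := by
      have : 2 ^ (n + 1) = 2 ^ n + 2 ^ n := by ring
      omega
    rw [h1, pow_add, ih, add_pow_char_pow, one_pow, show 2 ^ (n + 1) = 2 ^ n + 2 ^ n by ring,
      Finset.sum_range_add, mul_add, mul_one, add_comm, Finset.sum_mul]
    congr 1
    refine Finset.sum_congr rfl fun a _ => ?_
    rw [pow_add, mul_comm]

theorem expansion {F : Type*} [Field F] [CharP F 2] (k : ℕ)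
    (hF : ∀ y : F, y ^ 2 ^ (2 * k + 5) = y) (x : F) (hx : x ^ (2 ^ (2 * k + 5) - 1) = 1) :
    ∑ i ∈ Finset.range (2 * k + 5),
      ((x + 1) + (x + 1) ^ 3 + (x + 1) ^ (2 ^ (2 * k + 5) - 2 ^ (k + 4) + 2)) ^ 2 ^ i
      = ∑ j ∈ jSet k, x ^ j := by
  have htwo : (2 : F) = 0 := CharTwo.two_eq_zero
  set tr : F → F := fun y => ∑ i ∈ Finset.range (2 * k + 5), y ^ 2 ^ i with htr
  have tr_add : ∀ y z, tr (y + z) = tr y + tr z := by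
    intro y z
    simp only [htr, add_pow_char_pow, Finset.sum_add_distrib]
  have tr_zero : tr 0 = 0 := by
    simp [htr]
  have tr_sum : ∀ (s : Finset ℕ) (g : ℕ → F), tr (∑ a ∈ s, g a) = ∑ a ∈ s, tr (g a) := by
    intro s g
    exact map_sum (AddMonoidHom.mk' tr tr_add) g s
  have tr_sq : ∀ y, tr (y ^ 2) = tr y := by
    intro y
    simp only [htr]
    have h1 := Finset.sum_range_succ (fun i => y ^ 2 ^ i) (2 * k + 5)
    have h2 := Finset.sum_range_succ' (fun i => y ^ 2 ^ i) (2 * k + 5)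
    rw [h1, hF] at h2
    simp only [pow_zero, pow_one] at h2
    have h3 := add_right_cancel h2
    rw [h3]
    refine Finset.sum_congr rfl fun i _ => ?_
    rw [← pow_mul, pow_succ']
  have tr_pow : ∀ n y, tr (y ^ 2 ^ n) = tr y := by
    intro n
    induction n with
    | zero => intro y; simp
    | succ n ih => intro y; rw [pow_succ, pow_mul, tr_sq, ih]
  have tr_one : tr 1 = 1 := by
    simp only [htr, one_pow, Finset.sum_const, Finset.card_range, nsmul_eq_mul, mul_one]
    push_cast
    linear_combination ((k : F) + 2) * htwo
  change tr _ = _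
  set y := x + 1 with hy
  have hbig : (y ^ (2 ^ (2 * k + 5) - 2 ^ (k + 4) + 2)) ^ 2 ^ (k + 1)
      = y ^ (2 ^ (k + 1) - 1) * y ^ 2 ^ (k + 2) := by
    have he : (2 ^ (2 * k + 5) - 2 ^ (k + 4) + 2) * 2 ^ (k + 1)
        = 2 ^ (2 * k + 5) * (2 ^ (k + 1) - 1) + 2 ^ (k + 2) := by
      have h1 : 2 ^ (k + 4) ≤ 2 ^ (2 * k + 5) := Nat.pow_le_pow_right (by norm_num) (by omega)
      have h2 : 1 ≤ 2 ^ (k + 1) := Nat.one_le_two_pow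
      zify [h1, h2]
      ring
    rw [← pow_mul, he, pow_add, pow_mul, hF]
  rw [tr_add, tr_add, ← tr_pow (k + 1) (y ^ (2 ^ (2 * k + 5) - 2 ^ (k + 4) + 2)), hbig, hy,
    add_one_pow_two_pow_sub_one, add_pow_char_pow, one_pow, mul_add, mul_one, tr_add,
    tr_add (_ * _), Finset.sum_mul, tr_sum, tr_sum]
  have h3 : (x + 1) ^ 3 = x ^ 3 + x ^ 2 + x + 1 := by
    linear_combination (x ^ 2 + x) * htwo
  rw [h3, tr_add, tr_add, tr_add, tr_sq]
  have hsum := sum_pSet (fun n => tr (x ^ n)) (by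
    intro n
    change tr (x ^ (2 * n)) = tr (x ^ n)
    rw [mul_comm, pow_mul, tr_sq]) k
  simp only [pow_one, pow_zero, tr_one, ← Finset.sum_union (bSet_disj k), add_assoc] at hsum
  rw [← bSet] at hsum
  have hJ : ∑ j ∈ jSet k, x ^ j = 1 + ∑ c ∈ bSet k, tr (x ^ (2 * c + 1)) := by
    rw [jSet, Finset.sum_insert (zero_notMem_aux k), pow_zero, Finset.sum_image (expMap_injOn k),
      Finset.sum_product]
    congr 1
    refine Finset.sum_congr rfl fun c _ => Finset.sum_congr rfl fun i _ => ?_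
    rw [expMap, ← pow_eq_pow_mod _ hx, pow_mul]
  rw [hJ, ← hsum, tr_one]
  simp only [← pow_add]
  linear_combination (tr x + 1) * htwo

/-- For f₄(x) = x + x^3 + x^{2^m − 2^{(m+3)/2} + 2} over 𝔽_{2^m}, m ≥ 5 odd,
the linear span of the sequence s_t = Tr(f₄(α^t+1)) is
L_s = 1 + m(2^{(m−3)/2} + 1) if m ≡ 1 (mod 4), and
L_s = 1 + m(2^{(m−3)/2} − 1) if m ≡ 3 (mod 4). -/
theorem stmt9 (m : ℕ) (hm5 : 5 ≤ m) (hmo : Odd m)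
    (α : GaloisField 2 m) (hα : orderOf α = 2 ^ m - 1)
    (f : GaloisField 2 m → GaloisField 2 m)
    (hf : ∀ x, f x = x + x ^ 3 + x ^ (2 ^ m - 2 ^ ((m + 3) / 2) + 2)) :
    (m % 4 = 1 →
      (genPoly m α f).natDegree = 1 + m * (2 ^ ((m - 3) / 2) + 1)) ∧
    (m % 4 = 3 →
      (genPoly m α f).natDegree = 1 + m * (2 ^ ((m - 3) / 2) - 1)) := by
  obtain ⟨k, rfl⟩ : ∃ k, m = 2 * k + 5 := by
    obtain ⟨r, hr⟩ := hmo
    exact ⟨r - 2, by omega⟩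
  have hm0 : 2 * k + 5 ≠ 0 := by omega
  have hF : ∀ y : GaloisField 2 (2 * k + 5), y ^ 2 ^ (2 * k + 5) = y := by
    intro y
    have := Fintype.ofFinite (GaloisField 2 (2 * k + 5))
    have h1 := FiniteField.pow_card y
    rwa [← Nat.card_eq_fintype_card, GaloisField.card 2 _ hm0] at h1
  have hdeg : (genPoly (2 * k + 5) α f).natDegree = 1 + (2 * k + 5) * (bSet k).card := by
    rw [genPoly_natDegree_of_expansion (2 * k + 5) hm0 α hα f (jSet k) (jSet_subset k), jSet_card]
    intro x hx
    rw [FiniteField.algebraMap_trace_eq_sum_pow, GaloisField.finrank 2 hm0, Nat.card_zmod, hf,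
      show (2 * k + 5 + 3) / 2 = k + 4 by omega]
    exact expansion k hF x hx
  have hc := pSet_card k
  have hp : 2 ^ (k + 1) = 2 ^ k + 2 ^ k := by ring
  rw [hdeg, bSet_card, show (2 * k + 5 - 3) / 2 = k + 1 by omega, hp]
  constructor
  · intro h4
    rw [hc.1 (by omega)]
    ring
  · intro h4
    have h5 := hc.2 (by omega)
    congr 2
    omega
end

section
/- Let m ≥ 5 be odd and let f₄(x) = x + x^3 + x^{2^m − 2^{(m+3)/2} + 2}; let s_t = Tr(f₄(α^t + 1)). Then the binary cyclic code C_s has length 2^m − 1 and 𝔽₂-dimension 2^m − 1 − L_s, where L_s = 1 + m(2^{(m−3)/2} + 1) if m ≡ 1 (mod 4) and L_s = 1 + m(2^{(m−3)/2} − 1) if m ≡ 3 (mod 4); moreover, if m ≡ 1 (mod 4) then max{8, 2^{(m−5)/2} + 2} ≤ d(C_s) ≤ 1 + m(2^{(m−3)/2} + 1), and if m ≡ 3 (mod 4) (so m ≥ 7) then 2^{(m−5)/2} + 2 ≤ d(C_s) ≤ 1 + m(2^{(m−3)/2} − 1). -/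
open Polynomial
open scoped Classical

def Od (k : ℕ) : Finset ℕ := (Finset.range (2 ^ (k + 1))).image (fun j => 2 * j + 1)
def Bk (k : ℕ) : Finset ℕ := (Finset.range (2 ^ k)).image (fun j => 2 ^ (k + 2) + (2 * j + 1))
def Lk : ℕ → Finset ℕ
  | 0 => {1, 3}
  | k + 1 => (Od k \ Lk k) ∪ Bk k
def Mk (k : ℕ) : Finset ℕ := Lk k ∪ Bk k

lemma mem_Od {k n : ℕ} : n ∈ Od k ↔ n % 2 = 1 ∧ n < 2 ^ (k + 2) := by
  simp only [Od, Finset.mem_image, Finset.mem_range, pow_succ]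
  constructor
  · rintro ⟨j, hj, rfl⟩; omega
  · rintro ⟨h1, h2⟩; exact ⟨n / 2, by omega, by omega⟩

lemma mem_Bk {k n : ℕ} : n ∈ Bk k ↔ n % 2 = 1 ∧ 2 ^ (k + 2) ≤ n ∧ n < 2 ^ (k + 2) + 2 ^ (k + 1) := by
  simp only [Bk, Finset.mem_image, Finset.mem_range, pow_succ]
  constructor
  · rintro ⟨j, hj, rfl⟩; omega
  · rintro ⟨h1, h2⟩; exact ⟨(n - 2 ^ k * 2 * 2) / 2, by omega, by omega⟩

lemma card_Od (k : ℕ) : (Od k).card = 2 ^ (k + 1) := by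
  rw [Od, Finset.card_image_of_injective _ (fun a b h => by simpa using h), Finset.card_range]

lemma card_Bk (k : ℕ) : (Bk k).card = 2 ^ k := by
  rw [Bk, Finset.card_image_of_injective _ (fun a b h => by simpa using h), Finset.card_range]

lemma Lk_sub (k : ℕ) : Lk k ⊆ Od k := by
  cases k with
  | zero => intro n; simp only [Lk, mem_Od]; simp; omega
  | succ k =>
    intro n
    simp only [Lk, Finset.mem_union, Finset.mem_sdiff, mem_Od, mem_Bk, pow_succ]
    omega

lemma disj1 (k : ℕ) : Disjoint (Od k) (Bk k) := by
  rw [Finset.disjoint_left]; intro n; rw [mem_Od, mem_Bk]; omega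

lemma disj2 (k : ℕ) : Disjoint (Lk k) (Bk k) := (disj1 k).mono_left (Lk_sub k)

lemma disj3 (k : ℕ) : Disjoint (Od k \ Lk k) (Bk k) := (disj1 k).mono_left Finset.sdiff_subset

lemma mem_Mk {k n : ℕ} (h : n ∈ Mk k) : n % 2 = 1 ∧ n < 2 ^ (k + 3) := by
  rw [Mk, Finset.mem_union] at h
  rcases h with h | h
  · have := mem_Od.1 (Lk_sub k h); simp only [pow_succ] at *; omega
  · have := mem_Bk.1 h; simp only [pow_succ] at *; omega

lemma card_Lk (k : ℕ) : (Lk k).card + (k % 2) = 2 ^ k + (1 - k % 2) := by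
  induction k with
  | zero => simp [Lk]
  | succ k ih =>
    rw [Lk, Finset.card_union_of_disjoint (disj3 k), Finset.card_sdiff_of_subset (Lk_sub k), card_Od, card_Bk]
    have := Finset.card_le_card (Lk_sub k)
    rw [card_Od] at this
    simp only [pow_succ] at *
    omega

lemma card_Mk (k : ℕ) : (Mk k).card + (k % 2) = 2 ^ (k + 1) + (1 - k % 2) := by
  rw [Mk, Finset.card_union_of_disjoint (disj2 k), card_Bk]
  have := card_Lk k
  simp only [pow_succ] at *
  omega

lemma sum_even_odd {K : Type*} [AddCommMonoid K] (g : ℕ → K) (n : ℕ) :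
    ∑ j ∈ Finset.range (2 * n), g j = ∑ j ∈ Finset.range n, g (2 * j) + ∑ j ∈ Finset.range n, g (2 * j + 1) := by
  induction n with
  | zero => simp
  | succ n ih =>
    rw [show 2 * (n + 1) = 2 * n + 1 + 1 by ring, Finset.sum_range_succ, Finset.sum_range_succ, ih,
      Finset.sum_range_succ, Finset.sum_range_succ]
    abel

lemma sum_Od {K : Type*} [AddCommMonoid K] (T : ℕ → K) (k : ℕ) :
    ∑ n ∈ Od k, T n = ∑ j ∈ Finset.range (2 ^ (k + 1)), T (2 * j + 1) := by
  rw [Od, Finset.sum_image (fun a _ b _ h => by simpa using h)]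

lemma sum_Bk {K : Type*} [AddCommMonoid K] (T : ℕ → K) (k : ℕ) :
    ∑ n ∈ Bk k, T n = ∑ j ∈ Finset.range (2 ^ k), T (2 ^ (k + 2) + (2 * j + 1)) := by
  rw [Bk, Finset.sum_image (fun a _ b _ h => by simpa using h)]

lemma main_sum {K : Type*} [Field K] [CharP K 2] (T : ℕ → K) (h0 : T 0 = 1)
    (h2 : ∀ n, T (2 * n) = T n) (k : ℕ) :
    ∑ j ∈ Finset.range (2 ^ (k + 1)), T j + ∑ j ∈ Finset.range (2 ^ (k + 1)), T (2 ^ (k + 2) + j)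
      + T 1 + T 3 = 1 + ∑ n ∈ Mk k, T n := by
  induction k with
  | zero =>
    have h4 : T 4 = T 1 := by rw [show 4 = 2 * (2 * 1) by rfl, h2, h2]
    have : Mk 0 = {1, 3, 5} := by decide
    rw [this]
    simp [Finset.sum_range_succ, h0, h4]
    linear_combination (CharTwo.two_eq_zero (R := K)) * T 1
  | succ k ih =>
    rw [show 2 ^ (k + 1 + 1) = 2 * 2 ^ (k + 1) by ring, sum_even_odd, sum_even_odd]
    have e1 : ∀ j, T (2 ^ (k + 1 + 2) + 2 * j) = T (2 ^ (k + 2) + j) := by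
      intro j; rw [← h2 (2 ^ (k + 2) + j)]; congr 1; ring
    simp only [h2, e1]
    rw [Mk, Finset.sum_union (disj2 _), Lk, Finset.sum_union (disj3 _), sum_Bk T (k+1)]
    rw [Mk, Finset.sum_union (disj2 _)] at ih
    have h3 := Finset.sum_sdiff (f := T) (Lk_sub k)
    rw [sum_Od] at h3
    linear_combination ih - h3 + (CharTwo.two_eq_zero (R := K)) * (∑ n ∈ Lk k, T n) 

def trS {K : Type*} [Field K] (m : ℕ) (y : K) : K := ∑ i ∈ Finset.range m, y ^ (2 ^ i)

lemma trS_add {K : Type*} [Field K] [CharP K 2] (m : ℕ) (y z : K) :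
    trS m (y + z) = trS m y + trS m z := by
  simp only [trS, add_pow_char_pow, Finset.sum_add_distrib]

lemma trS_sum {K : Type*} [Field K] [CharP K 2] (m : ℕ) (s : Finset ℕ) (g : ℕ → K) :
    trS m (∑ j ∈ s, g j) = ∑ j ∈ s, trS m (g j) := by
  induction s using Finset.induction_on with
  | empty => simp [trS]
  | insert a s ha ih => rw [Finset.sum_insert ha, Finset.sum_insert ha, trS_add, ih]

lemma trS_sq {K : Type*} [Field K] (m : ℕ) (y : K) (hy : y ^ (2 ^ m) = y) :
    trS m (y ^ 2) = trS m y := by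
  have h1 : trS m (y ^ 2) = ∑ i ∈ Finset.range m, y ^ (2 ^ (i + 1)) := by
    simp only [trS]
    refine Finset.sum_congr rfl fun i _ => ?_
    rw [← pow_mul, pow_succ']
  have h2 := Finset.sum_range_succ (fun i => y ^ 2 ^ i) m
  rw [Finset.sum_range_succ'] at h2
  simp only [hy, pow_zero, pow_one] at h2
  rw [h1, trS]
  exact add_right_cancel h2

lemma trS_pow {K : Type*} [Field K] (m : ℕ) (hK : ∀ y : K, y ^ (2 ^ m) = y) (y : K) (i : ℕ) :
    trS m (y ^ (2 ^ i)) = trS m y := by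
  induction i with
  | zero => simp
  | succ i ih => rw [pow_succ, pow_mul, trS_sq m _ (hK _), ih]

lemma geom2 {K : Type*} [Field K] [CharP K 2] (x : K) (k : ℕ) :
    (x + 1) ^ (2 ^ (k + 1) - 1) = ∑ j ∈ Finset.range (2 ^ (k + 1)), x ^ j := by
  have hq : 2 ≤ 2 ^ (k + 1) := by rw [pow_succ]; have := Nat.one_le_two_pow (n := k); omega
  by_cases hx : x + 1 = 0
  · have hx1 : x = 1 := by
      rw [← CharTwo.sub_eq_add] at hx; exact sub_eq_zero.1 hx
    subst hx1
    rw [hx, zero_pow (by omega)]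
    simp [CharTwo.two_eq_zero]
  · apply mul_right_cancel₀ hx
    rw [← pow_succ, Nat.sub_add_cancel (by omega), add_pow_char_pow, one_pow]
    have := geom_sum_mul x (2 ^ (k + 1))
    rw [CharTwo.sub_eq_add, CharTwo.sub_eq_add] at this
    exact this.symm

lemma trS_f {K : Type*} [Field K] [CharP K 2] (k : ℕ) (hK : ∀ y : K, y ^ (2 ^ (2 * k + 5)) = y) (x : K) 
    (e : ℕ) (he : e = 2 ^ (2 * k + 5) - 2 ^ (k + 4) + 2) (m : ℕ) (hm : m = 2 * k + 5) :
    trS m ((x + 1) + (x + 1) ^ 3 + (x + 1) ^ e) = 1 + ∑ n ∈ Mk k, trS m (x ^ n) := by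
  have hK' : ∀ y : K, y ^ (2 ^ m) = y := by rw [hm]; exact hK
  have h2 : (2 : K) = 0 := CharTwo.two_eq_zero
  have t1 : trS m (1 : K) = 1 := by
    simp only [trS, one_pow, Finset.sum_const, Finset.card_range, hm, nsmul_eq_mul, mul_one]
    push_cast
    linear_combination ((k : K) + 2) * h2
  rw [← main_sum (fun n => trS m (x ^ n)) (by simpa using t1)
    (fun n => by rw [mul_comm, pow_mul]; exact trS_sq m _ (hK' _)) k]
  have he2 : e * 2 ^ (k + 1) = 2 ^ (k + 2) + 2 ^ (2 * k + 5) * (2 ^ (k + 1) - 1) := by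
    have h1 : 1 ≤ 2 ^ (k + 1) := Nat.one_le_two_pow
    have h3 : 2 ^ (k + 4) ≤ 2 ^ (2 * k + 5) := Nat.pow_le_pow_right (by norm_num) (by omega)
    rw [he]
    zify [h1, h3]
    ring
  have e3 : trS m ((x + 1) ^ e) = ∑ j ∈ Finset.range (2 ^ (k + 1)), trS m (x ^ j) +
      ∑ j ∈ Finset.range (2 ^ (k + 1)), trS m (x ^ (2 ^ (k + 2) + j)) := by
    rw [← trS_pow m hK' _ (k + 1), ← pow_mul, he2, pow_add, pow_mul, hK, geom2, add_pow_char_pow,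
      one_pow, add_mul, one_mul, trS_add, Finset.mul_sum, trS_sum, trS_sum, add_comm]
    simp only [pow_add]
  have e1 : trS m (x + 1) = trS m x + 1 := by rw [trS_add, t1]
  have e2 : trS m ((x + 1) ^ 3) = trS m (x ^ 3) + 1 := by
    have : (x + 1) ^ 3 = x ^ 3 + (x ^ 2 + (x + 1)) := by linear_combination (x ^ 2 + x) * h2
    rw [this, trS_add, trS_add, trS_add, trS_sq m x (hK' _), t1]
    linear_combination trS m x * h2
  rw [trS_add, trS_add, e1, e2, e3, pow_one]
  linear_combination h2

lemma inj_aux {h n n' i d : ℕ} (hn : n % 2 = 1) (hn2 : n < 2 ^ (h + 1)) (hn' : n' % 2 = 1)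
    (hn2' : n' < 2 ^ (h + 1)) (hd : d < 2 * h + 1)
    (hh : n * 2 ^ i ≡ n' * 2 ^ (i + d) [MOD 2 ^ (2 * h + 1) - 1]) : n = n' ∧ d = 0 := by
  have hv : 1 ≤ 2 ^ (2 * h + 1) := Nat.one_le_two_pow
  have hcop : Nat.gcd (2 ^ (2 * h + 1) - 1) (2 ^ i) = 1 := by
    apply Nat.Coprime.pow_right
    rw [Nat.coprime_two_right, Nat.odd_iff]
    rw [pow_succ] at *; omega
  have hs : ∀ a b t, a % 2 = 1 → b % 2 = 1 → a < 2 ^ (h + 1) → b < 2 ^ (h + 1) → t ≤ h →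
      a ≡ b * 2 ^ t [MOD 2 ^ (2 * h + 1) - 1] → a = b ∧ t = 0 := by
    intro a b t ha hb ha2 hb2 ht hab
    have h1 : b * 2 ^ t ≤ (2 ^ (h + 1) - 1) * 2 ^ h :=
      Nat.mul_le_mul (by omega) (Nat.pow_le_pow_right (by norm_num) ht)
    have h2 : (2 ^ (h + 1) - 1) * 2 ^ h + 2 ^ h = 2 ^ (2 * h + 1) := by
      have : 1 ≤ 2 ^ (h + 1) := Nat.one_le_two_pow
      zify [this]; ring
    have h3 : 1 ≤ 2 ^ h := Nat.one_le_two_pow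
    have h4 : a < 2 ^ (2 * h + 1) - 1 ∨ h = 0 := by
      rcases Nat.eq_zero_or_pos h with h0 | h0
      · right; exact h0
      · left
        have : 2 ^ (h + 2) ≤ 2 ^ (2 * h + 1) := Nat.pow_le_pow_right (by norm_num) (by omega)
        rw [pow_succ] at this; omega
    rcases h4 with h4 | h4
    · rcases eq_or_lt_of_le (show b * 2 ^ t ≤ 2 ^ (2 * h + 1) - 1 by omega) with h5 | h5
      · have h6 : 2 ^ (2*h+1) - 1 ≤ 2 ^ (2*h+1) - 2^h := by omega
        rw [h5] at hab
        have : a % (2 ^ (2 * h + 1) - 1) = 0 := by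
          rw [hab]; exact Nat.mod_self _
        rw [Nat.mod_eq_of_lt h4] at this; omega
      · have := Nat.ModEq.eq_of_lt_of_lt hab h4 h5
        rcases Nat.eq_zero_or_pos t with h0 | h0
        · subst h0; simpa using this
        · obtain ⟨s, rfl⟩ : ∃ s, t = s + 1 := ⟨t - 1, by omega⟩
          rw [pow_succ, ← mul_assoc] at this; omega
    · subst h4
      simp at ha2 hb2; omega
  have h1 : n ≡ n' * 2 ^ d [MOD 2 ^ (2 * h + 1) - 1] := by
    apply Nat.ModEq.cancel_right_of_coprime hcop
    rw [mul_assoc, ← pow_add, add_comm d]; exact hh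
  rcases Nat.lt_or_ge h d with hdh | hdh
  · exfalso
    have h2 := h1.mul_right (2 ^ (2 * h + 1 - d))
    rw [mul_assoc, ← pow_add, Nat.add_sub_cancel' (by omega)] at h2
    have h3 : 2 ^ (2 * h + 1) ≡ 1 [MOD 2 ^ (2 * h + 1) - 1] := by
      have : 2 ^ (2 * h + 1) = (2 ^ (2 * h + 1) - 1) + 1 := by omega
      conv_lhs => rw [this]
      simp [Nat.ModEq]
    have h4 := h2.trans (h3.mul_left n')
    rw [mul_one] at h4
    have := hs n' n (2 * h + 1 - d) hn' hn hn2' hn2 (by omega) h4.symm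
    omega
  · exact hs n n' d hn hn' hn2 hn2' hdh h1

lemma inj_main {h n n' i i' : ℕ} (hn : n % 2 = 1) (hn2 : n < 2 ^ (h + 1)) (hn' : n' % 2 = 1)
    (hn2' : n' < 2 ^ (h + 1)) (hd : i < 2 * h + 1) (hd' : i' < 2 * h + 1)
    (hh : n * 2 ^ i ≡ n' * 2 ^ i' [MOD 2 ^ (2 * h + 1) - 1]) : n = n' ∧ i = i' := by
  rcases le_total i i' with hi | hi
  · obtain ⟨d, rfl⟩ := Nat.exists_eq_add_of_le hi
    have := inj_aux hn hn2 hn' hn2' (by omega) hh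
    omega
  · obtain ⟨d, rfl⟩ := Nat.exists_eq_add_of_le hi
    have := inj_aux hn' hn2' hn hn2 (by omega) hh.symm
    omega

/-- The set of exponents. -/
def Ak (k : ℕ) : Finset ℕ :=
  insert 0 ((Mk k ×ˢ Finset.range (2 * k + 5)).image
    (fun p => p.1 * 2 ^ p.2 % (2 ^ (2 * k + 5) - 1)))

lemma Ak_inj (k : ℕ) : Set.InjOn (fun p : ℕ × ℕ => p.1 * 2 ^ p.2 % (2 ^ (2 * k + 5) - 1))
    (Mk k ×ˢ Finset.range (2 * k + 5) : Finset (ℕ × ℕ)) := by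
  rintro ⟨n, i⟩ hp ⟨n', i'⟩ hp' hh
  simp only [Finset.coe_product, Set.mem_prod, Finset.mem_coe, Finset.mem_range] at hp hp'
  have h1 := mem_Mk hp.1
  have h2 := mem_Mk hp'.1
  have := inj_main (h := k + 2) h1.1 h1.2 h2.1 h2.2 (by omega) (by omega) hh
  exact Prod.ext this.1 this.2

lemma Ak_zero (k : ℕ) : 0 ∉ (Mk k ×ˢ Finset.range (2 * k + 5)).image
    (fun p => p.1 * 2 ^ p.2 % (2 ^ (2 * k + 5) - 1)) := by
  simp only [Finset.mem_image, Prod.exists, Finset.mem_product, Finset.mem_range, not_exists]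
  rintro n i ⟨⟨hn, hi⟩, h⟩
  have h1 := mem_Mk hn
  have hd := Nat.dvd_of_mod_eq_zero h
  have hcop : Nat.Coprime (2 ^ (2 * k + 5) - 1) (2 ^ i) := by
    apply Nat.Coprime.pow_right
    rw [Nat.coprime_two_right, Nat.odd_iff]
    have hv : 1 ≤ 2 ^ (2 * k + 4) := Nat.one_le_two_pow
    rw [pow_succ]; omega
  have := Nat.le_of_dvd (by omega) (hcop.dvd_of_dvd_mul_right hd)
  have h3 : 2 ^ (k + 3 + 1) ≤ 2 ^ (2 * k + 5) := Nat.pow_le_pow_right (by norm_num) (by omega)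
  rw [pow_succ] at h3
  omega

lemma card_Ak (k : ℕ) : (Ak k).card = 1 + (2 * k + 5) * (Mk k).card := by
  rw [Ak, Finset.card_insert_of_notMem (Ak_zero k), Finset.card_image_of_injOn (Ak_inj k),
    Finset.card_product, Finset.card_range]
  ring

lemma Ak_lt (k a : ℕ) (h : a ∈ Ak k) : a < 2 ^ (2 * k + 5) - 1 := by
  have hv : 1 ≤ 2 ^ (2 * k + 4) := Nat.one_le_two_pow
  have : 0 < 2 ^ (2 * k + 5) - 1 := by rw [pow_succ]; omega
  rw [Ak, Finset.mem_insert, Finset.mem_image] at h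
  rcases h with rfl | ⟨p, -, rfl⟩
  · exact this
  · exact Nat.mod_lt _ this

lemma Ak_mem (k n i : ℕ) (h : n ∈ Mk k) (hi : i < 2 * k + 5) :
    n * 2 ^ i % (2 ^ (2 * k + 5) - 1) ∈ Ak k := by
  rw [Ak, Finset.mem_insert, Finset.mem_image]
  exact Or.inr ⟨(n, i), by simp [h, hi], rfl⟩

lemma Ak_sum {K : Type*} [Field K] (k : ℕ) (x : K) (hx : x ^ (2 ^ (2 * k + 5) - 1) = 1) :
    ∑ a ∈ Ak k, x ^ a = 1 + ∑ n ∈ Mk k, trS (2 * k + 5) (x ^ n) := by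
  rw [Ak, Finset.sum_insert (Ak_zero k), Finset.sum_image (Ak_inj k), Finset.sum_product, pow_zero]
  congr 1
  refine Finset.sum_congr rfl fun n _ => ?_
  rw [trS]
  refine Finset.sum_congr rfl fun i _ => ?_
  rw [← pow_mul, ← pow_mod_orderOf x (n * 2 ^ i), ← pow_mod_orderOf x (_ % _), 
    Nat.mod_mod_of_dvd _ (orderOf_dvd_of_pow_eq_one hx)]

lemma lin_aux {K : Type*} [Field K] (s : Finset ℕ) (u y : ℕ → K) (w : ℕ) (hw : s.card ≤ w)
    (hy : Set.InjOn y s) (hz : ∀ i < w, ∑ t ∈ s, u t * y t ^ i = 0) (t0 : ℕ) (ht0 : t0 ∈ s) :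
    u t0 = 0 := by
  have hQ : ∀ Q : K[X], Q.natDegree < w → ∑ t ∈ s, u t * Q.eval (y t) = 0 := by
    intro Q hQ
    simp only [eval_eq_sum_range' hQ, Finset.mul_sum]
    rw [Finset.sum_comm]
    apply Finset.sum_eq_zero
    intro i hi
    have := congrArg (Q.coeff i * ·) (hz i (Finset.mem_range.1 hi))
    simp only [mul_zero, Finset.mul_sum] at this
    rw [← this]
    exact Finset.sum_congr rfl fun t _ => by ring
  have hpos : 0 < s.card := Finset.card_pos.2 ⟨t0, ht0⟩
  have h1 := hQ (∏ t ∈ s.erase t0, (X - C (y t))) (by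
    rw [natDegree_prod_of_monic _ _ (fun t _ => monic_X_sub_C _)]
    simp [Finset.card_erase_of_mem ht0]
    omega)
  rw [Finset.sum_eq_single_of_mem t0 ht0] at h1
  · rcases mul_eq_zero.1 h1 with h | h
    · exact h
    · exfalso
      rw [eval_prod, Finset.prod_eq_zero_iff] at h
      obtain ⟨t, ht, h⟩ := h
      rw [Finset.mem_erase] at ht
      simp only [eval_sub, eval_X, eval_C, sub_eq_zero] at h
      exact ht.1 (hy ht0 ht.2 h).symm
  · intro t ht htn
    rw [eval_prod, Finset.prod_eq_zero (Finset.mem_erase.2 ⟨htn, ht⟩) (by simp), mul_zero]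

lemma bch {K : Type*} [Field K] (s : Finset ℕ) (x : ℕ → K) (hx0 : ∀ t ∈ s, x t ≠ 0) (b q w : ℕ)
    (hy : Set.InjOn (fun t => x t ^ q) s) (hne : s.Nonempty)
    (hz : ∀ i < w, ∑ t ∈ s, x t ^ (b + q * i) = 0) : w + 1 ≤ s.card := by
  by_contra hc
  obtain ⟨t0, ht0⟩ := hne
  have := lin_aux s (fun t => x t ^ b) (fun t => x t ^ q) w (by omega) hy (by
    intro i hi
    rw [← hz i hi]
    exact Finset.sum_congr rfl fun t _ => by rw [pow_add, pow_mul]) t0 ht0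
  exact hx0 t0 ht0 (eq_zero_of_pow_eq_zero this)

lemma psq {K : Type*} [Field K] [CharP K 2] (s : Finset ℕ) (x : ℕ → K) (n : ℕ) :
    ∑ t ∈ s, x t ^ (2 * n) = (∑ t ∈ s, x t ^ n) ^ 2 := by
  rw [sum_pow_char 2]
  exact Finset.sum_congr rfl fun t _ => by rw [← pow_mul, mul_comm]

lemma six {K : Type*} [Field K] [CharP K 2] (s : Finset ℕ) (x : ℕ → K) (hx0 : ∀ t ∈ s, x t ≠ 0)
    (hy : Set.InjOn x s) (hs : s.card = 6) (h0 : ∑ t ∈ s, x t ^ 0 = 0) (h1 : ∑ t ∈ s, x t ^ 1 = 0)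
    (h3 : ∑ t ∈ s, x t ^ 3 = 0) (h7 : ∑ t ∈ s, x t ^ 7 = 0) (h9 : ∑ t ∈ s, x t ^ 9 = 0)
    (h11 : ∑ t ∈ s, x t ^ 11 = 0) : False := by
  have h2 : ∑ t ∈ s, x t ^ 2 = 0 := by rw [show 2 = 2 * 1 by rfl, psq, h1]; simp
  have h4 : ∑ t ∈ s, x t ^ 4 = 0 := by rw [show 4 = 2 * 2 by rfl, psq, h2]; simp
  have h6 : ∑ t ∈ s, x t ^ 6 = 0 := by rw [show 6 = 2 * 3 by rfl, psq, h3]; simp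
  have h8 : ∑ t ∈ s, x t ^ 8 = 0 := by rw [show 8 = 2 * 4 by rfl, psq, h4]; simp
  have hne : s.Nonempty := Finset.card_pos.1 (by omega)
  have h5 : ∑ t ∈ s, x t ^ 5 ≠ 0 := by
    intro h5
    have := bch s x hx0 0 1 6 (by simpa using hy) hne (by
      intro i hi
      simp only [zero_add, one_mul]
      interval_cases i <;> assumption)
    omega
  set P : K[X] := ∏ t ∈ s, (X - C (x t)) with hP
  have hdeg : P.natDegree = 6 := by
    rw [hP, natDegree_prod_of_monic _ _ (fun t _ => monic_X_sub_C _)]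
    simp [hs]
  have hmon : P.coeff 6 = 1 := by
    have : P.Monic := monic_prod_of_monic _ _ (fun t _ => monic_X_sub_C _)
    rw [← hdeg]; exact this
  have hev : ∀ t ∈ s, P.eval (x t) = 0 := by
    intro t ht
    rw [hP, eval_prod, Finset.prod_eq_zero ht (by simp)]
  have hc0 : P.coeff 0 ≠ 0 := by
    rw [coeff_zero_eq_eval_zero, hP, eval_prod, Finset.prod_ne_zero_iff]
    intro t ht
    simpa using hx0 t ht
  have hrec : ∀ j, ∑ i ∈ Finset.range 7, P.coeff i * ∑ t ∈ s, x t ^ (i + j) = 0 := by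
    intro j
    simp only [Finset.mul_sum]
    rw [Finset.sum_comm]
    apply Finset.sum_eq_zero
    intro t ht
    have := hev t ht
    rw [eval_eq_sum_range, hdeg] at this
    have h := congrArg (· * x t ^ j) this
    simp only [zero_mul, Finset.sum_mul] at h
    rw [← h]
    exact Finset.sum_congr rfl fun i _ => by ring
  have r0 := hrec 0
  have r1 := hrec 1
  have r2 := hrec 2
  have r3 := hrec 3
  have r5 := hrec 5
  simp only [Finset.sum_range_succ, Finset.sum_range_zero, Nat.reduceAdd, h0, h1, h2, h3, h4, h6,
    h7, h8, h9, h11, mul_zero, add_zero, zero_add, mul_eq_zero, h5, or_false] at r0 r1 r2 r3 r5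
  simp [r0, h5, hc0] at r5

lemma eight0 {K : Type*} [Field K] [CharP K 2] (s : Finset ℕ) (x : ℕ → K)
    (hx0 : ∀ t ∈ s, x t ≠ 0) (hy : Set.InjOn x s) (hne : s.Nonempty)
    (h0 : ∑ t ∈ s, x t ^ 0 = 0) (h1 : ∑ t ∈ s, x t ^ 1 = 0) (h3 : ∑ t ∈ s, x t ^ 3 = 0)
    (h5 : ∑ t ∈ s, x t ^ 5 = 0) : 8 ≤ s.card := by
  have h2 : ∑ t ∈ s, x t ^ 2 = 0 := by rw [show 2 = 2 * 1 by rfl, psq, h1]; simp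
  have h4 : ∑ t ∈ s, x t ^ 4 = 0 := by rw [show 4 = 2 * 2 by rfl, psq, h2]; simp
  have h6 : ∑ t ∈ s, x t ^ 6 = 0 := by rw [show 6 = 2 * 3 by rfl, psq, h3]; simp
  have := bch s x hx0 0 1 7 (by simpa using hy) hne (by
    intro i hi
    simp only [zero_add, one_mul]
    interval_cases i <;> assumption)
  omega

lemma eight2 {K : Type*} [Field K] [CharP K 2] (s : Finset ℕ) (x : ℕ → K)
    (hx0 : ∀ t ∈ s, x t ≠ 0) (hy : Set.InjOn x s) (hne : s.Nonempty) (heven : Even s.card)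
    (h0 : ∑ t ∈ s, x t ^ 0 = 0) (h1 : ∑ t ∈ s, x t ^ 1 = 0) (h3 : ∑ t ∈ s, x t ^ 3 = 0)
    (h7 : ∑ t ∈ s, x t ^ 7 = 0) (h9 : ∑ t ∈ s, x t ^ 9 = 0)
    (h11 : ∑ t ∈ s, x t ^ 11 = 0) : 8 ≤ s.card := by
  have h2 : ∑ t ∈ s, x t ^ 2 = 0 := by rw [show 2 = 2 * 1 by rfl, psq, h1]; simp
  have h4 : ∑ t ∈ s, x t ^ 4 = 0 := by rw [show 4 = 2 * 2 by rfl, psq, h2]; simp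
  have := bch s x hx0 0 1 5 (by simpa using hy) hne (by
    intro i hi
    simp only [zero_add, one_mul]
    interval_cases i <;> assumption)
  by_contra hlt
  obtain ⟨l, hl⟩ := heven
  exact six s x hx0 hy (by omega) h0 h1 h3 h7 h9 h11

lemma root_sum {K : Type*} [Field K] [CharP K 2] (α : K) (v : ℕ) (hv : Odd v) (hα : orderOf α = v)
    (A : Finset ℕ) (hA : ∀ a ∈ A, a < v) (b : ℕ) (hb : b < v) :
    ∑ t ∈ Finset.range v, (∑ a ∈ A, (α ^ t) ^ a) * (α⁻¹ ^ b) ^ t = if b ∈ A then 1 else 0 := by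
  have hv0 : 0 < v := hv.pos
  have hα1 : α ^ v = 1 := by rw [← hα]; exact pow_orderOf_eq_one α
  have hα0 : α ≠ 0 := by rintro rfl; rw [zero_pow hv0.ne'] at hα1; exact zero_ne_one hα1
  have h1 : ∀ a ∈ A, ∑ t ∈ Finset.range v, (α ^ a * α⁻¹ ^ b) ^ t = if a = b then 1 else 0 := by
    intro a ha
    split_ifs with hab
    · subst hab
      rw [← mul_pow, mul_inv_cancel₀ hα0]
      obtain ⟨r, hr⟩ := hv
      simp [hr, CharTwo.two_eq_zero]
    · have hne : α ^ a * α⁻¹ ^ b ≠ 1 := by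
        intro h
        rw [inv_pow, mul_inv_eq_one₀ (pow_ne_zero _ hα0)] at h
        exact hab (pow_injOn_Iio_orderOf (by simpa [hα] using hA a ha) (by simpa [hα] using hb) h)
      have h2 := geom_sum_mul (α ^ a * α⁻¹ ^ b) v
      have h4 : (α ^ a * α⁻¹ ^ b) ^ v = 1 := by
        rw [mul_pow, ← pow_mul, ← pow_mul, mul_comm a, mul_comm b, pow_mul, pow_mul, inv_pow α v,
          hα1]
        simp
      rw [h4, sub_self] at h2
      exact (mul_eq_zero.1 h2).resolve_right (sub_ne_zero.2 hne)
  simp only [Finset.sum_mul]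
  rw [Finset.sum_comm]
  have h3 : ∀ a ∈ A, ∑ t ∈ Finset.range v, (α ^ t) ^ a * (α⁻¹ ^ b) ^ t = if a = b then 1 else 0 := by
    intro a ha
    rw [← h1 a ha]
    refine Finset.sum_congr rfl fun t _ => ?_
    rw [mul_pow, ← pow_mul, mul_comm t a, pow_mul]
  rw [Finset.sum_congr rfl h3, Finset.sum_ite_eq']

lemma gen_facts {K : Type*} [Field K] [Algebra (ZMod 2) K] (v : ℕ) (hv : 0 < v) (β : K)
    (hβ : orderOf β = v) (S g : (ZMod 2)[X])
    (hg : g = (X ^ v - 1) / EuclideanDomain.gcd (X ^ v - 1) S)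
    (A : Finset ℕ) (hA : ∀ a ∈ A, a < v)
    (hS : ∀ b < v, aeval (β ^ b) S = if b ∈ A then 1 else 0) :
    g.natDegree = A.card ∧ g ≠ 0 ∧ ∀ b ∈ A, aeval (β ^ b) g = 0 := by
  set P : (ZMod 2)[X] := X ^ v - 1 with hP
  set d := EuclideanDomain.gcd P S with hd
  have hPd : P.natDegree = v := by
    rw [hP, ← C_1, natDegree_X_pow_sub_C]
  have hP0 : P ≠ 0 := by intro h; rw [h] at hPd; simp at hPd; omega
  have hgd : d * g = P := by
    rw [hg]; exact EuclideanDomain.mul_div_cancel' (by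
      intro h; rw [EuclideanDomain.gcd_eq_zero_iff] at h; exact hP0 h.1) (EuclideanDomain.gcd_dvd_left P S)
  have hd0 : d ≠ 0 := by rintro h; rw [h, zero_mul] at hgd; exact hP0 hgd.symm
  have hg0 : g ≠ 0 := by rintro h; rw [h, mul_zero] at hgd; exact hP0 hgd.symm
  have hPr : ∀ b, aeval (β ^ b) P = 0 := by
    intro b
    rw [hP]
    simp only [map_sub, map_pow, aeval_X, map_one]
    rw [← pow_mul, mul_comm, pow_mul, ← hβ, pow_orderOf_eq_one, one_pow, sub_self]
  have hgr : ∀ b ∈ A, aeval (β ^ b) g = 0 := by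
    intro b hb
    have h1 := hPr b
    rw [← hgd, map_mul] at h1
    refine (mul_eq_zero.1 h1).resolve_left fun h2 => ?_
    obtain ⟨r, hr⟩ := EuclideanDomain.gcd_dvd_right P S
    have h3 := hS b (hA b hb)
    rw [hr, map_mul, ← hd, h2, zero_mul, if_pos hb] at h3
    exact zero_ne_one h3
  have hdr : ∀ b ∈ Finset.range v \ A, aeval (β ^ b) d = 0 := by
    intro b hb
    rw [Finset.mem_sdiff, Finset.mem_range] at hb
    rw [hd, EuclideanDomain.gcd_eq_gcd_ab, map_add, map_mul, map_mul, hPr, hS b hb.1, if_neg hb.2]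
    simp
  have hinj : Set.InjOn (fun b => β ^ b) (Finset.range v : Set ℕ) := by
    intro a ha b hb h
    exact pow_injOn_Iio_orderOf (by simpa [hβ] using ha) (by simpa [hβ] using hb) h
  have key : ∀ (q : (ZMod 2)[X]) (B : Finset ℕ), q ≠ 0 → B ⊆ Finset.range v →
      (∀ b ∈ B, aeval (β ^ b) q = 0) → B.card ≤ q.natDegree := by
    intro q B hq hB hr
    have hm : q.map (algebraMap (ZMod 2) K) ≠ 0 := by
      rwa [Ne, Polynomial.map_eq_zero]
    rw [← Finset.card_image_of_injOn (hinj.mono (by exact_mod_cast hB)),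
      ← natDegree_map (algebraMap (ZMod 2) K)]
    apply card_le_degree_of_subset_roots
    intro y hy
    rw [Finset.mem_val, Finset.mem_image] at hy
    obtain ⟨b, hb, rfl⟩ := hy
    rw [mem_roots hm, IsRoot, eval_map_algebraMap]
    exact hr b hb
  have hAs : A ⊆ Finset.range v := fun a ha => Finset.mem_range.2 (hA a ha)
  have k1 := key g A hg0 hAs hgr
  have k2 := key d _ hd0 Finset.sdiff_subset hdr
  rw [Finset.card_sdiff_of_subset hAs, Finset.card_range] at k2
  have k3 := natDegree_mul hd0 hg0
  rw [hgd, hPd] at k3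
  have := Finset.card_le_card hAs
  rw [Finset.card_range] at this
  exact ⟨by omega, hg0, hgr⟩

lemma dim_aux (v : ℕ) (g : (ZMod 2)[X]) (hg : g ≠ 0) (hgv : g.natDegree < v) :
    Module.finrank (ZMod 2) ↥(Polynomial.degreeLT (ZMod 2) v ⊓
      (Ideal.span {g}).restrictScalars (ZMod 2)) = v - g.natDegree := by
  have h : Polynomial.degreeLT (ZMod 2) v ⊓ (Ideal.span {g}).restrictScalars (ZMod 2) =
      (Polynomial.degreeLT (ZMod 2) (v - g.natDegree)).map (LinearMap.mulLeft (ZMod 2) g) := by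
    ext c
    simp only [Submodule.mem_inf, Submodule.restrictScalars_mem, Ideal.mem_span_singleton,
      Submodule.mem_map, LinearMap.mulLeft_apply, mem_degreeLT]
    have key : ∀ q : (ZMod 2)[X], (g * q).degree < (v : ℕ) ↔ q.degree < (v - g.natDegree : ℕ) := by
      intro q
      by_cases hq : q = 0
      · subst hq; simp
      · rw [← natDegree_lt_iff_degree_lt (mul_ne_zero hg hq), ← natDegree_lt_iff_degree_lt hq,
          natDegree_mul hg hq]; omega
    constructor
    · rintro ⟨h1, q, rfl⟩
      exact ⟨q, (key q).1 h1, rfl⟩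
    · rintro ⟨q, h1, rfl⟩
      exact ⟨(key q).2 h1, q, rfl⟩
  have hinj : Function.Injective (LinearMap.mulLeft (ZMod 2) g) := by
    intro a b hab
    exact mul_left_cancel₀ hg hab
  rw [h, ← (Submodule.equivMapOfInjective _ hinj _).finrank_eq]
  rw [(degreeLTEquiv (ZMod 2) (v - g.natDegree)).finrank_eq]
  simp

lemma orderOf_inv_field {K : Type*} [Field K] (a : K) : orderOf a⁻¹ = orderOf a := by
  rw [orderOf_eq_orderOf_iff]
  intro n
  rw [inv_pow, inv_eq_one]

lemma GF_facts (m : ℕ) (hm : m ≠ 0) :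
    (∀ y : GaloisField 2 m, y ^ 2 ^ m = y) ∧
    ∀ y : GaloisField 2 m, algebraMap (ZMod 2) (GaloisField 2 m)
      (Algebra.trace (ZMod 2) (GaloisField 2 m) y) = trS m y := by
  constructor
  · intro y
    have := Fintype.ofFinite (GaloisField 2 m)
    have h := FiniteField.pow_card y
    rwa [← Nat.card_eq_fintype_card, GaloisField.card 2 m hm] at h
  · intro y
    rw [FiniteField.algebraMap_trace_eq_sum_pow, GaloisField.finrank 2 hm, trS]
    simp

lemma code_words (k m : ℕ) (hm : m = 2 * k + 5)
    (α : GaloisField 2 m) (hα : orderOf α = 2 ^ m - 1)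
    (f : GaloisField 2 m → GaloisField 2 m)
    (hf : ∀ x, f x = x + x ^ 3 + x ^ (2 ^ m - 2 ^ ((m + 3) / 2) + 2)) :
    (genPoly m α f).natDegree = (Ak k).card ∧ genPoly m α f ≠ 0 ∧
      ∀ b ∈ Ak k, aeval (α⁻¹ ^ b) (genPoly m α f) = 0 := by
  obtain ⟨hK, htr⟩ := GF_facts m (by omega)
  have hodd : Odd (2 ^ m - 1) := by
    rw [Nat.odd_iff, hm, pow_succ]
    have : 1 ≤ 2 ^ (2 * k + 4) := Nat.one_le_two_pow
    omega
  have hA : ∀ a ∈ Ak k, a < 2 ^ m - 1 := by rw [hm]; exact Ak_lt k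
  refine gen_facts (2 ^ m - 1) hodd.pos α⁻¹ ?_ (traceSeqPoly m α f) _ rfl (Ak k) hA ?_
  · rw [← hα]
    exact orderOf_inv_field α
  · intro b hb
    rw [← root_sum α (2 ^ m - 1) hodd hα (Ak k) hA b hb, traceSeqPoly, map_sum]
    refine Finset.sum_congr rfl fun t _ => ?_
    rw [map_mul, aeval_C, map_pow, aeval_X, htr, hf]
    congr 1
    rw [Ak_sum k (α ^ t) (by rw [← hm, ← pow_mul, mul_comm, pow_mul, ← hα, pow_orderOf_eq_one, one_pow]),
      trS_f k (by rw [← hm]; exact hK) (α ^ t) _ (by rw [hm]; congr 3; omega) m hm]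
    congr 1
    refine Finset.sum_congr rfl fun n _ => ?_
    exact congrArg (fun j => trS j ((α ^ t) ^ n)) hm

lemma Lsize (k : ℕ) : 1 + (2 * k + 5) * (2 ^ (k + 1) + 1) < 2 ^ (2 * k + 5) - 1 := by
  have h1 : k + 1 ≤ 2 ^ k := Nat.lt_two_pow_self
  have h2 : 2 ^ (2 * k + 5) = 32 * (2 ^ k * 2 ^ k) := by ring
  rw [h2, pow_succ]
  generalize 2 ^ k = q at *
  have h3 : (2 * k + 5) * (q * 2 + 1) ≤ (4 * q + 1) * (q * 2 + 1) := Nat.mul_le_mul_right _ (by omega)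
  have h4 : q ≤ q * q := Nat.le_mul_self q
  have h5 : (4 * q + 1) * (q * 2 + 1) = 8 * (q * q) + 6 * q + 1 := by ring
  omega

lemma weights (k m : ℕ) (hm : m = 2 * k + 5)
    (α : GaloisField 2 m) (hα : orderOf α = 2 ^ m - 1)
    (f : GaloisField 2 m → GaloisField 2 m)
    (hf : ∀ x, f x = x + x ^ 3 + x ^ (2 ^ m - 2 ^ ((m + 3) / 2) + 2))
    (c : (ZMod 2)[X]) (hc : c ∈ codeC m α f) (hc0 : c ≠ 0) :
    Even c.support.card ∧ 2 ^ k + 2 ≤ c.support.card ∧ (k = 0 ∨ k = 2 → 8 ≤ c.support.card) := by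
  obtain ⟨-, -, hroot⟩ := code_words k m hm α hα f hf
  have hv0 : 2 ^ m - 1 ≠ 0 := by
    have := Lsize k
    rw [hm]; omega
  have hα1 : α ^ (2 ^ m - 1) = 1 := by rw [← hα]; exact pow_orderOf_eq_one α
  have hα0 : α ≠ 0 := by
    rintro rfl
    rw [zero_pow hv0] at hα1; exact zero_ne_one hα1
  rw [codeC, Submodule.mem_inf, mem_degreeLT, Submodule.restrictScalars_mem,
    Ideal.mem_span_singleton] at hc
  obtain ⟨hdeg, r, hr⟩ := hc
  set s := c.support with hs
  have hne : s.Nonempty := by rw [hs]; exact nonempty_support_iff.2 hc0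
  have hz : ∀ b ∈ Ak k, ∑ t ∈ s, (α⁻¹ ^ t) ^ b = 0 := by
    intro b hb
    have h1 : aeval (α⁻¹ ^ b) c = 0 := by rw [hr, map_mul, hroot b hb, zero_mul]
    rw [aeval_eq_sum_range, ← Finset.sum_subset (s₁ := s)] at h1
    · rw [← h1]
      refine Finset.sum_congr rfl fun t ht => ?_
      have h2 : c.coeff t ≠ 0 := by rwa [hs, mem_support_iff] at ht
      have h3 : c.coeff t = 1 := by
        generalize c.coeff t = z at h2 ⊢
        revert z; decide
      rw [h3, one_smul, ← pow_mul, ← pow_mul, mul_comm]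
    · intro t ht
      rw [Finset.mem_range]
      exact Nat.lt_succ_of_le (le_natDegree_of_mem_supp t ht)
    · intro t _ ht
      rw [hs, notMem_support_iff] at ht
      rw [ht, zero_smul]
  have hzM : ∀ n ∈ Mk k, ∑ t ∈ s, (α⁻¹ ^ t) ^ n = 0 := by
    intro n hn
    have h1 := Ak_mem k n 0 hn (by omega)
    have h2 := mem_Mk hn
    have h3 : 2 ^ (k + 3 + 1) ≤ 2 ^ (2 * k + 5) := Nat.pow_le_pow_right (by norm_num) (by omega)
    rw [pow_succ] at h3
    rw [pow_zero, mul_one, Nat.mod_eq_of_lt (by omega)] at h1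
    exact hz n h1
  have hz0 : ∑ t ∈ s, (α⁻¹ ^ t) ^ 0 = 0 := hz 0 (by simp [Ak])
  have hx0 : ∀ t ∈ s, α⁻¹ ^ t ≠ 0 := fun t _ => pow_ne_zero _ (inv_ne_zero hα0)
  have hinj : Set.InjOn (fun t => α⁻¹ ^ t) (s : Set ℕ) := by
    have hl : ∀ t ∈ s, t < orderOf α⁻¹ := by
      intro t ht
      rw [orderOf_inv_field, hα]
      by_contra hcon
      have := coeff_eq_zero_of_degree_lt (lt_of_lt_of_le hdeg (Nat.cast_le.2 (not_lt.1 hcon)))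
      rw [hs, mem_support_iff] at ht
      exact ht this
    intro a ha b hb h
    exact pow_injOn_Iio_orderOf (hl a ha) (hl b hb) h
  have heven : Even s.card := by
    simp only [pow_zero, Finset.sum_const, nsmul_eq_mul, mul_one] at hz0
    rw [CharP.cast_eq_zero_iff (GaloisField 2 m) 2] at hz0
    exact even_iff_two_dvd.2 hz0
  refine ⟨heven, ?_, ?_⟩
  · have h1 := bch s (fun t => α⁻¹ ^ t) hx0 (2 ^ (k + 2) + 1) 2 (2 ^ k) (by
      intro a ha b hb h
      apply hinj ha hb
      exact frobenius_inj (GaloisField 2 m) 2 h) hne (by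
      intro i hi
      apply hzM
      rw [Mk, Finset.mem_union, mem_Bk]
      right
      simp only [pow_succ]
      omega)
    rcases Nat.eq_zero_or_pos k with rfl | hk
    · obtain ⟨j, hj⟩ := heven
      have : 1 < s.card := by omega
      have h2 := bch s (fun t => α⁻¹ ^ t) hx0 0 1 2 (by simpa using hinj) hne (by
        intro i hi
        simp only [zero_add, one_mul]
        interval_cases i
        · exact hz0
        · exact hzM 1 (by decide))
      omega
    · obtain ⟨j, rfl⟩ : ∃ j, k = j + 1 := ⟨k - 1, by omega⟩
      rw [pow_succ] at *
      obtain ⟨l, hl⟩ := heven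
      omega
  · rintro (rfl | rfl)
    · exact eight0 s _ hx0 hinj hne hz0 (hzM 1 (by decide)) (hzM 3 (by decide)) (hzM 5 (by decide))
    · exact eight2 s _ hx0 hinj hne heven hz0 (hzM 1 (by decide)) (hzM 3 (by decide))
        (hzM 7 (by decide)) (hzM 9 (by decide)) (hzM 11 (by decide))

lemma exists_min (k m : ℕ) (hm : m = 2 * k + 5)
    (α : GaloisField 2 m) (hα : orderOf α = 2 ^ m - 1)
    (f : GaloisField 2 m → GaloisField 2 m)
    (hf : ∀ x, f x = x + x ^ 3 + x ^ (2 ^ m - 2 ^ ((m + 3) / 2) + 2))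
    (hlt : (genPoly m α f).natDegree < 2 ^ m - 1) (hev : Even (genPoly m α f).natDegree) :
    ∃ d : ℕ, IsLeast (wtSet (codeC m α f)) d ∧ 2 ^ k + 2 ≤ d ∧ (k = 0 ∨ k = 2 → 8 ≤ d) ∧
      d ≤ (genPoly m α f).natDegree := by
  obtain ⟨-, hg0, -⟩ := code_words k m hm α hα f hf
  have hg : genPoly m α f ∈ codeC m α f := by
    rw [codeC, Submodule.mem_inf, mem_degreeLT, Submodule.restrictScalars_mem,
      Ideal.mem_span_singleton]
    exact ⟨(natDegree_lt_iff_degree_lt hg0).1 hlt, dvd_rfl⟩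
  have hmem : (genPoly m α f).support.card ∈ wtSet (codeC m α f) := ⟨_, hg, hg0, rfl⟩
  have hex : ∃ w, w ∈ wtSet (codeC m α f) := ⟨_, hmem⟩
  refine ⟨Nat.find hex, ⟨Nat.find_spec hex, fun w hw => Nat.find_min' hex hw⟩, ?_, ?_, ?_⟩
  · obtain ⟨c, hc, hc0, hw⟩ := Nat.find_spec hex
    rw [← hw]; exact (weights k m hm α hα f hf c hc hc0).2.1
  · obtain ⟨c, hc, hc0, hw⟩ := Nat.find_spec hex
    rw [← hw]; exact (weights k m hm α hα f hf c hc hc0).2.2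
  · have h1 := Nat.find_min' hex hmem
    have h2 := card_supp_le_succ_natDegree (genPoly m α f)
    have h3 := (weights k m hm α hα f hf _ hg hg0).1
    rw [Nat.even_iff] at hev h3
    omega

/-- Theorem 4: for f₄(x) = x + x^3 + x^{2^m − 2^{(m+3)/2} + 2} over 𝔽_{2^m},
m ≥ 5 odd, the code C_s has length 2^m − 1 and dimension 2^m − 1 − L_s, where
L_s = 1 + m(2^{(m−3)/2} + 1) if m ≡ 1 (mod 4) and
L_s = 1 + m(2^{(m−3)/2} − 1) if m ≡ 3 (mod 4); moreover, if m ≡ 1 (mod 4) then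
max{8, 2^{(m−5)/2} + 2} ≤ d(C_s) ≤ 1 + m(2^{(m−3)/2} + 1), and if
m ≡ 3 (mod 4) then 2^{(m−5)/2} + 2 ≤ d(C_s) ≤ 1 + m(2^{(m−3)/2} − 1). -/
theorem stmt10 (m : ℕ) (hm5 : 5 ≤ m) (hmo : Odd m)
    (α : GaloisField 2 m) (hα : orderOf α = 2 ^ m - 1)
    (f : GaloisField 2 m → GaloisField 2 m)
    (hf : ∀ x, f x = x + x ^ 3 + x ^ (2 ^ m - 2 ^ ((m + 3) / 2) + 2)) :
    Module.finrank (ZMod 2) ↥(codeC m α f) =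
      2 ^ m - 1 - (genPoly m α f).natDegree ∧
    (m % 4 = 1 →
      (genPoly m α f).natDegree = 1 + m * (2 ^ ((m - 3) / 2) + 1) ∧
      ∃ d : ℕ, IsLeast (wtSet (codeC m α f)) d ∧
        max 8 (2 ^ ((m - 5) / 2) + 2) ≤ d ∧
        d ≤ 1 + m * (2 ^ ((m - 3) / 2) + 1)) ∧
    (m % 4 = 3 →
      (genPoly m α f).natDegree = 1 + m * (2 ^ ((m - 3) / 2) - 1) ∧
      ∃ d : ℕ, IsLeast (wtSet (codeC m α f)) d ∧
        2 ^ ((m - 5) / 2) + 2 ≤ d ∧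
        d ≤ 1 + m * (2 ^ ((m - 3) / 2) - 1)) := by
  obtain ⟨k, rfl⟩ : ∃ k, m = 2 * k + 5 := by
    obtain ⟨r, hr⟩ := hmo
    exact ⟨r - 2, by omega⟩
  obtain ⟨hdeg, hg0, -⟩ := code_words k _ rfl α hα f hf
  rw [card_Ak] at hdeg
  have hM := card_Mk k
  have hlt : (genPoly (2 * k + 5) α f).natDegree < 2 ^ (2 * k + 5) - 1 := by
    have h1 := Lsize k
    have h2 : (2 * k + 5) * (Mk k).card ≤ (2 * k + 5) * (2 ^ (k + 1) + 1) :=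
      Nat.mul_le_mul_left _ (by omega)
    omega
  have hev : Even (genPoly (2 * k + 5) α f).natDegree := by
    have hodd : (Mk k).card % 2 = 1 := by rw [pow_succ] at hM; omega
    rw [hdeg, Nat.even_iff, Nat.add_mod, Nat.mul_mod, hodd]
    omega
  obtain ⟨d, hd, hd1, hd2, hd3⟩ := exists_min k _ rfl α hα f hf hlt hev
  have e3 : (2 * k + 5 - 3) / 2 = k + 1 := by omega
  have e5 : (2 * k + 5 - 5) / 2 = k := by omega
  rw [e3, e5]
  refine ⟨dim_aux _ _ hg0 hlt, ?_, ?_⟩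
  · intro h4
    have hk : k % 2 = 0 := by omega
    have hc : (Mk k).card = 2 ^ (k + 1) + 1 := by omega
    rw [hc] at hdeg
    refine ⟨hdeg, d, hd, ?_, by omega⟩
    refine max_le ?_ hd1
    by_cases h : k = 0 ∨ k = 2
    · exact hd2 h
    · have : 2 ^ 3 ≤ 2 ^ k := Nat.pow_le_pow_right (by norm_num) (by omega)
      omega
  · intro h4
    have hk : k % 2 = 1 := by omega
    have hc : (Mk k).card = 2 ^ (k + 1) - 1 := by omega
    rw [hc] at hdeg
    exact ⟨hdeg, d, hd, hd1, by omega⟩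
end
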